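/- Case E1: Let l1, l2 be distinct odd primes with l1 ≡ 3 (mod 4) and l2 ≡ 1 (mod 4), let r1, r2 ≥ 1, and let N = 2 l1^{r1} l2^{r2}. Assume the multiplicative order of p modulo l1^{r1} is φ(l1^{r1}), the multiplicative order of p modulo l2^{r2} is φ(l2^{r2}), and f = φ(N)/2. Set h12 = h(Q(√-l1 l2)). If l1 l2 ≡ 7 (mod 8) then G(χ) = -p^{f/2}. If l1 l2 ≡ 3 (mod 8) then there exist integers a', b' with 4 p^{h12} = (a')² + l1 l2 (b')² and a' ≡ 2 p^{h12/2} (mod l1) such that G(χ) = -p^{f/2 - h12} ((a' + b' √-(l1 l2))/2)². -/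

import Mathlib

open Complex Polynomial IntermediateField

/-- The complex primitive `p`-th root of unity `exp(2πi/p)`. -/
noncomputable def zetaP (p : ℕ) : ℂ := Complex.exp (2 * Real.pi * Complex.I / p)

/-- The Gauss sum `G(χ^λ) = ∑_{x ∈ F, x ≠ 0} χ^λ(x) ζ_p^{T(x)}`, where
`T` is the trace map from `F` down to `ZMod p`. -/
noncomputable def gaussSumN (p : ℕ) {F : Type} [Field F] [Fintype F] [Algebra (ZMod p) F]
    (χ : MulChar F ℂ) (lam : ℕ) : ℂ :=
  letI : DecidableEq F := Classical.decEq F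
  ∑ x ∈ Finset.univ.filter (fun x : F => x ≠ 0),
    (χ ^ lam) x * zetaP p ^ (Algebra.trace (ZMod p) F x).val

/-- `√-m = i√m ∈ ℂ`. -/
noncomputable def sqrtNeg (m : ℕ) : ℂ := Real.sqrt m * Complex.I

theorem sqrtNeg_sq (m : ℕ) : sqrtNeg m ^ 2 = -(m : ℂ) := by
  have h : ((Real.sqrt m : ℝ) : ℂ) ^ 2 = ((m : ℝ) : ℂ) := by
    rw [← Complex.ofReal_pow, Real.sq_sqrt (by positivity)]
  simp only [sqrtNeg, mul_pow, Complex.I_sq, h]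
  push_cast
  ring

theorem isIntegral_sqrtNeg (m : ℕ) : IsIntegral ℚ (sqrtNeg m) := by
  refine ⟨X ^ 2 + C (m : ℚ), monic_X_pow_add_C _ (by norm_num), ?_⟩
  simp [sqrtNeg_sq]

/-- The class number `h(ℚ(√-m))` of the quadratic field `ℚ(√-m) ⊆ ℂ`. -/
noncomputable def classNumSqrtNeg (m : ℕ) : ℕ :=
  haveI : FiniteDimensional ℚ ℚ⟮sqrtNeg m⟯ :=
    IntermediateField.adjoin.finiteDimensional (isIntegral_sqrtNeg m)
  haveI : CharZero ℚ⟮sqrtNeg m⟯ :=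
    charZero_of_injective_algebraMap (algebraMap ℚ ℚ⟮sqrtNeg m⟯).injective
  haveI : NumberField ℚ⟮sqrtNeg m⟯ := ⟨⟩
  NumberField.classNumber ℚ⟮sqrtNeg m⟯

/-- `√p* = √p` if `p ≡ 1 (mod 4)` and `i√p` if `p ≡ 3 (mod 4)`. -/
noncomputable def sqrtPStar (p : ℕ) : ℂ :=
  if p % 4 = 1 then (Real.sqrt p : ℂ) else (Real.sqrt p : ℂ) * Complex.I

/-!
The character `χ` of order `2m` is the product of the quadratic character `η` and a character `ψ`
of order `m`. Davenport–Hasse at `2` reads `G(ψ) G(χ) = ψ⁻¹(4) G(ψ²) G(η)`; here `ψ(4) = 1`, and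
`G(η) = -p^(f/2)` because `4 ∣ f`, so everything is governed by `G(ψ²)`. The powers of `p` modulo
`m` form the kernel of the Jacobi symbol `(· / d)`, `d = l₁ l₂`, and Frobenius permutes the terms
of a Gauss sum, so `G(ψ²)` is `G(ψ)` or its conjugate `G(ψ⁻¹)` according to the sign of `(2 / d)`.

If `(2 / d) = 1` this gives `G(χ) = G(η)`. If `(2 / d) = -1` it gives `p^f G(χ) = G(η) G(ψ⁻¹)²`,
where `G(ψ⁻¹)` is an integer of `ℚ(√-d)` of absolute value `p^(f/2)`. By Stickelberger's bound its
valuation at a place over `p` is at least `(f - H)/2` with `d H = |∑ k (k / d)|`, and `H` is at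
most the class number `h` of `ℚ(√-d)`. Genus theory makes `h` even, so
`p^(h/2) G(ψ⁻¹) / p^(f/2)` is an integer of norm `p^h` in `ℚ(√-d)`, that is, `(a + b√-d)/2`.
-/

section ImaginaryQuadratic

open NumberField

variable {K : Type*} [Field K] [NumberField K]

/-- `θ` is a square root of `-d` with `K = ℚ + ℚθ`, i.e. `K` is the imaginary quadratic field
`ℚ(√-d)` with a chosen square root of `-d`. -/
structure IsSqrtNegGenerator (θ : K) (d : ℕ) : Prop where
  pos : 0 < d
  sq_eq : θ ^ 2 = -(d : K)
  exists_eq_add : ∀ x : K, ∃ u v : ℚ, x = u + v * θ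

lemma exists_int_eq_of_squarefree_mul_sq {d : ℕ} (hsq : Squarefree d) {w : ℚ} {n : ℤ}
    (h : (d : ℚ) * w ^ 2 = n) : ∃ b : ℤ, w = b := by
  have hcleared : (d : ℤ) * w.num ^ 2 = n * (w.den : ℤ) ^ 2 := by
    have hden : (w.den : ℚ) ≠ 0 := by exact_mod_cast w.den_nz
    have : (d : ℚ) * (w.num : ℚ) ^ 2 = n * (w.den : ℚ) ^ 2 := by
      rw [← h]
      nth_rw 2 [← Rat.num_div_den w]
      field_simp
    exact_mod_cast this
  have hcop : IsCoprime ((w.den : ℤ) ^ 2) (w.num ^ 2) := by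
    apply IsCoprime.pow
    rw [Int.isCoprime_iff_gcd_eq_one, Int.gcd_comm]
    exact w.reduced
  have hdvd : (w.den : ℤ) ^ 2 ∣ d :=
    hcop.dvd_of_dvd_mul_right ⟨n, by rw [hcleared, mul_comm]⟩
  have hden_sq : w.den * w.den ∣ d := by
    rw [← sq]
    exact_mod_cast hdvd
  exact ⟨w.num, (Rat.coe_int_num_of_den_eq_one (Nat.isUnit_iff.mp (hsq _ hden_sq))).symm⟩

namespace IsSqrtNegGenerator

variable {θ : K} {d : ℕ} (hθ : IsSqrtNegGenerator θ d)
include hθ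

lemma linearIndependent : LinearIndependent ℚ ![(1 : K), θ] := by
  rw [LinearIndependent.pair_iff]
  intro s t h
  have hst : (s : K) = -(t * θ) := by
    have h' : (s : K) + t * θ = 0 := by simpa [Algebra.smul_def] using h
    linear_combination h'
  have hsq : s ^ 2 = t ^ 2 * (-(d : ℚ)) := by
    have : (s : K) ^ 2 = t ^ 2 * (-(d : K)) := by
      rw [← hθ.sq_eq, hst]
      ring
    exact_mod_cast this
  have hd : (0 : ℚ) < d := by exact_mod_cast hθ.pos
  have ht : t = 0 := by
    by_contra ht
    have : 0 < t ^ 2 := by positivity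
    nlinarith [sq_nonneg s, mul_pos this hd]
  subst ht
  exact ⟨by simpa using hsq, rfl⟩

/-- The `ℚ`-basis `1, θ` of `ℚ(√-d)`, in terms of which norms and traces are computed. -/
noncomputable def basis : Module.Basis (Fin 2) ℚ K :=
  Module.Basis.mk hθ.linearIndependent <| by
    intro x _
    obtain ⟨u, v, rfl⟩ := hθ.exists_eq_add x
    have : (u : K) + v * θ = u • (1 : K) + v • θ := by simp [Algebra.smul_def]
    rw [this]
    exact Submodule.add_mem _ (Submodule.smul_mem _ _ (Submodule.subset_span ⟨0, rfl⟩))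
      (Submodule.smul_mem _ _ (Submodule.subset_span ⟨1, rfl⟩))

lemma basis_zero : hθ.basis 0 = 1 := by simp [basis]

lemma basis_one : hθ.basis 1 = θ := by simp [basis]

lemma finrank_eq_two : Module.finrank ℚ K = 2 := by
  rw [Module.finrank_eq_card_basis hθ.basis, Fintype.card_fin]

lemma leftMulMatrix_eq (u v : ℚ) :
    Algebra.leftMulMatrix hθ.basis ((u : K) + v * θ) = !![u, -(d * v); v, u] := by
  have hcol_zero : ((u : K) + v * θ) * hθ.basis 0 = u • hθ.basis 0 + v • hθ.basis 1 := by
    simp [basis_zero, basis_one, Algebra.smul_def]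
  have hcol_one : ((u : K) + v * θ) * hθ.basis 1
      = (-(d * v)) • hθ.basis 0 + u • hθ.basis 1 := by
    simp only [basis_zero, basis_one, Algebra.smul_def, eq_ratCast]
    push_cast
    linear_combination (v : K) * hθ.sq_eq
  ext i j
  rw [Algebra.leftMulMatrix_eq_repr_mul]
  fin_cases j
  · simp only [Fin.zero_eta, hcol_zero]
    fin_cases i <;> simp
  · simp only [Fin.mk_one, hcol_one]
    fin_cases i <;> simp

lemma norm_add_mul (u v : ℚ) : Algebra.norm ℚ ((u : K) + v * θ) = u ^ 2 + d * v ^ 2 := by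
  rw [Algebra.norm_eq_matrix_det hθ.basis, leftMulMatrix_eq, Matrix.det_fin_two_of]
  ring

lemma trace_add_mul (u v : ℚ) : Algebra.trace ℚ K ((u : K) + v * θ) = 2 * u := by
  rw [Algebra.trace_eq_matrix_trace hθ.basis, leftMulMatrix_eq, Matrix.trace_fin_two_of]
  ring

lemma exists_ringOfIntegers_eq (hsq : Squarefree d) (x : 𝓞 K) : ∃ a b : ℤ,
    (x : K) = ((a / 2 : ℚ) : K) + ((b / 2 : ℚ) : K) * θ ∧
      a ^ 2 + d * b ^ 2 = 4 * Algebra.norm ℤ x := by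
  obtain ⟨u, v, huv⟩ := hθ.exists_eq_add (x : K)
  have hnorm := hθ.norm_add_mul u v
  have htrace := hθ.trace_add_mul u v
  rw [← huv, ← Algebra.coe_norm_int] at hnorm
  rw [← huv, ← Algebra.coe_trace_int] at htrace
  obtain ⟨b, hb⟩ : ∃ b : ℤ, 2 * v = b := by
    refine exists_int_eq_of_squarefree_mul_sq hsq
      (n := 4 * Algebra.norm ℤ x - Algebra.trace ℤ (𝓞 K) x ^ 2) ?_
    push_cast
    rw [hnorm, htrace]
    ring
  refine ⟨Algebra.trace ℤ (𝓞 K) x, b, ?_, ?_⟩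
  · rw [huv, htrace, ← hb, mul_div_cancel_left₀ u two_ne_zero, mul_div_cancel_left₀ v two_ne_zero]
  · have : (((Algebra.trace ℤ (𝓞 K) x) ^ 2 + d * b ^ 2 : ℤ) : ℚ)
        = ((4 * Algebra.norm ℤ x : ℤ) : ℚ) := by
      push_cast
      rw [← hb, hnorm, htrace]
      ring
    exact_mod_cast this

lemma discr_pair (u v u' v' : ℚ) :
    Algebra.discr ℚ ![(u : K) + v * θ, u' + v' * θ] = -(4 * d) * (u * v' - u' * v) ^ 2 := by
  have htr (a b a' b' : ℚ) :
      Algebra.trace ℚ K (((a : K) + b * θ) * (a' + b' * θ)) = 2 * (a * a' - d * b * b') := by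
    have hmul : ((a : K) + b * θ) * (a' + b' * θ)
        = ((a * a' - d * b * b' : ℚ) : K) + ((a * b' + b * a' : ℚ) : K) * θ := by
      push_cast
      linear_combination (b : K) * b' * hθ.sq_eq
    rw [hmul, hθ.trace_add_mul]
  rw [Algebra.discr_def, Matrix.det_fin_two]
  simp only [Algebra.traceMatrix_apply, Algebra.traceForm_apply, Matrix.cons_val_zero,
    Matrix.cons_val_one, htr]
  ring

lemma exists_four_mul_discr_eq (hsq : Squarefree d) :
    ∃ k : ℤ, 4 * discr K = -(d * k ^ 2) := by
  have hcard : Fintype.card (Module.Free.ChooseBasisIndex ℤ (𝓞 K)) = 2 := by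
    rw [← Module.finrank_eq_card_basis (integralBasis K), hθ.finrank_eq_two]
  let e := Fintype.equivFinOfCardEq hcard
  obtain ⟨a, b, hab, -⟩ := hθ.exists_ringOfIntegers_eq hsq (RingOfIntegers.basis K (e.symm 0))
  obtain ⟨a', b', hab', -⟩ := hθ.exists_ringOfIntegers_eq hsq (RingOfIntegers.basis K (e.symm 1))
  have hpair : integralBasis K ∘ e.symm = ![(RingOfIntegers.basis K (e.symm 0) : K),
      (RingOfIntegers.basis K (e.symm 1) : K)] := by
    funext i
    fin_cases i <;> simp [integralBasis_apply]
  have hdiscr : (discr K : ℚ) = -(4 * d) * ((a / 2) * (b' / 2) - (a' / 2) * (b / 2)) ^ 2 := by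
    rw [coe_discr, ← Algebra.discr_reindex ℚ (integralBasis K) e, hpair, hab, hab', hθ.discr_pair]
  refine ⟨a * b' - a' * b, ?_⟩
  have : (4 * discr K : ℚ) = -(d * (a * b' - a' * b) ^ 2) := by
    rw [hdiscr]
    ring
  exact_mod_cast this

lemma le_abs_discr (hsq : Squarefree d) : (d : ℤ) ≤ |discr K| := by
  obtain ⟨k, hk⟩ := hθ.exists_four_mul_discr_eq hsq
  obtain ⟨j, hj⟩ : ∃ j : ℤ, (k / 2 : ℚ) = j := by
    refine exists_int_eq_of_squarefree_mul_sq hsq (n := -discr K) ?_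
    have : (4 * discr K : ℚ) = -(d * k ^ 2) := by exact_mod_cast hk
    push_cast
    linarith
  have hkj : k = 2 * j := by
    have : (k : ℚ) = 2 * j := by rw [← hj]; ring
    exact_mod_cast this
  have hdiscr : discr K = -(d * j ^ 2) := by
    rw [hkj] at hk
    linarith
  have hj0 : j ≠ 0 := by
    rintro rfl
    exact discr_ne_zero K (by rw [hdiscr]; ring)
  rw [hdiscr, abs_neg, abs_of_nonneg (by positivity)]
  nlinarith [sq_pos_of_ne_zero hj0]

lemma isTotallyComplex : IsTotallyComplex K := by
  refine ⟨fun v => ?_⟩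
  by_contra hv
  rw [InfinitePlace.not_isComplex_iff_isReal] at hv
  have h := congrArg (InfinitePlace.embedding_of_isReal hv) hθ.sq_eq
  rw [map_pow, map_neg, map_natCast] at h
  have hd : (0 : ℝ) < d := by exact_mod_cast hθ.pos
  nlinarith [sq_nonneg (InfinitePlace.embedding_of_isReal hv θ)]

lemma nrComplexPlaces_eq_one : InfinitePlace.nrComplexPlaces K = 1 := by
  have := hθ.isTotallyComplex
  have := IsTotallyComplex.finrank K
  have := hθ.finrank_eq_two
  omega

lemma absNorm_span_natCast (n : ℕ) : Ideal.absNorm (Ideal.span {(n : 𝓞 K)}) = n ^ 2 := by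
  rw [Ideal.absNorm_span_natCast, RingOfIntegers.rank, hθ.finrank_eq_two]

end IsSqrtNegGenerator

lemma regulator_eq_one_of_rank_eq_zero (h : Units.rank K = 0) : Units.regulator K = 1 := by
  have : IsEmpty (Fin (Units.rank K)) := by
    rw [h]
    infer_instance
  have : IsEmpty {w : InfinitePlace K // w ≠ Units.dirichletUnitTheorem.w₀} :=
    (Units.equivFinRank K).symm.isEmpty
  rw [Units.regulator_eq_det']
  exact (congrArg abs (@Matrix.det_isEmpty _ (_) (_) _ _ _ _)).trans abs_one

lemma IsSqrtNegGenerator.dedekindZeta_residue_le {θ : K} {d : ℕ} (hθ : IsSqrtNegGenerator θ d)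
    (hsq : Squarefree d) : dedekindZeta_residue K ≤ Real.pi * classNumber K / √d := by
  have := hθ.isTotallyComplex
  have hreal := IsTotallyComplex.nrRealPlaces_eq_zero K
  have hcomplex := hθ.nrComplexPlaces_eq_one
  have hreg : Units.regulator K = 1 := by
    refine regulator_eq_one_of_rank_eq_zero ?_
    rw [Units.rank, InfinitePlace.card_eq_nrRealPlaces_add_nrComplexPlaces, hreal, hcomplex]
  have htor : (2 : ℝ) ≤ Units.torsionOrder K := by
    obtain ⟨r, hr⟩ := Units.even_torsionOrder K
    have := Units.torsionOrder_pos K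
    exact_mod_cast (by omega : 2 ≤ Units.torsionOrder K)
  have hdiscr : (d : ℝ) ≤ |(discr K : ℝ)| := by exact_mod_cast hθ.le_abs_discr hsq
  have hd : (0 : ℝ) < d := by exact_mod_cast hθ.pos
  rw [dedekindZeta_residue_def, hreal, hcomplex, hreg]
  calc _ = (2 * (Real.pi * classNumber K)) / (Units.torsionOrder K * √|(discr K : ℝ)|) := by
        ring
    _ ≤ (2 * (Real.pi * classNumber K)) / (2 * √d) := by
        have := Real.pi_pos
        gcongr
    _ = _ := by rw [mul_div_mul_left _ _ two_ne_zero]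

end ImaginaryQuadratic

section IdealCounting

open NumberField

variable {K : Type*} [Field K] [NumberField K]

/-- The number of ideals of `𝓞 K` of norm `n`, i.e. the `n`-th coefficient of the Dedekind zeta
function of `K`. -/
noncomputable def idealCount (K : Type*) [Field K] [NumberField K] (n : ℕ) : ℕ :=
  Nat.card {I : Ideal (𝓞 K) // Ideal.absNorm I = n}

lemma finite_ideals_absNorm_eq (n : ℕ) : Finite {I : Ideal (𝓞 K) // Ideal.absNorm I = n} :=
  Ideal.finite_setOfPred_absNorm_eq n

lemma isCoprime_of_coprime_absNorm {I J : Ideal (𝓞 K)}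
    (h : (Ideal.absNorm I).Coprime (Ideal.absNorm J)) : IsCoprime I J := by
  rw [Ideal.isCoprime_iff_exists]
  obtain ⟨u, v, huv⟩ := Nat.isCoprime_iff_coprime.mpr h
  refine ⟨(u : 𝓞 K) * (Ideal.absNorm I : 𝓞 K), I.mul_mem_left _ (Ideal.absNorm_mem I),
    (v : 𝓞 K) * (Ideal.absNorm J : 𝓞 K), J.mul_mem_left _ (Ideal.absNorm_mem J), ?_⟩
  exact_mod_cast congrArg (Int.cast : ℤ → 𝓞 K) huv

lemma idealCount_mul_le {m n : ℕ} (h : m.Coprime n) :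
    idealCount K m * idealCount K n ≤ idealCount K (m * n) := by
  unfold idealCount
  rw [← Nat.card_prod]
  have := finite_ideals_absNorm_eq (K := K) (m * n)
  let mulIdeals (x : {I : Ideal (𝓞 K) // Ideal.absNorm I = m} ×
      {I : Ideal (𝓞 K) // Ideal.absNorm I = n}) : {I : Ideal (𝓞 K) // Ideal.absNorm I = m * n} :=
    ⟨x.1.1 * x.2.1, by rw [map_mul, x.1.2, x.2.2]⟩
  refine Nat.card_le_card_of_injective mulIdeals ?_
  rintro ⟨⟨I, hI⟩, ⟨J, hJ⟩⟩ ⟨⟨I', hI'⟩, ⟨J', hJ'⟩⟩ heq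
  simp only [mulIdeals, Subtype.mk.injEq] at heq
  have hIJ' : IsCoprime I J' := isCoprime_of_coprime_absNorm (by rwa [hI, hJ'])
  have hI'J : IsCoprime I' J := isCoprime_of_coprime_absNorm (by rwa [hI', hJ])
  obtain rfl : I = I' := dvd_antisymm (hIJ'.dvd_of_dvd_mul_right ⟨J, heq.symm⟩)
    (hI'J.dvd_of_dvd_mul_right ⟨J', heq⟩)
  obtain rfl : J = J' := dvd_antisymm (hI'J.symm.dvd_of_dvd_mul_left ⟨I, by rw [← heq, mul_comm]⟩)
    (hIJ'.symm.dvd_of_dvd_mul_left ⟨I, by rw [heq, mul_comm]⟩)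
  rfl

lemma one_le_idealCount {n : ℕ} {I : Ideal (𝓞 K)} (h : Ideal.absNorm I = n) :
    1 ≤ idealCount K n := by
  have := finite_ideals_absNorm_eq (K := K) n
  have : Nonempty {I : Ideal (𝓞 K) // Ideal.absNorm I = n} := ⟨⟨I, h⟩⟩
  exact Nat.card_pos

lemma isMaximal_of_absNorm_prime {P : Ideal (𝓞 K)} (h : (Ideal.absNorm P).Prime) :
    P.IsMaximal := by
  refine (Ideal.isPrime_of_irreducible_absNorm h).isMaximal ?_
  rintro rfl
  exact h.ne_zero Ideal.absNorm_bot

/-- The ideals `P ^ i * Q ^ (k - i)` for `i ≤ k` are distinct. -/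
lemma succ_le_idealCount_prime_pow {p : ℕ} (hp : p.Prime) {P Q : Ideal (𝓞 K)}
    (hP : Ideal.absNorm P = p) (hQ : Ideal.absNorm Q = p) (hPQ : P ≠ Q) (k : ℕ) :
    k + 1 ≤ idealCount K (p ^ k) := by
  have hcop : IsCoprime P Q := by
    rw [Ideal.isCoprime_iff_sup_eq]
    exact (isMaximal_of_absNorm_prime (hP ▸ hp)).coprime_of_ne
      (isMaximal_of_absNorm_prime (hQ ▸ hp)) hPQ
  have hle {i j : ℕ} (h : P ^ i * Q ^ (k - i) = P ^ j * Q ^ (k - j)) : i ≤ j := by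
    have hdvd : P ^ i ∣ P ^ j := (hcop.pow (m := i) (n := k - j)).dvd_of_dvd_mul_right ⟨_, h.symm⟩
    have hnorm := Ideal.absNorm_dvd_absNorm_of_le (Ideal.le_of_dvd hdvd)
    rw [map_pow, map_pow, hP] at hnorm
    exact (Nat.pow_dvd_pow_iff_le_right hp.one_lt).mp hnorm
  have := finite_ideals_absNorm_eq (K := K) (p ^ k)
  let prodIdeal (i : Fin (k + 1)) : {I : Ideal (𝓞 K) // Ideal.absNorm I = p ^ k} :=
    ⟨P ^ (i : ℕ) * Q ^ (k - (i : ℕ)), by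
      rw [map_mul, map_pow, map_pow, hP, hQ, ← pow_add, Nat.add_sub_cancel' (by omega)]⟩
  have hinj : Function.Injective prodIdeal := fun i j hij => by
    rw [Subtype.mk.injEq] at hij
    exact Fin.ext (le_antisymm (hle hij) (hle hij.symm))
  simpa [idealCount] using Nat.card_le_card_of_injective prodIdeal hinj

lemma zetaMul_prime_pow {N : ℕ} (χ : DirichletCharacter ℂ N) {p : ℕ} (hp : p.Prime) (k : ℕ) :
    χ.zetaMul (p ^ k) = ∑ i ∈ Finset.range (k + 1), χ p ^ i := by
  rw [DirichletCharacter.zetaMul, ArithmeticFunction.coe_zeta_mul_apply,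
    Nat.sum_divisors_prime_pow hp]
  refine Finset.sum_congr rfl fun i _ => ?_
  rw [← DirichletCharacter.apply_eq_toArithmeticFunction_apply χ (pow_ne_zero i hp.ne_zero),
    Nat.cast_pow, map_pow]

/-- The field `K` has at least as many ideals of prime-power norm as the Euler factors of
`ζ(s) L(s, χ)` predict: there are ideals of norm `p ^ 2` for every prime `p`, two ideals of norm
`p` if `χ p = 1`, and at least one if `χ p = 0`. -/
structure HasQuadraticSplitting (K : Type*) [Field K] [NumberField K] {N : ℕ}
    (χ : DirichletCharacter ℂ N) : Prop where
  sq_eq_one : χ ^ 2 = 1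
  exists_absNorm_eq_sq : ∀ p : ℕ, p.Prime → ∃ I : Ideal (𝓞 K), Ideal.absNorm I = p ^ 2
  exists_pair_of_eq_one : ∀ p : ℕ, p.Prime → χ p = 1 →
    ∃ P Q : Ideal (𝓞 K), Ideal.absNorm P = p ∧ Ideal.absNorm Q = p ∧ P ≠ Q
  exists_of_eq_zero : ∀ p : ℕ, p.Prime → χ p = 0 → ∃ P : Ideal (𝓞 K), Ideal.absNorm P = p

namespace HasQuadraticSplitting

variable {N : ℕ} {χ : DirichletCharacter ℂ N} (hχ : HasQuadraticSplitting K χ)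
include hχ

open scoped ComplexOrder

lemma zetaMul_prime_pow_le {p : ℕ} (hp : p.Prime) (k : ℕ) :
    χ.zetaMul (p ^ k) ≤ (idealCount K (p ^ k) : ℂ) := by
  rw [zetaMul_prime_pow χ hp]
  rcases MulChar.isQuadratic_iff_sq_eq_one.mpr hχ.sq_eq_one p with h | h | h
  · obtain ⟨P, hP⟩ := hχ.exists_of_eq_zero p hp h
    have := one_le_idealCount (K := K) (I := P ^ k) (by rw [map_pow, hP])
    rw [h, Finset.sum_range_succ']
    simpa using by exact_mod_cast this
  · obtain ⟨P, Q, hP, hQ, hPQ⟩ := hχ.exists_pair_of_eq_one p hp h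
    have := succ_le_idealCount_prime_pow hp hP hQ hPQ k
    simp only [h, one_pow, Finset.sum_const, Finset.card_range, nsmul_eq_mul, mul_one]
    exact_mod_cast this
  · simp only [h, neg_one_geom_sum]
    split_ifs with hk
    · positivity
    · obtain ⟨r, rfl⟩ : Even k := by
        rwa [Nat.even_add_one, not_not] at hk
      obtain ⟨I, hI⟩ := hχ.exists_absNorm_eq_sq p hp
      have := one_le_idealCount (K := K) (I := I ^ r) (n := p ^ (r + r))
        (by rw [map_pow, hI, ← pow_mul, two_mul])
      exact_mod_cast this

lemma zetaMul_le {n : ℕ} (hn : n ≠ 0) : χ.zetaMul n ≤ (idealCount K n : ℂ) := by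
  induction n using Nat.recOnPosPrimePosCoprime with
  | zero => exact absurd rfl hn
  | one =>
    rw [χ.isMultiplicative_zetaMul.map_one]
    exact_mod_cast one_le_idealCount (K := K) (I := ⊤) Ideal.absNorm_top
  | prime_pow p k hp => exact hχ.zetaMul_prime_pow_le hp k
  | coprime a b ha hb hab iha ihb =>
    rw [χ.isMultiplicative_zetaMul.map_mul_of_coprime hab]
    calc _ ≤ (idealCount K a : ℂ) * (idealCount K b : ℂ) :=
          mul_le_mul (iha (by omega)) (ihb (by omega))
            (DirichletCharacter.zetaMul_nonneg hχ.sq_eq_one b) (by positivity)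
      _ ≤ _ := by exact_mod_cast idealCount_mul_le hab

lemma norm_zetaMul_le {n : ℕ} (hn : n ≠ 0) : ‖χ.zetaMul n‖ ≤ (idealCount K n : ℝ) := by
  rw [← Complex.norm_natCast]
  exact CStarAlgebra.norm_le_norm_of_nonneg_of_le
    (DirichletCharacter.zetaMul_nonneg hχ.sq_eq_one n) (hχ.zetaMul_le hn)

end HasQuadraticSplitting

end IdealCounting

section PrimeIdeals

open NumberField

variable {K : Type*} [Field K] [NumberField K]

lemma exists_eq_mul_of_absNorm_eq_sq {p : ℕ} (hp : p.Prime) {I : Ideal (𝓞 K)}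
    (hI : Ideal.absNorm I = p ^ 2) (hnot : ¬ I.IsPrime) :
    ∃ P Q : Ideal (𝓞 K), I = P * Q ∧ Ideal.absNorm P = p ∧ Ideal.absNorm Q = p := by
  have hItop : I ≠ ⊤ := by
    rintro rfl
    rw [Ideal.absNorm_top] at hI
    exact hp.one_lt.ne' ((Nat.pow_eq_one.mp hI.symm).resolve_right two_ne_zero)
  obtain ⟨P, hPmax, hIP⟩ := Ideal.exists_le_maximal I hItop
  obtain ⟨Q, hQ⟩ := Ideal.dvd_iff_le.mpr hIP
  have hQtop : Q ≠ ⊤ := by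
    rintro rfl
    rw [Ideal.mul_top] at hQ
    exact hnot (hQ ▸ hPmax.isPrime)
  have hmul : Ideal.absNorm P * Ideal.absNorm Q = p ^ 2 := by rw [← map_mul, ← hQ, hI]
  obtain ⟨hP, hQ'⟩ := (Nat.Prime.mul_eq_prime_sq_iff hp
    (mt Ideal.absNorm_eq_one_iff.mp hPmax.ne_top) (mt Ideal.absNorm_eq_one_iff.mp hQtop)).mp hmul
  exact ⟨P, Q, hQ, hP, hQ'⟩

namespace IsSqrtNegGenerator

variable {θ : K} {d : ℕ} (hθ : IsSqrtNegGenerator θ d)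
include hθ

omit [NumberField K] in
lemma exists_integer_eq : ∃ t : 𝓞 K, (t : K) = θ := by
  refine ⟨⟨θ, IsIntegral.of_pow two_pos ?_⟩, rfl⟩
  rw [hθ.sq_eq]
  exact (isIntegral_natCast d).neg

lemma dvd_two_mul_of_mem_span (hsq : Squarefree d) {p : ℕ} {x : 𝓞 K} {u v : ℤ}
    (hx : (x : K) = u + v * θ) (hmem : x ∈ Ideal.span {(p : 𝓞 K)}) : (p : ℤ) ∣ 2 * v := by
  obtain ⟨y, rfl⟩ := Ideal.mem_span_singleton.mp hmem
  obtain ⟨a, b, hab, -⟩ := hθ.exists_ringOfIntegers_eq hsq y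
  have hzero : ((p * (a / 2) - u : ℚ) : K) + ((p * (b / 2) - v : ℚ) : K) * θ = 0 := by
    have hpy : ((p : 𝓞 K) * y : 𝓞 K) = (p : K) * (y : K) := by simp
    rw [hpy, hab] at hx
    push_cast at hx ⊢
    linear_combination hx
  have hcoeff := (LinearIndependent.pair_iff.mp hθ.linearIndependent) _ _
    (by simpa only [Algebra.smul_def, mul_one, eq_ratCast] using hzero)
  have hb : (2 * v : ℚ) = p * b := by linarith [hcoeff.2]
  exact ⟨b, by exact_mod_cast hb⟩

omit [NumberField K] in
lemma add_mul_sub_mem_span {t : 𝓞 K} (ht : (t : K) = θ) {p : ℕ} {c : ℤ}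
    (hc : (p : ℤ) ∣ c ^ 2 + d) :
    (t + (c : 𝓞 K)) * (t + ((-c : ℤ) : 𝓞 K)) ∈ Ideal.span {(p : 𝓞 K)} := by
  obtain ⟨w, hw⟩ := hc
  have ht2 : t ^ 2 = -(d : 𝓞 K) := RingOfIntegers.ext (by simp [ht, hθ.sq_eq])
  have hw' : (c ^ 2 + d : 𝓞 K) = p * w := by exact_mod_cast congrArg (Int.cast : ℤ → 𝓞 K) hw
  refine Ideal.mem_span_singleton.mpr ⟨-w, ?_⟩
  push_cast
  linear_combination -hw' + ht2

/-- Neither `θ + c` nor `θ - c` is divisible by `p`, although their product is. -/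
lemma not_isPrime_span (hsq : Squarefree d) {p : ℕ} (hp : p.Prime) (hp2 : p ≠ 2) {c : ℤ}
    (hc : (p : ℤ) ∣ c ^ 2 + d) : ¬ (Ideal.span {(p : 𝓞 K)}).IsPrime := by
  intro hprime
  obtain ⟨t, ht⟩ := hθ.exists_integer_eq
  have hnot (e : ℤ) : t + (e : 𝓞 K) ∉ Ideal.span {(p : 𝓞 K)} := by
    intro he
    have hdvd := hθ.dvd_two_mul_of_mem_span hsq (x := t + (e : 𝓞 K)) (u := e) (v := 1)
      (by simp [ht, add_comm]) he
    exact hp2 ((Nat.prime_dvd_prime_iff_eq hp Nat.prime_two).mp (by exact_mod_cast hdvd))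
  exact (hprime.mem_or_mem (hθ.add_mul_sub_mem_span ht hc)).elim (hnot c) (hnot (-c))

/-- If `P ^ 2 = (p)`, one of `θ + c`, `θ - c` lies in `P`, so `p` divides its square
`c ^ 2 - d ± 2cθ`. -/
lemma dvd_of_span_eq_mul_self (hsq : Squarefree d) {p : ℕ} (hp : p.Prime) (hp2 : p ≠ 2) {c : ℤ}
    (hc : (p : ℤ) ∣ c ^ 2 + d) {P : Ideal (𝓞 K)} (hP : Ideal.absNorm P = p)
    (hPP : Ideal.span {(p : 𝓞 K)} = P * P) : p ∣ d := by
  obtain ⟨t, ht⟩ := hθ.exists_integer_eq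
  have hpZ : Prime (p : ℤ) := Nat.prime_iff_prime_int.mp hp
  have hp2Z : ¬ (p : ℤ) ∣ 2 := fun h =>
    hp2 ((Nat.prime_dvd_prime_iff_eq hp Nat.prime_two).mp (by exact_mod_cast h))
  have hdvd {e : ℤ} (he : t + (e : 𝓞 K) ∈ P) : (p : ℤ) ∣ e := by
    have hmem : (t + (e : 𝓞 K)) * (t + (e : 𝓞 K)) ∈ Ideal.span {(p : 𝓞 K)} := by
      rw [hPP]
      exact Ideal.mul_mem_mul he he
    have hdvd4 := hθ.dvd_two_mul_of_mem_span hsq (u := e ^ 2 - d) (v := 2 * e) (by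
      simp only [map_mul, map_add, map_intCast, ht]
      push_cast
      linear_combination hθ.sq_eq) hmem
    exact (hpZ.dvd_or_dvd ((hpZ.dvd_or_dvd hdvd4).resolve_left hp2Z)).resolve_left hp2Z
  have hmem : (t + (c : 𝓞 K)) * (t + ((-c : ℤ) : 𝓞 K)) ∈ P :=
    (hPP.le.trans Ideal.mul_le_left) (hθ.add_mul_sub_mem_span ht hc)
  have hpc : (p : ℤ) ∣ c :=
    ((isMaximal_of_absNorm_prime (hP ▸ hp)).isPrime.mem_or_mem hmem).elim hdvd
      fun h => (dvd_neg.mp (hdvd h))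
  exact_mod_cast (dvd_add_right (dvd_pow hpc two_ne_zero)).mp hc

lemma exists_ideals_absNorm_eq_prime (hsq : Squarefree d) {p : ℕ} (hp : p.Prime) (hp2 : p ≠ 2)
    {c : ℤ} (hc : (p : ℤ) ∣ c ^ 2 + d) :
    ∃ P Q : Ideal (𝓞 K), Ideal.absNorm P = p ∧ Ideal.absNorm Q = p ∧ (¬ p ∣ d → P ≠ Q) := by
  obtain ⟨P, Q, hPQ, hP, hQ⟩ := exists_eq_mul_of_absNorm_eq_sq hp (hθ.absNorm_span_natCast p)
    (hθ.not_isPrime_span hsq hp hp2 hc)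
  refine ⟨P, Q, hP, hQ, ?_⟩
  rintro hpd rfl
  exact hpd (hθ.dvd_of_span_eq_mul_self hsq hp hp2 hc hP hPQ)

end IsSqrtNegGenerator

end PrimeIdeals

section Residue

open NumberField Filter Topology

variable {K : Type*} [Field K] [NumberField K] {N : ℕ} {χ : DirichletCharacter ℂ N}

lemma LSeriesSummable_idealCount {s : ℝ} (hs : dedekindZeta K s ≠ 0) :
    LSeriesSummable (fun n ↦ (idealCount K n : ℂ)) s := by
  by_contra h
  exact hs (tsum_eq_zero_of_not_summable h)

lemma dedekindZeta_eq_ofReal_tsum (s : ℝ) :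
    dedekindZeta K s
      = ((∑' n, ‖LSeries.term (fun n ↦ (idealCount K n : ℂ)) s n‖ : ℝ) : ℂ) := by
  rw [dedekindZeta, LSeries, Complex.ofReal_tsum]
  refine tsum_congr fun n => ?_
  rw [LSeries.norm_term_eq]
  by_cases hn : n = 0
  · subst hn
    simp
  · rw [LSeries.term_of_ne_zero hn, if_neg hn]
    push_cast [Complex.ofReal_cpow (Nat.cast_nonneg n)]
    simp [idealCount]

lemma riemannZeta_mul_LFunction_eq [NeZero N] {s : ℂ} (hs : 1 < s.re) :
    riemannZeta s * χ.LFunction s = LSeries χ.zetaMul s := by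
  rw [DirichletCharacter.zetaMul, ← ArithmeticFunction.coe_mul, LSeries_convolution',
    χ.LFunction_eq_LSeries hs]
  · congr 1
    · simp_rw [← ArithmeticFunction.LSeries_zeta_eq_riemannZeta hs,
        ← ArithmeticFunction.natCoe_apply]
    · exact LSeries_congr (DirichletCharacter.apply_eq_toArithmeticFunction_apply χ) s
  · exact ArithmeticFunction.LSeriesSummable_zeta_iff.mpr hs
  · exact (LSeriesSummable_congr _ fun h ↦
      (DirichletCharacter.apply_eq_toArithmeticFunction_apply χ h).symm).mpr <|
        ZMod.LSeriesSummable_of_one_lt_re χ hs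

lemma norm_LSeries_zetaMul_le (hle : ∀ n, n ≠ 0 → ‖χ.zetaMul n‖ ≤ (idealCount K n : ℝ))
    {s : ℝ} (hs : dedekindZeta K s ≠ 0) : ‖LSeries χ.zetaMul s‖ ≤ ‖dedekindZeta K s‖ := by
  have hsum := (LSeriesSummable_idealCount hs).norm
  have hterm (n : ℕ) : ‖LSeries.term χ.zetaMul s n‖
      ≤ ‖LSeries.term (fun n ↦ (idealCount K n : ℂ)) s n‖ := by
    refine LSeries.norm_term_le s ?_
    by_cases hn : n = 0
    · simp [hn]
    · simpa using hle n hn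
  have hsum' := Summable.of_nonneg_of_le (fun _ => norm_nonneg _) hterm hsum
  calc ‖LSeries χ.zetaMul s‖ ≤ ∑' n, ‖LSeries.term χ.zetaMul s n‖ := norm_tsum_le_tsum_norm hsum'
    _ ≤ ∑' n, ‖LSeries.term (fun n ↦ (idealCount K n : ℂ)) s n‖ :=
        hsum'.tsum_le_tsum hterm hsum
    _ ≤ ‖dedekindZeta K s‖ := by
        rw [dedekindZeta_eq_ofReal_tsum, Complex.norm_real]
        exact le_abs_self _

/-- Multiply the coefficientwise comparison of `ζ(s) L(s, χ)` with `ζ_K(s)` by `s - 1` and let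
`s → 1⁺`. -/
lemma norm_LFunction_one_le_residue [NeZero N] (hχ : χ ≠ 1)
    (hle : ∀ n, n ≠ 0 → ‖χ.zetaMul n‖ ≤ (idealCount K n : ℝ)) :
    ‖χ.LFunction 1‖ ≤ dedekindZeta_residue K := by
  have hzetaK : Tendsto (fun s : ℝ ↦ ‖(s - 1 : ℂ) * dedekindZeta K s‖) (𝓝[>] 1)
      (𝓝 (dedekindZeta_residue K)) := by
    simpa [abs_of_pos (dedekindZeta_residue_pos K)] using
      (tendsto_sub_one_mul_dedekindZeta_nhdsGT K).norm
  have hcast : Tendsto (fun s : ℝ => (s : ℂ)) (𝓝[>] 1) (𝓝[≠] 1) := by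
    refine tendsto_nhdsWithin_iff.mpr ⟨?_, ?_⟩
    · exact (Complex.continuous_ofReal.tendsto' 1 1 (by simp)).mono_left nhdsWithin_le_nhds
    · filter_upwards [self_mem_nhdsWithin] with s hs
      simp only [Set.mem_compl_iff, Set.mem_singleton_iff]
      exact_mod_cast ne_of_gt hs
  have hzetaL : Tendsto (fun s : ℝ ↦ ‖((s - 1 : ℂ) * riemannZeta s) * χ.LFunction s‖) (𝓝[>] 1)
      (𝓝 ‖χ.LFunction 1‖) := by
    have hL : Tendsto (fun s : ℝ => χ.LFunction s) (𝓝[>] 1) (𝓝 (χ.LFunction 1)) :=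
      ((DirichletCharacter.differentiable_LFunction hχ).continuous.tendsto 1).comp
        (hcast.mono_right nhdsWithin_le_nhds)
    simpa using ((riemannZeta_residue_one.comp hcast).mul hL).norm
  refine le_of_tendsto_of_tendsto hzetaL hzetaK ?_
  filter_upwards [hzetaK.eventually_ne (dedekindZeta_residue_ne_zero K), self_mem_nhdsWithin]
    with s hne hs
  have hs' : 1 < (s : ℂ).re := by simpa using hs
  rw [mul_assoc, riemannZeta_mul_LFunction_eq hs', norm_mul, norm_mul]
  refine mul_le_mul_of_nonneg_left (norm_LSeries_zetaMul_le hle ?_) (norm_nonneg _)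
  exact right_ne_zero_of_mul (norm_ne_zero_iff.mp hne)

end Residue

section HurwitzZetaOdd

open Filter Topology HurwitzZeta

lemma inv_rpow_le_add_one_div_sq {c s : ℝ} (hc : 0 < c) (hs₁ : 1 ≤ s) (hs₂ : s ≤ 2) :
    (c ^ s)⁻¹ ≤ (c + 1) / c ^ 2 := by
  have hsplit : (c + 1) / c ^ 2 = c⁻¹ + (c ^ 2)⁻¹ := by field_simp
  rw [hsplit]
  rcases le_total c 1 with hc1 | hc1
  · have hpow := Real.rpow_le_rpow_of_exponent_ge hc hc1 hs₂
    rw [Real.rpow_two] at hpow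
    exact (inv_anti₀ (by positivity) hpow).trans (le_add_of_nonneg_left (by positivity))
  · have hpow := Real.rpow_le_rpow_of_exponent_le hc1 hs₁
    rw [Real.rpow_one] at hpow
    exact (inv_anti₀ hc hpow).trans (le_add_of_nonneg_right (by positivity))

lemma inv_rpow_sub_inv_rpow_add_one_le {c s : ℝ} (hc : 0 < c) (hs₁ : 1 ≤ s) (hs₂ : s ≤ 2) :
    (c ^ s)⁻¹ - ((c + 1) ^ s)⁻¹ ≤ 2 / c ^ 2 := by
  have hq : c / (c + 1) ≤ 1 := (div_le_one (by positivity)).mpr (by linarith)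
  have hpow : (c / (c + 1)) ^ 2 ≤ (c / (c + 1)) ^ s := by
    simpa using Real.rpow_le_rpow_of_exponent_ge (by positivity) hq hs₂
  have hsq : 0 ≤ 1 - (c / (c + 1)) ^ 2 := sub_nonneg.mpr (pow_le_one₀ (by positivity) hq)
  calc (c ^ s)⁻¹ - ((c + 1) ^ s)⁻¹ = (c ^ s)⁻¹ * (1 - (c / (c + 1)) ^ s) := by
        rw [Real.div_rpow hc.le (by positivity)]
        field_simp
    _ ≤ (c ^ s)⁻¹ * (1 - (c / (c + 1)) ^ 2) := by gcongr
    _ ≤ (c + 1) / c ^ 2 * (1 - (c / (c + 1)) ^ 2) := by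
        gcongr
        exact inv_rpow_le_add_one_div_sq hc hs₁ hs₂
    _ = (2 * c + 1) / (c + 1) / c ^ 2 := by field_simp; ring
    _ ≤ 2 / c ^ 2 := by
        gcongr
        rw [div_le_iff₀ (by positivity)]
        linarith

lemma abs_inv_rpow_sub_inv_rpow_le {a b c s : ℝ} (hc : 0 < c) (ha : a ∈ Set.Icc c (c + 1))
    (hb : b ∈ Set.Icc c (c + 1)) (hs₁ : 1 ≤ s) (hs₂ : s ≤ 2) :
    |(a ^ s)⁻¹ - (b ^ s)⁻¹| ≤ 2 / c ^ 2 := by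
  have hmem {y : ℝ} (hy : y ∈ Set.Icc c (c + 1)) :
      (y ^ s)⁻¹ ∈ Set.Icc ((c + 1) ^ s)⁻¹ (c ^ s)⁻¹ := by
    have hy0 : 0 < y := hc.trans_le hy.1
    exact ⟨inv_anti₀ (by positivity) (Real.rpow_le_rpow hy0.le hy.2 (by linarith)),
      inv_anti₀ (by positivity) (Real.rpow_le_rpow hc.le hy.1 (by linarith))⟩
  refine le_trans ?_ (inv_rpow_sub_inv_rpow_add_one_le hc hs₁ hs₂)
  exact abs_sub_le_of_le_of_le (hmem ha).1 (hmem ha).2 (hmem hb).1 (hmem hb).2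

variable {x : ℝ} (hx₀ : 0 < x) (hx₁ : x < 1)
include hx₀ hx₁

lemma hurwitzZetaOdd_eq_ofReal_tsum {s : ℝ} (hs : 1 < s) :
    hurwitzZetaOdd x s
      = ((∑' n : ℕ, (((n + x) ^ s)⁻¹ - ((n + 1 - x) ^ s)⁻¹) / 2 : ℝ) : ℂ) := by
  rw [← (hasSum_nat_hurwitzZetaOdd_of_mem_Icc ⟨hx₀.le, hx₁.le⟩ (s := s)
    (by simpa using hs)).tsum_eq, Complex.ofReal_tsum]
  refine tsum_congr fun n => ?_
  have hn₁ : (0 : ℝ) ≤ n + x := by positivity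
  have hn₂ : (0 : ℝ) ≤ n + 1 - x := by linarith [n.cast_nonneg (α := ℝ)]
  push_cast [Complex.ofReal_cpow hn₁, Complex.ofReal_cpow hn₂]
  simp

lemma exists_summable_bound_hurwitzZetaOdd :
    ∃ u : ℕ → ℝ, Summable u ∧ ∀ s : ℝ, 1 ≤ s → s ≤ 2 → ∀ n : ℕ,
      ‖(((n + x) ^ s)⁻¹ - ((n + 1 - x) ^ s)⁻¹) / 2‖ ≤ u n := by
  set c := min x (1 - x)
  have hc : 0 < c := lt_min hx₀ (by linarith)
  have hcx : c ≤ x := min_le_left _ _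
  have hcx' : c ≤ 1 - x := min_le_right _ _
  refine ⟨fun n => 1 / |(n : ℝ) + c| ^ (2 : ℝ),
    (Real.summable_one_div_nat_add_rpow c 2).mpr one_lt_two, fun s hs₁ hs₂ n => ?_⟩
  have hbound := abs_inv_rpow_sub_inv_rpow_le (c := n + c) (a := n + x) (b := n + 1 - x)
    (by positivity) ⟨by linarith, by linarith⟩ ⟨by linarith, by linarith⟩ hs₁ hs₂
  rw [Real.norm_eq_abs, abs_div, abs_two, div_le_iff₀ two_pos]
  simp only [Real.rpow_two, sq_abs]
  exact hbound.trans_eq (by ring)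

lemma hurwitzZetaOdd_one_eq_ofReal_tsum :
    hurwitzZetaOdd x 1 = ((∑' n : ℕ, ((n + x)⁻¹ - (n + 1 - x)⁻¹) / 2 : ℝ) : ℂ) := by
  obtain ⟨u, hu, hbound⟩ := exists_summable_bound_hurwitzZetaOdd hx₀ hx₁
  have hsum : Tendsto (fun s : ℝ => ∑' n : ℕ, (((n + x) ^ s)⁻¹ - ((n + 1 - x) ^ s)⁻¹) / 2) (𝓝[>] 1)
      (𝓝 (∑' n : ℕ, (((n + x) ^ (1 : ℝ))⁻¹ - ((n + 1 - x) ^ (1 : ℝ))⁻¹) / 2)) := by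
    refine tendsto_tsum_of_dominated_convergence hu (fun n => ?_) ?_
    · have hn₁ : (n + x : ℝ) ≠ 0 := by positivity
      have hn₂ : (n + 1 - x : ℝ) ≠ 0 := by linarith [n.cast_nonneg (α := ℝ)]
      have hcont : ContinuousAt (fun s : ℝ => (((n + x) ^ s)⁻¹ - ((n + 1 - x) ^ s)⁻¹) / 2) 1 :=
        (((Real.continuousAt_const_rpow hn₁).inv₀ (by simpa using hn₁)).sub
          ((Real.continuousAt_const_rpow hn₂).inv₀ (by simpa using hn₂))).div_const 2
      exact hcont.tendsto.mono_left nhdsWithin_le_nhds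
    · filter_upwards [Ioo_mem_nhdsGT one_lt_two] with s hs n
      exact hbound s hs.1.le hs.2.le n
  have hcast : Tendsto (fun s : ℝ => (s : ℂ)) (𝓝[>] 1) (𝓝 1) :=
    (Complex.continuous_ofReal.tendsto' 1 1 (by simp)).mono_left nhdsWithin_le_nhds
  have hzeta : Tendsto (fun s : ℝ => hurwitzZetaOdd x s) (𝓝[>] 1) (𝓝 (hurwitzZetaOdd x 1)) :=
    ((differentiable_hurwitzZetaOdd x).continuous.tendsto 1).comp hcast
  have hsum' := ((Complex.continuous_ofReal.tendsto _).comp hsum).congr'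
    (by filter_upwards [self_mem_nhdsWithin] with s hs
        exact (hurwitzZetaOdd_eq_ofReal_tsum hx₀ hx₁ hs).symm)
  simpa only [Real.rpow_one] using tendsto_nhds_unique hzeta hsum'

omit hx₀ hx₁ in
/-- The partial sums differ from those of the Mittag-Leffler expansion of `π cot (π x)` by the
unpaired term `1 / (x + M)`. -/
lemma sum_range_inv_sub_inv_eq_sum_cotTerm (M : ℕ) :
    ((∑ n ∈ Finset.range M, ((n + x)⁻¹ - (n + 1 - x)⁻¹) / 2 : ℝ) : ℂ)
      = (1 / (x : ℂ) + ∑ n ∈ Finset.range M, cotTerm x n - (((x + M)⁻¹ : ℝ) : ℂ)) / 2 := by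
  induction M with
  | zero => simp
  | succ M ih =>
    have hneg : ((M : ℂ) + 1 - x)⁻¹ = -(1 / ((x : ℂ) - (M + 1))) := by
      rw [one_div, ← inv_neg, neg_sub]
    rw [Finset.sum_range_succ, Finset.sum_range_succ, Complex.ofReal_add, ih, cotTerm]
    push_cast
    rw [hneg, add_comm (M : ℂ) x]
    ring

lemma hurwitzZetaOdd_one : hurwitzZetaOdd x 1 = Real.pi / 2 * Complex.cot (Real.pi * x) := by
  obtain ⟨u, hu, hbound⟩ := exists_summable_bound_hurwitzZetaOdd hx₀ hx₁
  have hint : (x : ℂ) ∈ Complex.integerComplement := by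
    rintro ⟨k, hk⟩
    obtain rfl : (k : ℝ) = x := by exact_mod_cast hk
    have hk₀ : 0 < k := by exact_mod_cast hx₀
    have hk₁ : k < 1 := by exact_mod_cast hx₁
    omega
  have hsummable : Summable fun n : ℕ => (((n : ℝ) + x)⁻¹ - (n + 1 - x)⁻¹) / 2 :=
    Summable.of_norm_bounded hu (by simpa using hbound 1 le_rfl one_le_two)
  have hpartial := (Complex.continuous_ofReal.tendsto _).comp hsummable.hasSum.tendsto_sum_nat
  have hinv : Tendsto (fun M : ℕ => (((x + M)⁻¹ : ℝ) : ℂ)) atTop (𝓝 ((0 : ℝ) : ℂ)) :=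
    (Complex.continuous_ofReal.tendsto _).comp (tendsto_inv_atTop_zero.comp
      (tendsto_atTop_add_const_left _ _ tendsto_natCast_atTop_atTop))
  have hcot := (((tendsto_const_nhds (x := 1 / (x : ℂ))).add
    (tendsto_logDeriv_euler_cot_sub hint)).sub hinv).div_const 2
  rw [hurwitzZetaOdd_one_eq_ofReal_tsum hx₀ hx₁, tendsto_nhds_unique
    (hpartial.congr sum_range_inv_sub_inv_eq_sum_cotTerm) hcot]
  push_cast
  ring

end HurwitzZetaOdd

section LFunctionOne

open HurwitzZeta ZMod

lemma sum_range_mul_pow_mul_sub_one {R : Type*} [CommRing R] (w : R) (n : ℕ) :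
    (∑ k ∈ Finset.range n, (k : R) * w ^ k) * (w - 1)
      = n * w ^ n - ∑ k ∈ Finset.range n, w ^ (k + 1) := by
  induction n with
  | zero => simp
  | succ n ih =>
    rw [Finset.sum_range_succ, Finset.sum_range_succ, add_mul, ih]
    push_cast
    ring

lemma sum_range_mul_pow_of_pow_eq_one {R : Type*} [Field R] {w : R} {n : ℕ} (hw : w ≠ 1)
    (hwn : w ^ n = 1) : ∑ k ∈ Finset.range n, (k : R) * w ^ k = n / (w - 1) := by
  rw [eq_div_iff (sub_ne_zero.mpr hw), sum_range_mul_pow_mul_sub_one, hwn]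
  simp_rw [pow_succ]
  rw [← Finset.sum_mul, geom_sum_eq hw, hwn]
  simp

variable {N : ℕ} [NeZero N]

lemma sum_zmod_val_eq_sum_range {M : Type*} [AddCommMonoid M] (g : ℕ → M) :
    ∑ k : ZMod N, g k.val = ∑ k ∈ Finset.range N, g k :=
  Finset.sum_bij' (fun k _ => k.val) (fun k _ => (k : ZMod N))
    (fun k _ => Finset.mem_range.mpr (ZMod.val_lt k)) (fun _ _ => Finset.mem_univ _)
    (fun k _ => natCast_zmod_val k) (fun _ hk => ZMod.val_cast_of_lt (Finset.mem_range.mp hk))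
    (fun _ _ => rfl)

lemma sum_val_mul_stdAddChar {j : ZMod N} (hj : j ≠ 0) :
    ∑ k : ZMod N, (k.val : ℂ) * stdAddChar (k * j) = N / (stdAddChar j - 1) := by
  have hone : stdAddChar j ≠ 1 := by
    rwa [← (stdAddChar (N := N)).map_zero_eq_one, injective_stdAddChar.ne_iff]
  have hpow : (stdAddChar j) ^ N = 1 := by
    rw [← AddChar.map_nsmul_eq_pow]
    simp
  rw [← sum_range_mul_pow_of_pow_eq_one hone hpow, ← sum_zmod_val_eq_sum_range]
  refine Finset.sum_congr rfl fun k _ => ?_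
  rw [← AddChar.map_nsmul_eq_pow, nsmul_eq_mul, natCast_zmod_val]

lemma cot_pi_mul_val_div {j : ZMod N} (hj : j ≠ 0) :
    Complex.cot (Real.pi * ((j.val / N : ℝ) : ℂ))
      = Complex.I * (1 + 2 / N * ∑ k : ZMod N, (k.val : ℂ) * stdAddChar (k * j)) := by
  have hN : (N : ℂ) ≠ 0 := NeZero.ne _
  have hexp : stdAddChar j = Complex.exp (2 * Real.pi * Complex.I * ((j.val / N : ℝ) : ℂ)) := by
    have hcoe := stdAddChar_coe (N := N) (j.val : ℤ)
    rw [Int.cast_natCast, natCast_zmod_val] at hcoe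
    rw [hcoe]
    congr 1
    push_cast
    ring
  have hne : stdAddChar j - 1 ≠ 0 := by
    rw [sub_ne_zero, ← (stdAddChar (N := N)).map_zero_eq_one]
    exact injective_stdAddChar.ne hj
  have hne' : 1 - stdAddChar j ≠ 0 := by rwa [← neg_sub, neg_ne_zero]
  rw [sum_val_mul_stdAddChar hj, Complex.cot_pi_eq_exp_ratio, ← hexp]
  field_simp [Complex.I_ne_zero]
  linear_combination (stdAddChar j ^ 2 - 1) * Complex.I_sq

variable {χ : DirichletCharacter ℂ N} (hprim : χ.IsPrimitive) (hquad : χ ^ 2 = 1) (hodd : χ.Odd)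
include hprim hquad hodd

/-- Apply the discrete Fourier transform to `χ` twice. -/
lemma gaussSum_stdAddChar_sq : gaussSum χ stdAddChar ^ 2 = -(N : ℂ) := by
  have hinv : χ⁻¹ = χ := by rw [inv_eq_iff_mul_eq_one, ← sq, hquad]
  have hdft : 𝓕 (χ : ZMod N → ℂ) = (-gaussSum χ stdAddChar) • (χ : ZMod N → ℂ) := by
    ext k
    rw [hprim.fourierTransform_eq_inv_mul_gaussSum, hinv, hodd.eval_neg, Pi.smul_apply,
      smul_eq_mul, neg_mul, neg_mul, mul_comm]
  have htwice := congrFun (dft_dft (χ : ZMod N → ℂ)) 1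
  rw [hdft, _root_.map_smul, hdft] at htwice
  simp only [Pi.smul_apply, smul_eq_mul, map_one] at htwice
  rw [hodd] at htwice
  linear_combination htwice

omit hprim hquad in
lemma mul_hurwitzZetaOdd_one (j : ZMod N) :
    χ j * hurwitzZetaOdd (toAddCircle j) 1 = Real.pi / 2 * Complex.I * χ j
      + Real.pi * Complex.I / N * ∑ k : ZMod N, (k.val : ℂ) * (χ j * stdAddChar (k * j)) := by
  have hN : (0 : ℝ) < N := by exact_mod_cast NeZero.pos N
  rcases eq_or_ne j 0 with rfl | hj
  · have hχ0 : χ (0 : ZMod N) = 0 := by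
      have hneg := hodd.to_fun 0
      rw [neg_zero] at hneg
      exact CharZero.eq_neg_self_iff.mp hneg
    simp [hχ0]
  · have hval : (0 : ℝ) < j.val := by
      exact_mod_cast Nat.pos_of_ne_zero (by rwa [Ne, ZMod.val_eq_zero])
    have hlt : (j.val / N : ℝ) < 1 := (div_lt_one hN).mpr (by exact_mod_cast ZMod.val_lt j)
    rw [toAddCircle_apply, hurwitzZetaOdd_one (div_pos hval hN) hlt, cot_pi_mul_val_div hj]
    simp_rw [mul_left_comm _ (χ j)]
    rw [← Finset.mul_sum]
    field_simp

lemma LFunction_one_eq : χ.LFunction 1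
    = Real.pi * Complex.I / N ^ 2 * gaussSum χ stdAddChar * ∑ k : ZMod N, (k.val : ℂ) * χ k := by
  have hne : χ ≠ 1 := by
    rintro rfl
    have hneg : (1 : DirichletCharacter ℂ N) (-1) = -1 := hodd
    rw [MulChar.one_apply (by simp)] at hneg
    norm_num at hneg
  have hinner (k : ZMod N) : ∑ j, (k.val : ℂ) * (χ j * stdAddChar (k * j))
      = (k.val : ℂ) * χ k * gaussSum χ stdAddChar := by
    have hshift := gaussSum_mulShift_of_isPrimitive stdAddChar hprim k
    rw [inv_eq_iff_mul_eq_one.mpr ((sq χ).symm.trans hquad)] at hshift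
    rw [← Finset.mul_sum, mul_assoc, ← hshift]
    rfl
  rw [DirichletCharacter.LFunction, LFunction_def_odd hodd.to_fun,
    Finset.sum_congr rfl fun j _ => mul_hurwitzZetaOdd_one hodd j, Finset.sum_add_distrib,
    ← Finset.mul_sum, ← Finset.mul_sum, Finset.sum_comm, χ.sum_eq_zero_of_ne_one hne,
    Finset.sum_congr rfl fun k _ => hinner k, ← Finset.sum_mul, Complex.cpow_neg_one]
  field_simp
  ring

lemma norm_LFunction_one : ‖χ.LFunction 1‖ * (N * √N)
    = Real.pi * ‖∑ k : ZMod N, (k.val : ℂ) * χ k‖ := by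
  have hN : (0 : ℝ) < N := by exact_mod_cast NeZero.pos N
  have hgauss : ‖gaussSum χ stdAddChar‖ = √N := by
    have hsq := congrArg norm (gaussSum_stdAddChar_sq hprim hquad hodd)
    rw [norm_pow, norm_neg, Complex.norm_natCast] at hsq
    rw [← hsq, Real.sqrt_sq (norm_nonneg _)]
  simp only [LFunction_one_eq hprim hquad hodd, norm_mul, norm_div, norm_pow, hgauss,
    Complex.norm_real, Complex.norm_I, Complex.norm_natCast, Real.norm_eq_abs,
    abs_of_pos Real.pi_pos]
  field_simp
  rw [Real.sq_sqrt hN.le]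

end LFunctionOne

section JacobiChar

/-- The Dirichlet character modulo `d` given by the Jacobi symbol `a ↦ (a / d)`. -/
noncomputable def jacobiChar (d : ℕ) [NeZero d] : DirichletCharacter ℂ d where
  toFun a := (jacobiSym (a.val : ℤ) d : ℂ)
  map_one' := by
    have hmod : (((1 : ZMod d).val : ℕ) : ℤ) % d = 1 % d :=
      (ZMod.intCast_eq_intCast_iff _ 1 d).mp (by simp)
    rw [jacobiSym.mod_left' hmod, jacobiSym.one_left, Int.cast_one]
  map_mul' a b := by
    have hmod : (((a * b).val : ℕ) : ℤ) % d = ((a.val : ℤ) * b.val) % d :=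
      (ZMod.intCast_eq_intCast_iff _ ((a.val : ℤ) * b.val) d).mp (by simp)
    rw [jacobiSym.mod_left' hmod, jacobiSym.mul_left, Int.cast_mul]
  map_nonunit' a ha := by
    have hzero : jacobiSym (a.val : ℤ) d = 0 := by
      rw [jacobiSym.eq_zero_iff_not_coprime]
      intro hcop
      rw [← ZMod.natCast_zmod_val a, ZMod.isUnit_iff_coprime] at ha
      exact ha hcop
    rw [hzero, Int.cast_zero]

variable {d : ℕ}

lemma exists_jacobiSym_eq_neg_one_and_modEq_one {l n : ℕ} (hl : l.Prime) (hl2 : l ≠ 2)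
    (hln : l.Coprime n) : ∃ a : ℤ, jacobiSym a l = -1 ∧ a ≡ 1 [ZMOD n] := by
  have := Fact.mk hl
  obtain ⟨b, hb⟩ := FiniteField.exists_nonsquare (F := ZMod l) (by rwa [ZMod.ringChar_zmod_n])
  obtain ⟨u, v, huv⟩ := Nat.isCoprime_iff_coprime.mpr hln
  refine ⟨b.val * (v * n) + u * l, ?_, ?_⟩
  · have hmod : (b.val * (v * n) + u * l : ℤ) % l = b.val % l :=
      Int.ModEq.symm (Int.modEq_iff_dvd.mpr ⟨u - b.val * u, by linear_combination b.val * huv⟩)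
    rw [jacobiSym.mod_left' hmod, ZMod.nonsquare_iff_jacobiSym_eq_neg_one]
    simpa using hb
  · exact Int.ModEq.symm (Int.modEq_iff_dvd.mpr ⟨b.val * v - v, by linear_combination huv⟩)

lemma jacobiSym_natCast_eq_zero_iff_dvd {r : ℕ} (hr : r.Prime) [NeZero d] :
    jacobiSym r d = 0 ↔ r ∣ d := by
  rw [jacobiSym.eq_zero_iff_not_coprime, Int.gcd_natCast_natCast]
  exact (not_congr hr.coprime_iff_not_dvd).trans not_not

lemma jacobiSym_two_of_mod_eight_eq_seven (hd : d % 8 = 7) : jacobiSym 2 d = 1 := by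
  rw [jacobiSym.at_two (Nat.odd_iff.mpr (by omega)), ZMod.χ₈_nat_mod_eight, hd]
  decide

lemma jacobiSym_two_of_mod_eight_eq_three (hd : d % 8 = 3) : jacobiSym 2 d = -1 := by
  rw [jacobiSym.at_two (Nat.odd_iff.mpr (by omega)), ZMod.χ₈_nat_mod_eight, hd]
  decide

/-- Every prime `r` with `(r / d) = 1` splits in `ℚ(√-d)`: this is quadratic reciprocity, and for
`d ≡ 3 (mod 8)` the prime `2` is inert. -/
lemma exists_dvd_sq_add_of_jacobiSym_eq_one {r : ℕ} (hd8 : d % 8 = 3) (hr : r.Prime)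
    (hJ : jacobiSym r d = 1) : r ≠ 2 ∧ ∃ c : ℤ, (r : ℤ) ∣ c ^ 2 + d := by
  have hdodd : Odd d := Nat.odd_iff.mpr (by omega)
  have hr2 : r ≠ 2 := by
    rintro rfl
    rw [Nat.cast_ofNat, jacobiSym_two_of_mod_eight_eq_three hd8] at hJ
    norm_num at hJ
  have := Fact.mk hr
  have hrodd : Odd r := hr.odd_of_ne_two hr2
  have hneg : jacobiSym (-(d : ℤ)) r = 1 := by
    rw [jacobiSym.neg _ hrodd]
    rcases Nat.odd_mod_four_iff.mp (Nat.odd_iff.mp hrodd) with h | h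
    · rw [ZMod.χ₄_nat_one_mod_four h, one_mul, ← hJ,
        jacobiSym.quadratic_reciprocity_one_mod_four' hdodd h]
    · rw [ZMod.χ₄_nat_three_mod_four h,
        jacobiSym.quadratic_reciprocity_three_mod_four (by omega) h, hJ]
      norm_num
  obtain ⟨c, hc⟩ := ZMod.isSquare_of_jacobiSym_eq_one hneg
  refine ⟨hr2, c.val, ?_⟩
  rw [← ZMod.intCast_zmod_eq_zero_iff_dvd _ r]
  push_cast at hc ⊢
  rw [ZMod.natCast_zmod_val, sq, ← hc]
  ring

variable [NeZero d]

lemma jacobiChar_val (a : ZMod d) : jacobiChar d a = (jacobiSym (a.val : ℤ) d : ℂ) := rfl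

lemma jacobiChar_intCast (a : ℤ) : jacobiChar d (a : ZMod d) = (jacobiSym a d : ℂ) := by
  have hmod : (((a : ZMod d).val : ℕ) : ℤ) % d = a % d :=
    (ZMod.intCast_eq_intCast_iff _ a d).mp (by simp)
  rw [jacobiChar_val, jacobiSym.mod_left' hmod]

lemma jacobiChar_natCast (a : ℕ) : jacobiChar d (a : ZMod d) = (jacobiSym a d : ℂ) := by
  simpa using jacobiChar_intCast (d := d) a

lemma jacobiChar_sq : jacobiChar d ^ 2 = 1 := by
  ext a
  have hcop : (a : ZMod d).val.Coprime d := (ZMod.isUnit_iff_coprime _ d).mp (by simp)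
  rw [MulChar.pow_apply' _ two_ne_zero, MulChar.one_apply a.isUnit, jacobiChar_val]
  exact_mod_cast jacobiSym.sq_one ((Int.gcd_natCast_natCast _ _).trans hcop)

lemma jacobiChar_odd (hd4 : d % 4 = 3) : (jacobiChar d).Odd := by
  have hneg := jacobiChar_intCast (d := d) (-1)
  rw [jacobiSym.at_neg_one (Nat.odd_iff.mpr (by omega)), ZMod.χ₄_nat_three_mod_four hd4] at hneg
  simpa [DirichletCharacter.Odd] using hneg

lemma not_factorsThrough_jacobiChar {l n : ℕ} (hl : l.Prime) (hl2 : l ≠ 2) (hln : l.Coprime n)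
    (hd : d = l * n) : ¬ (jacobiChar d).FactorsThrough n := by
  rintro ⟨hnd, χ₀, hχ₀⟩
  have hn : n ≠ 0 := right_ne_zero_of_mul (hd ▸ NeZero.ne d)
  obtain ⟨a, hal, han⟩ := exists_jacobiSym_eq_neg_one_and_modEq_one hl hl2 hln
  have hJ : jacobiSym a d = -1 := by
    rw [hd, jacobiSym.mul_right' a hl.ne_zero hn, hal, jacobiSym.mod_left' han,
      jacobiSym.one_left, mul_one]
  have hcop : IsCoprime a (d : ℤ) := by
    rw [Int.isCoprime_iff_gcd_eq_one]
    by_contra hne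
    rw [jacobiSym.eq_zero_iff_not_coprime.mpr hne] at hJ
    norm_num at hJ
  have hval := jacobiChar_intCast (d := d) a
  have hone : (a : ZMod n) = 1 := by exact_mod_cast (ZMod.intCast_eq_intCast_iff a 1 n).mpr han
  rw [hχ₀, DirichletCharacter.changeLevel_eq_cast_of_dvd' χ₀ hnd hcop, hone, map_one, hJ] at hval
  norm_num at hval

lemma jacobiChar_isPrimitive (hdodd : Odd d) (hsq : Squarefree d) :
    (jacobiChar d).IsPrimitive := by
  rw [DirichletCharacter.isPrimitive_def]
  obtain ⟨e, he⟩ := (jacobiChar d).conductor_dvd_level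
  by_contra hne
  obtain ⟨l, hl, n, rfl⟩ := Nat.exists_prime_and_dvd (n := e) (by
    rintro rfl
    exact hne (by simpa using he.symm))
  have hd : d = l * ((jacobiChar d).conductor * n) := he.trans (by ring)
  refine not_factorsThrough_jacobiChar hl ?_ (Nat.coprime_of_squarefree_mul (hd ▸ hsq)) hd
    ((jacobiChar d).factorsThrough_conductor.mono _ (dvd_mul_right _ _)
      ⟨l, hd.trans (mul_comm _ _)⟩)
  rintro rfl
  exact Nat.not_even_iff_odd.mpr hdodd (even_iff_two_dvd.mpr ⟨_, hd⟩)

lemma sum_val_mul_jacobiChar : ∑ k : ZMod d, (k.val : ℂ) * jacobiChar d k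
    = ((∑ k ∈ Finset.range d, (k : ℤ) * jacobiSym k d : ℤ) : ℂ) := by
  push_cast
  rw [← sum_zmod_val_eq_sum_range]
  rfl

end JacobiChar

section ClassNumber

open NumberField

variable {K : Type*} [Field K] [NumberField K]

namespace IsSqrtNegGenerator

variable {θ : K} {d : ℕ} (hθ : IsSqrtNegGenerator θ d) (hsq : Squarefree d) (hd8 : d % 8 = 3)
include hθ hsq hd8

lemma hasQuadraticSplitting_jacobiChar [NeZero d] : HasQuadraticSplitting K (jacobiChar d) where
  sq_eq_one := jacobiChar_sq
  exists_absNorm_eq_sq p _ := ⟨_, hθ.absNorm_span_natCast p⟩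
  exists_pair_of_eq_one p hp h := by
    rw [jacobiChar_natCast] at h
    have hJ : jacobiSym p d = 1 := by exact_mod_cast h
    obtain ⟨hp2, c, hc⟩ := exists_dvd_sq_add_of_jacobiSym_eq_one hd8 hp hJ
    obtain ⟨P, Q, hP, hQ, hPQ⟩ := hθ.exists_ideals_absNorm_eq_prime hsq hp hp2 hc
    refine ⟨P, Q, hP, hQ, hPQ fun hdvd => ?_⟩
    rw [(jacobiSym_natCast_eq_zero_iff_dvd hp).mpr hdvd] at hJ
    exact zero_ne_one hJ
  exists_of_eq_zero p hp h := by
    rw [jacobiChar_natCast, Int.cast_eq_zero, jacobiSym_natCast_eq_zero_iff_dvd hp] at h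
    have hp2 : p ≠ 2 := by
      rintro rfl
      omega
    obtain ⟨P, -, hP, -, -⟩ := hθ.exists_ideals_absNorm_eq_prime hsq hp hp2 (c := 0)
      (by simpa using Int.natCast_dvd_natCast.mpr h)
    exact ⟨P, hP⟩

/-- By the analytic class number formula `L(1, χ) = π h / √d`, this is in fact an equality. -/
lemma abs_sum_mul_jacobiSym_le :
    |∑ k ∈ Finset.range d, (k : ℤ) * jacobiSym k d| ≤ d * classNumber K := by
  have : NeZero d := ⟨hθ.pos.ne'⟩
  have hodd := jacobiChar_odd (d := d) (by omega)
  have hprim := jacobiChar_isPrimitive (Nat.odd_iff.mpr (by omega)) hsq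
  have hne : jacobiChar d ≠ 1 := by
    intro h
    have hneg : jacobiChar d (-1) = -1 := hodd
    rw [h, MulChar.one_apply isUnit_one.neg] at hneg
    norm_num at hneg
  have hL := (norm_LFunction_one_le_residue hne fun _ hn =>
    (hθ.hasQuadraticSplitting_jacobiChar hsq hd8).norm_zetaMul_le hn).trans
      (hθ.dedekindZeta_residue_le hsq)
  have hd0 : (0 : ℝ) < d := by exact_mod_cast hθ.pos
  have hmul : Real.pi * ‖∑ k : ZMod d, (k.val : ℂ) * jacobiChar d k‖
      ≤ Real.pi * (d * classNumber K) := by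
    rw [← norm_LFunction_one hprim jacobiChar_sq hodd]
    calc ‖(jacobiChar d).LFunction 1‖ * (d * √d)
        ≤ Real.pi * classNumber K / √d * (d * √d) := by gcongr
      _ = Real.pi * (d * classNumber K) := by field_simp
  have hnorm := le_of_mul_le_mul_left hmul Real.pi_pos
  rw [sum_val_mul_jacobiChar, Complex.norm_intCast] at hnorm
  exact_mod_cast hnorm

omit hd8 in
lemma exists_sq_add_mul_sq_eq_four_mul_pow_classNumber {p : ℕ} {P : Ideal (𝓞 K)} (hp : p ≠ 0)
    (hP : Ideal.absNorm P = p) :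
    ∃ a b : ℤ, a ^ 2 + d * b ^ 2 = 4 * (p : ℤ) ^ classNumber K := by
  have hP0 : P ≠ ⊥ := by
    rintro rfl
    exact hp (by rw [← hP, Ideal.absNorm_bot])
  have hprincipal : (P ^ classNumber K).IsPrincipal := by
    have hpow : (ClassGroup.mk0 ⟨P, mem_nonZeroDivisors_iff_ne_zero.mpr hP0⟩) ^ classNumber K = 1 :=
      pow_card_eq_one
    rw [← map_pow, ClassGroup.mk0_eq_one_iff] at hpow
    exact hpow
  obtain ⟨α, hα⟩ := hprincipal
  have hnatAbs : (Algebra.norm ℤ α).natAbs = p ^ classNumber K := by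
    rw [← Ideal.absNorm_span_singleton, ← Ideal.submodule_span_eq, ← hα, map_pow, hP]
  obtain ⟨a, b, -, hab⟩ := hθ.exists_ringOfIntegers_eq hsq α
  have hnonneg : 0 ≤ Algebra.norm ℤ α := by
    have : 0 ≤ a ^ 2 + (d : ℤ) * b ^ 2 := by positivity
    omega
  refine ⟨a, b, hab.trans ?_⟩
  rw [← Int.natAbs_of_nonneg hnonneg, hnatAbs, Nat.cast_pow]

/-- Genus theory: if `P ^ h` is generated by `(a + b√-d) / 2` with `h` odd, then
`a ^ 2 ≡ 4 p ^ h (mod l)` makes `p` a square modulo `l`. -/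
lemma even_classNumber {l p : ℕ} (hl : l.Prime) (hld : l ∣ d) (hp : p.Prime)
    (hJ : jacobiSym p d = 1) (hJl : jacobiSym p l = -1) : Even (classNumber K) := by
  obtain ⟨hp2, c, hc⟩ := exists_dvd_sq_add_of_jacobiSym_eq_one hd8 hp hJ
  obtain ⟨P, -, hP, -, -⟩ := hθ.exists_ideals_absNorm_eq_prime hsq hp hp2 hc
  obtain ⟨a, b, hab⟩ :=
    hθ.exists_sq_add_mul_sq_eq_four_mul_pow_classNumber hsq hp.ne_zero hP
  by_contra hodd
  rw [Nat.not_even_iff_odd] at hodd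
  have := Fact.mk hl
  have hl2 : l ≠ 2 := by
    rintro rfl
    omega
  have hJ4 : jacobiSym (4 * (p : ℤ) ^ classNumber K) l = -1 := by
    rw [jacobiSym.mul_left, jacobiSym.pow_left, hJl, hodd.neg_one_pow,
      jacobiSym.at_four (hl.odd_of_ne_two hl2), one_mul]
  refine ZMod.nonsquare_of_jacobiSym_eq_neg_one hJ4 ⟨(a : ZMod l), ?_⟩
  have hd0 : (d : ZMod l) = 0 := (ZMod.natCast_eq_zero_iff d l).mpr hld
  have hcast := congrArg (Int.cast : ℤ → ZMod l) hab
  push_cast at hcast ⊢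
  rw [hd0] at hcast
  linear_combination -hcast

end IsSqrtNegGenerator

lemma exists_rat_eq_add_mul_sqrtNeg {d : ℕ} {x : ℂ} (hx : x ∈ ℚ⟮sqrtNeg d⟯) :
    ∃ u v : ℚ, x = u + v * sqrtNeg d := by
  rw [← IntermediateField.mem_toSubalgebra,
    IntermediateField.adjoin_simple_toSubalgebra_of_isAlgebraic
      (isIntegral_sqrtNeg d).isAlgebraic] at hx
  induction hx using Algebra.adjoin_induction with
  | mem y hy => exact ⟨0, 1, by simpa using hy⟩
  | algebraMap r => exact ⟨r, 0, by simp⟩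
  | add y z _ _ hy hz =>
    obtain ⟨u, v, rfl⟩ := hy
    obtain ⟨u', v', rfl⟩ := hz
    exact ⟨u + u', v + v', by push_cast; ring⟩
  | mul y z _ _ hy hz =>
    obtain ⟨u, v, rfl⟩ := hy
    obtain ⟨u', v', rfl⟩ := hz
    refine ⟨u * u' - d * (v * v'), u * v' + v * u', ?_⟩
    push_cast
    linear_combination (v * v' : ℂ) * sqrtNeg_sq d

lemma isSqrtNegGenerator_gen {d : ℕ} (hd : 0 < d) :
    IsSqrtNegGenerator (AdjoinSimple.gen ℚ (sqrtNeg d)) d where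
  pos := hd
  sq_eq := Subtype.ext (by simpa using sqrtNeg_sq d)
  exists_eq_add x := by
    obtain ⟨u, v, huv⟩ := exists_rat_eq_add_mul_sqrtNeg x.2
    exact ⟨u, v, Subtype.ext (by simpa using huv)⟩

lemma exists_classNumSqrtNeg_eq {d : ℕ} (hd : 0 < d) :
    ∃ (_ : NumberField ℚ⟮sqrtNeg d⟯) (θ : ℚ⟮sqrtNeg d⟯),
      IsSqrtNegGenerator θ d ∧ classNumSqrtNeg d = classNumber ℚ⟮sqrtNeg d⟯ :=
  have := IntermediateField.adjoin.finiteDimensional (isIntegral_sqrtNeg d)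
  have := charZero_of_injective_algebraMap (algebraMap ℚ ℚ⟮sqrtNeg d⟯).injective
  ⟨⟨⟩, _, isSqrtNegGenerator_gen hd, rfl⟩

variable {d : ℕ} (hsq : Squarefree d) (hd8 : d % 8 = 3)
include hsq hd8

lemma abs_sum_mul_jacobiSym_le_classNumSqrtNeg :
    |∑ k ∈ Finset.range d, (k : ℤ) * jacobiSym k d| ≤ d * classNumSqrtNeg d := by
  obtain ⟨_, θ, hθ, hclass⟩ := exists_classNumSqrtNeg_eq (Nat.pos_of_ne_zero hsq.ne_zero)
  rw [hclass]
  exact hθ.abs_sum_mul_jacobiSym_le hsq hd8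

lemma even_classNumSqrtNeg {l p : ℕ} (hl : l.Prime) (hld : l ∣ d) (hp : p.Prime)
    (hJ : jacobiSym p d = 1) (hJl : jacobiSym p l = -1) : Even (classNumSqrtNeg d) := by
  obtain ⟨_, θ, hθ, hclass⟩ := exists_classNumSqrtNeg_eq (Nat.pos_of_ne_zero hsq.ne_zero)
  rw [hclass]
  exact hθ.even_classNumber hsq hd8 hl hld hp hJ hJl

end ClassNumber

section TraceChar

lemma zetaP_isPrimitiveRoot {p : ℕ} (hp : p ≠ 0) : IsPrimitiveRoot (zetaP p) p :=
  Complex.isPrimitiveRoot_exp p hp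

variable (p : ℕ) [Fact p.Prime]

lemma zetaP_pow_self : zetaP p ^ p = 1 :=
  (zetaP_isPrimitiveRoot (NeZero.ne p)).pow_eq_one

lemma isIntegral_zetaP : IsIntegral ℤ (zetaP p) :=
  (zetaP_isPrimitiveRoot (NeZero.ne p)).isIntegral (NeZero.pos p)

/-- The additive character `x ↦ exp(2πi T(x) / p)` of an extension `F` of `ZMod p`, `T` being the
trace. -/
noncomputable def traceChar (F : Type*) [Field F] [Algebra (ZMod p) F] : AddChar F ℂ :=
  (AddChar.zmodChar p (zetaP_pow_self p)).compAddMonoidHom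
    (Algebra.trace (ZMod p) F).toAddMonoidHom

variable {F : Type*} [Field F]

lemma isIntegral_mulChar [Finite F] (χ : MulChar F ℂ) (x : F) : IsIntegral ℤ (χ x) := by
  have := Fintype.ofFinite F
  by_cases hx : x = 0
  · rw [hx, MulChar.map_zero]
    exact isIntegral_zero
  · refine IsIntegral.of_pow (Nat.sub_pos_of_lt (Fintype.one_lt_card (α := F))) ?_
    rw [← map_pow, FiniteField.pow_card_sub_one_eq_one x hx, map_one]
    exact isIntegral_one

lemma isIntegral_jacobiSum [Fintype F] (χ ψ : MulChar F ℂ) : IsIntegral ℤ (jacobiSum χ ψ) :=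
  IsIntegral.sum _ fun _ _ => (isIntegral_mulChar χ _).mul (isIntegral_mulChar ψ _)

variable [Algebra (ZMod p) F]

lemma traceChar_apply (x : F) :
    traceChar p F x = zetaP p ^ (Algebra.trace (ZMod p) F x).val := rfl

lemma isIntegral_traceChar (x : F) : IsIntegral ℤ (traceChar p F x) :=
  (isIntegral_zetaP p).pow _

lemma traceChar_apply_pow_self (x : F) : traceChar p F x ^ p = 1 := by
  rw [traceChar_apply, pow_right_comm, zetaP_pow_self, one_pow]

section Finite

variable [Finite F]

variable (F) in
lemma traceChar_ne_one : traceChar p F ≠ 1 := by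
  obtain ⟨a, ha⟩ := Algebra.trace_surjective (ZMod p) F 1
  refine AddChar.ne_one_iff.mpr ⟨a, fun h => ?_⟩
  rw [traceChar_apply, ha, ZMod.val_one, pow_one] at h
  exact (zetaP_isPrimitiveRoot (NeZero.ne p)).ne_one (Fact.out (p := p.Prime)).one_lt h

variable (F) in
lemma traceChar_isPrimitive : (traceChar p F).IsPrimitive :=
  AddChar.IsPrimitive.of_ne_one (traceChar_ne_one p F)

lemma traceChar_pow (x : F) : traceChar p F (x ^ p) = traceChar p F x := by
  have htrace := Algebra.trace_eq_of_algEquiv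
    (FiniteField.frobeniusAlgEquivOfAlgebraic (ZMod p) F) x
  rw [FiniteField.coe_frobeniusAlgEquivOfAlgebraic, ZMod.card] at htrace
  rw [traceChar_apply, traceChar_apply, ← htrace]

end Finite

variable [Fintype F]

lemma isIntegral_gaussSum_traceChar (χ : MulChar F ℂ) :
    IsIntegral ℤ (gaussSum χ (traceChar p F)) :=
  IsIntegral.sum _ fun x _ => (isIntegral_mulChar χ x).mul (isIntegral_traceChar p x)

lemma gaussSumN_one_eq_gaussSum {F : Type} [Field F] [Fintype F] [Algebra (ZMod p) F]
    (χ : MulChar F ℂ) : gaussSumN p χ 1 = gaussSum χ (traceChar p F) := by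
  classical
  rw [gaussSumN, gaussSum, Finset.sum_filter, pow_one]
  refine Finset.sum_congr rfl fun x _ => ?_
  by_cases hx : x = 0
  · simp [hx, MulChar.map_zero]
  · simp [hx, traceChar_apply]

lemma gaussSum_pow_traceChar (χ : MulChar F ℂ) :
    gaussSum (χ ^ p) (traceChar p F) = gaussSum χ (traceChar p F) := by
  have : CharP F p := charP_of_injective_algebraMap (algebraMap (ZMod p) F).injective p
  refine Finset.sum_bijective (fun x => x ^ p) (frobeniusEquiv F p).bijective (by simp) ?_
  intro x _
  rw [traceChar_pow, MulChar.pow_apply' χ (NeZero.ne p), map_pow]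

lemma sum_inv_mul_pow_prime_pow {i : ℕ} (hi : i < Module.finrank (ZMod p) F) :
    ∑ x : F, x⁻¹ * x ^ p ^ i = if i = 0 then -1 else 0 := by
  classical
  have hp : p.Prime := Fact.out
  rcases eq_or_ne i 0 with rfl | hi0
  · have hone (x : F) : x⁻¹ * x ^ p ^ 0 = 1 - if x = 0 then 1 else 0 := by
      by_cases hx : x = 0 <;> simp [hx]
    rw [if_pos rfl, Finset.sum_congr rfl fun x _ => hone x]
    simp
  · have hcard : Fintype.card F = p ^ Module.finrank (ZMod p) F := by
      rw [Module.card_eq_pow_finrank (K := ZMod p), ZMod.card]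
    have hlt : p ^ i < p ^ Module.finrank (ZMod p) F := Nat.pow_lt_pow_right hp.one_lt hi
    have hpi : 1 < p ^ i := Nat.one_lt_pow hi0 hp.one_lt
    have hpow (x : F) : x⁻¹ * x ^ p ^ i = x ^ (p ^ i - 1) := by
      obtain ⟨n, hn⟩ : ∃ n, p ^ i = n + 2 := ⟨p ^ i - 2, by omega⟩
      by_cases hx : x = 0
      · simp [hx, hn]
      · rw [hn, pow_succ', inv_mul_cancel_left₀ hx]
        rfl
    rw [if_neg hi0, Finset.sum_congr rfl fun x _ => hpow x]
    exact FiniteField.sum_pow_lt_card_sub_one F _ (by omega)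

/-- Expanding the trace as `x + x ^ p + x ^ p ^ 2 + ⋯`, only the first term contributes. -/
lemma sum_inv_mul_trace :
    ∑ x : F, x⁻¹ * algebraMap (ZMod p) F (Algebra.trace (ZMod p) F x) = -1 := by
  simp_rw [FiniteField.algebraMap_trace_eq_sum_pow, Finset.mul_sum, Nat.card_zmod]
  rw [Finset.sum_comm, Finset.sum_congr rfl fun i hi =>
    sum_inv_mul_pow_prime_pow p (Finset.mem_range.mp hi)]
  simp [Module.finrank_pos]

end TraceChar

section Place

/-- `V` is the valuation ring of a place of `ℂ` above the prime `p`. It restricts to a prime ideal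
above `p` of the ring of all algebraic integers. -/
structure IsPlaceOver (V : ValuationSubring ℂ) (p : ℕ) : Prop where
  mem_of_isIntegral {x : ℂ} : IsIntegral ℤ x → x ∈ V
  valuation_lt_one : V.valuation (p : ℂ) < 1

variable (p : ℕ) [Fact p.Prime]

lemma not_isIntegral_inv_natCast : ¬ IsIntegral ℤ ((p : ℂ)⁻¹) := by
  intro hint
  have hp : p.Prime := Fact.out
  have hcast : ((p : ℂ)⁻¹) = algebraMap ℚ ℂ (p : ℚ)⁻¹ := by simp
  rw [hcast, isIntegral_algebraMap_iff (algebraMap ℚ ℂ).injective] at hint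
  obtain ⟨n, hn⟩ := IsIntegrallyClosed.isIntegral_iff.mp hint
  have hp0 : (p : ℚ) ≠ 0 := by exact_mod_cast hp.ne_zero
  have hmul : (n : ℚ) * p = 1 := by
    rw [← eq_intCast (algebraMap ℤ ℚ), hn, inv_mul_cancel₀ hp0]
  have hunit : IsUnit (p : ℤ) := IsUnit.of_mul_eq_one n (by rw [mul_comm]; exact_mod_cast hmul)
  exact hp.one_lt.ne' (by simpa using Int.isUnit_iff_natAbs_eq.mp hunit)

lemma exists_isPlaceOver : ∃ V : ValuationSubring ℂ, IsPlaceOver V p := by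
  let A : Subring ℂ := (integralClosure ℤ ℂ).toSubring
  let x : A := p
  have htop : Ideal.span {x} ≠ ⊤ := by
    intro h
    obtain ⟨y, hy⟩ := (Ideal.span_singleton_eq_top.mp h).exists_right_inv
    have hy' : (p : ℂ) * y = 1 := by simpa [x] using congrArg Subtype.val hy
    exact not_isIntegral_inv_natCast p (inv_eq_of_mul_eq_one_right hy' ▸ y.2)
  obtain ⟨V, hAV, hxV⟩ := Ideal.image_subset_nonunits_valuationSubring (Ideal.span {x}) htop
  exact ⟨V, fun hx => hAV hx,
    V.mem_nonunits_iff.mp (hxV ⟨x, Ideal.subset_span rfl, by simp [x]⟩)⟩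

variable {p}

namespace IsPlaceOver

variable {V : ValuationSubring ℂ} (hV : IsPlaceOver V p)
include hV

omit [Fact p.Prime] in
lemma valuation_le_one {x : ℂ} (hx : IsIntegral ℤ x) : V.valuation x ≤ 1 :=
  (V.valuation_le_one_iff x).mpr (hV.mem_of_isIntegral hx)

lemma valuation_natCast : V.valuation (p : ℂ) = V.valuation (zetaP p - 1) ^ (p - 1) := by
  have hp : p.Prime := Fact.out
  have hζ := zetaP_isPrimitiveRoot hp.ne_zero
  have hζV : IsPrimitiveRoot (⟨zetaP p, hV.mem_of_isIntegral (isIntegral_zetaP p)⟩ : V) p :=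
    IsPrimitiveRoot.of_map_of_injective (f := V.subtype) hζ Subtype.val_injective
  have hconj (j : ℕ) (hj : j < p - 1) :
      V.valuation (1 - zetaP p ^ (j + 1)) = V.valuation (zetaP p - 1) := by
    obtain ⟨u, hu⟩ := hζV.associated_pow_add_sub_sub_one hp.two_le 0
      (Nat.coprime_of_lt_prime j.succ_ne_zero (by omega) hp).symm
    have hu' := congrArg (fun t : V => V.valuation (t : ℂ)) hu
    push_cast at hu'
    rwa [map_mul, V.valuation_unit, mul_one, zero_add, pow_zero, eq_comm,
      Valuation.map_sub_swap] at hu'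
  obtain ⟨n, rfl⟩ : ∃ n, p = n + 1 := ⟨p - 1, (Nat.sub_add_cancel hp.one_le).symm⟩
  rw [Nat.add_sub_cancel] at hconj ⊢
  rw [Nat.cast_add_one, ← hζ.prod_one_sub_pow_eq_order, map_prod,
    Finset.prod_congr rfl fun j hj => hconj j (Finset.mem_range.mp hj), Finset.prod_const,
    Finset.card_range]

lemma valuation_zetaP_sub_one_lt_one : V.valuation (zetaP p - 1) < 1 := by
  by_contra! h
  exact hV.valuation_lt_one.not_ge (hV.valuation_natCast ▸ one_le_pow₀ h)

end IsPlaceOver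

end Place

section Teichmuller

/-- `ω` is the Teichmüller character of `F` for the valuation ring `V`: embedding `F` by `i` in an
extension `k` of the residue field of `V`, where `φ` is reduction modulo the maximal ideal,
`ω x` reduces to `x`. -/
structure IsTeichmuller {V : ValuationSubring ℂ} {F k : Type*} [Field F] [Field k] (φ : V →+* k)
    (i : F →+* k) (ω : MulChar F ℂ) : Prop where
  apply_eq_zero_iff (a : V) : φ a = 0 ↔ V.valuation (a : ℂ) < 1
  apply_eq {x : F} {a : V} : (a : ℂ) = ω x → φ a = i x

variable {V : ValuationSubring ℂ}

/-- Reduce the factorization of `X ^ n - 1` over `ℂ` into linear factors. -/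
lemma exists_pow_eq_one_and_map_eq {k : Type*} [Field k] (φ : V →+* k)
    (hint : ∀ x : ℂ, IsIntegral ℤ x → x ∈ V) {n : ℕ} (hn : 0 < n) {y : k} (hy : y ^ n = 1) :
    ∃ z : V, z ^ n = 1 ∧ φ z = y := by
  have hζ := Complex.isPrimitiveRoot_exp n hn.ne'
  have hζV : IsPrimitiveRoot (⟨_, hint _ (hζ.isIntegral hn)⟩ : V) n :=
    IsPrimitiveRoot.of_map_of_injective (f := V.subtype) hζ Subtype.val_injective
  have hprod := congrArg (fun P => (P.map φ).eval y) (X_pow_sub_one_eq_prod hn hζV)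
  simp only [Polynomial.map_sub, Polynomial.map_pow, map_X, Polynomial.map_one,
    Polynomial.map_prod, eval_prod, map_C, eval_sub, eval_pow, eval_X, eval_one, eval_C, hy,
    sub_self] at hprod
  obtain ⟨z, hz, hzy⟩ := Finset.prod_eq_zero_iff.mp hprod.symm
  exact ⟨z, (mem_nthRootsFinset hn 1).mp hz, (sub_eq_zero.mp hzy).symm⟩

variable {F : Type*} [Field F]

lemma exists_mulChar_map_eq [Finite F] {k : Type*} [Field k] (φ : V →+* k) (i : F →+* k)
    (hint : ∀ x : ℂ, IsIntegral ℤ x → x ∈ V) :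
    ∃ ω : MulChar F ℂ, ∀ {x : F} {a : V}, (a : ℂ) = ω x → φ a = i x := by
  classical
  have := Fintype.ofFinite F
  obtain ⟨g, hg⟩ := IsCyclic.exists_generator (α := Fˣ)
  have hn : 0 < Fintype.card Fˣ := Fintype.card_pos
  obtain ⟨z, hz, hzg⟩ := exists_pow_eq_one_and_map_eq φ hint hn (y := i g)
    (by rw [← map_pow, ← Units.val_pow_eq_pow_val, pow_card_eq_one, Units.val_one, map_one])
  have hzC : (z : ℂ) ^ Fintype.card Fˣ = 1 := by exact_mod_cast congrArg Subtype.val hz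
  let u : ℂˣ := Units.ofPowEqOne (z : ℂ) _ hzC hn.ne'
  have hu : u ∈ rootsOfUnity (Fintype.card Fˣ) ℂ := Units.pow_ofPowEqOne hzC hn.ne'
  refine ⟨MulChar.ofRootOfUnity hu hg, fun {x a} ha => ?_⟩
  by_cases hx : x = 0
  · rw [hx, MulChar.map_zero] at ha
    rw [hx, map_zero, Subtype.ext (a1 := a) (a2 := 0) ha, map_zero]
  · obtain ⟨j, hj⟩ := mem_powers_iff_mem_zpowers.mpr (hg (Units.mk0 x hx))
    have hxj : x = (g : F) ^ j := by simpa using (congrArg Units.val hj).symm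
    have haz : a = z ^ j := by
      apply Subtype.ext
      rw [ha, hxj, map_pow, MulChar.ofRootOfUnity_spec]
      rfl
    rw [haz, map_pow, hzg, hxj, map_pow]

lemma exists_isTeichmuller (p : ℕ) [Fact p.Prime] (F : Type*) [Field F] [Finite F]
    [Algebra (ZMod p) F] (hV : IsPlaceOver V p) :
    ∃ (k : Type) (_ : Field k) (φ : V →+* k) (i : F →+* k) (ω : MulChar F ℂ),
      IsTeichmuller φ i ω := by
  let k := AlgebraicClosure (IsLocalRing.ResidueField V)
  let φ : V →+* k := (algebraMap _ k).comp (IsLocalRing.residue V)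
  have hφ (a : V) : φ a = 0 ↔ V.valuation (a : ℂ) < 1 := by
    rw [← V.valuation_lt_one_iff, ← IsLocalRing.residue_eq_zero_iff]
    exact map_eq_zero_iff _ (algebraMap (IsLocalRing.ResidueField V) k).injective
  have hpk : (p : k) = 0 := by
    rw [← map_natCast φ, hφ]
    simpa using hV.valuation_lt_one
  have : CharP k p := (CharP.charP_iff_prime_eq_zero Fact.out).mpr hpk
  let : Algebra (ZMod p) k := ZMod.algebra k p
  let i : F →ₐ[ZMod p] k := IsAlgClosed.lift
  obtain ⟨ω, hω⟩ := exists_mulChar_map_eq φ i.toRingHom fun _ => hV.mem_of_isIntegral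
  exact ⟨k, inferInstance, φ, i, ω, hφ, hω⟩

variable [Fintype F] {k : Type*} [Field k] {φ : V →+* k} {i : F →+* k} {ω : MulChar F ℂ}

namespace IsTeichmuller

lemma orderOf_eq (h : IsTeichmuller φ i ω) : orderOf ω = Fintype.card F - 1 := by
  refine Nat.dvd_antisymm (MulChar.orderOf_dvd_card_sub_one F ω) ?_
  rw [← FiniteField.forall_pow_eq_one_iff]
  intro x
  have hpow : ω ((x : F) ^ orderOf ω) = 1 := by
    rw [map_pow, ← MulChar.pow_apply_coe, pow_orderOf_eq_one, MulChar.one_apply_coe]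
  have hone := h.apply_eq (a := 1) hpow.symm
  rw [map_one, eq_comm, map_eq_one_iff _ i.injective] at hone
  exact Units.ext (by simpa using hone)

/-- Modulo `(ζ - 1)²`, `ζ ^ T(x) = 1 + T(x) (ζ - 1)`, which reduces the claim to
`∑ x⁻¹ T(x) = -1` in the residue field. -/
lemma valuation_gaussSum_inv (h : IsTeichmuller φ i ω) {p : ℕ} [Fact p.Prime] [Algebra (ZMod p) F]
    (hV : IsPlaceOver V p) (hω : ω ≠ 1) :
    V.valuation (gaussSum ω⁻¹ (traceChar p F)) = V.valuation (zetaP p - 1) := by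
  let ζ : V := ⟨zetaP p, hV.mem_of_isIntegral (isIntegral_zetaP p)⟩
  let w (x : F) : V := ⟨ω⁻¹ x, hV.mem_of_isIntegral (isIntegral_mulChar _ x)⟩
  let s (x : F) : V := ∑ j ∈ Finset.range (Algebra.trace (ZMod p) F x).val, ζ ^ j
  let t : V := ∑ x : F, w x * s x
  have hgauss : gaussSum ω⁻¹ (traceChar p F) = (zetaP p - 1) * t := by
    have hgeom (x : F) :
        ω⁻¹ x * traceChar p F x = ω⁻¹ x + (zetaP p - 1) * (ω⁻¹ x * (s x : ℂ)) := by
      have hs := mul_geom_sum (zetaP p) (Algebra.trace (ZMod p) F x).val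
      simp only [s, ζ, traceChar_apply, AddSubmonoidClass.coe_finsetSum,
        SubmonoidClass.coe_pow]
      linear_combination -(ω⁻¹ x) * hs
    simp_rw [gaussSum, hgeom, Finset.sum_add_distrib, ← Finset.mul_sum]
    simp [MulChar.sum_eq_zero_of_ne_one (inv_ne_one.mpr hω), t, w]
  have hζ : φ ζ = 1 := by
    rw [← sub_eq_zero, ← map_one φ, ← map_sub, h.apply_eq_zero_iff]
    exact hV.valuation_zetaP_sub_one_lt_one
  have hs (x : F) : φ (s x) = i (algebraMap (ZMod p) F (Algebra.trace (ZMod p) F x)) := by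
    simp only [s, map_sum, map_pow, hζ, one_pow, Finset.sum_const, Finset.card_range,
      nsmul_eq_mul, mul_one]
    conv_rhs => rw [← ZMod.natCast_zmod_val (Algebra.trace (ZMod p) F x), map_natCast, map_natCast]
  have ht : φ t = -1 := by
    rw [← map_one i, ← map_neg, ← sum_inv_mul_trace p (F := F), map_sum, map_sum]
    refine Finset.sum_congr rfl fun x _ => ?_
    rw [map_mul, map_mul, hs, h.apply_eq (MulChar.inv_apply' ω x)]
  have htval : V.valuation (t : ℂ) = 1 := by
    refine (V.valuation_le_one t).antisymm (not_lt.mp fun hlt => ?_)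
    rw [← h.apply_eq_zero_iff, ht] at hlt
    exact neg_ne_zero.mpr one_ne_zero hlt
  rw [hgauss, map_mul, htval, mul_one]

end IsTeichmuller

end Teichmuller

section Stickelberger

lemma exists_coprime_and_eq_pow_mul {G : Type*} [Group G] [Finite G] {ω : G}
    (hω : orderOf ω = Nat.card G) (ψ : G) {s : ℕ} (hs : Nat.card G = orderOf ψ * s) :
    ∃ c < orderOf ψ, c.Coprime (orderOf ψ) ∧ ψ = ω ^ (s * c) := by
  have htop : Subgroup.zpowers ω = ⊤ := Subgroup.eq_top_of_card_eq _ (by rw [Nat.card_zpowers, hω])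
  obtain ⟨j, hj⟩ := mem_powers_iff_mem_zpowers.mpr (htop ▸ Subgroup.mem_top ψ)
  have hpos : 0 < orderOf ψ := orderOf_pos ψ
  have hs0 : s ≠ 0 := right_ne_zero_of_mul (hs ▸ Nat.card_pos.ne')
  have hdvd : orderOf ψ * s ∣ orderOf ψ * j := by
    rw [← hs, ← hω, mul_comm]
    exact orderOf_dvd_of_pow_eq_one (by rw [pow_mul, ← pow_orderOf_eq_one ψ]; exact congrArg _ hj)
  obtain ⟨c, rfl⟩ := Nat.dvd_of_mul_dvd_mul_left hpos hdvd
  have hψ : ψ = (ω ^ s) ^ c := by rw [← pow_mul]; exact hj.symm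
  have hωs : orderOf (ω ^ s) = orderOf ψ := by
    rw [orderOf_pow_of_dvd hs0 (hω ▸ hs ▸ dvd_mul_left _ _), hω, hs,
      Nat.mul_div_cancel _ (Nat.pos_of_ne_zero hs0)]
  refine ⟨c % orderOf ψ, Nat.mod_lt _ hpos, ?_, ?_⟩
  · have hgcd : orderOf ψ = orderOf ψ / (orderOf ψ).gcd c := by
      conv_lhs => rw [hψ, orderOf_pow, hωs]
    rw [Nat.Coprime, ← Nat.gcd_rec]
    exact (Nat.div_eq_self.mp hgcd.symm).resolve_left hpos.ne'
  · rw [pow_mul, ← hωs, pow_mod_orderOf, ← hψ]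

lemma pow_succ_mul_div (p c j : ℕ) {m : ℕ} (hm : 0 < m) :
    p ^ (j + 1) * c / m = p ^ j * c / m * p + p * (p ^ j * c % m) / m := by
  have hsplit : p ^ (j + 1) * c = p * (p ^ j * c % m) + m * (p ^ j * c / m * p) := by
    calc p ^ (j + 1) * c = p * (p ^ j * c % m + m * (p ^ j * c / m)) := by
          rw [Nat.mod_add_div, pow_succ']; ring
      _ = _ := by ring
  rw [hsplit, Nat.add_mul_div_left _ _ hm, add_comm]

lemma mul_sum_mul_mod_div {p c f m : ℕ} (hmod : p ^ f * c % m = c % m) :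
    m * ∑ i ∈ Finset.range f, p * (p ^ i * c % m) / m
      = (p - 1) * ∑ i ∈ Finset.range f, p ^ i * c % m := by
  have hterm (i : ℕ) :
      p * (p ^ i * c % m) = m * (p * (p ^ i * c % m) / m) + p ^ (i + 1) * c % m := by
    conv_lhs => rw [← Nat.div_add_mod (p * (p ^ i * c % m)) m]
    rw [Nat.mul_mod_mod, pow_succ', mul_assoc]
  have hsum := Finset.sum_congr rfl fun i (_ : i ∈ Finset.range f) => hterm i
  rw [Finset.sum_add_distrib, ← Finset.mul_sum, ← Finset.mul_sum] at hsum
  have hshift := Finset.sum_range_succ (fun i => p ^ i * c % m) f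
  rw [Finset.sum_range_succ', hmod, pow_zero, one_mul] at hshift
  rw [Nat.sub_mul, one_mul]
  omega

variable {F : Type*} [Field F] [Fintype F] {p : ℕ} [Fact p.Prime] [Algebra (ZMod p) F]
  {V : ValuationSubring ℂ}

namespace IsPlaceOver

variable (hV : IsPlaceOver V p)
include hV

lemma mul_pow_le_valuation_gaussSum (χ : MulChar F ℂ) {n d : ℕ} (hnd : n + d < orderOf χ) :
    V.valuation (gaussSum (χ ^ n) (traceChar p F)) * V.valuation (gaussSum χ (traceChar p F)) ^ d
      ≤ V.valuation (gaussSum (χ ^ (n + d)) (traceChar p F)) := by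
  induction d with
  | zero => simp
  | succ d ih =>
    have hne : χ ^ (n + d) * χ ≠ 1 := by
      rw [← pow_succ]
      exact pow_ne_one_of_lt_orderOf (Nat.succ_ne_zero _) hnd
    have hjacobi := congrArg V.valuation (jacobiSum_mul_nontrivial hne (traceChar p F))
    rw [map_mul, map_mul, ← pow_succ] at hjacobi
    calc _ = V.valuation (gaussSum (χ ^ n) (traceChar p F))
          * V.valuation (gaussSum χ (traceChar p F)) ^ d
          * V.valuation (gaussSum χ (traceChar p F)) := by rw [pow_succ, mul_assoc]
      _ ≤ V.valuation (gaussSum (χ ^ (n + d)) (traceChar p F))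
          * V.valuation (gaussSum χ (traceChar p F)) := by
        gcongr
        exact ih (by omega)
      _ = V.valuation (gaussSum (χ ^ (n + d + 1)) (traceChar p F))
          * V.valuation (jacobiSum (χ ^ (n + d)) χ) := hjacobi.symm
      _ ≤ V.valuation (gaussSum (χ ^ (n + d + 1)) (traceChar p F)) * 1 := by
        gcongr
        exact hV.valuation_le_one (isIntegral_jacobiSum _ _)
      _ = _ := mul_one _

/-- The exponents `p * (p ^ i * c % m) / m` are the base-`p` digits of `p ^ j * c / m`. -/
lemma pow_sum_le_valuation_gaussSum (χ : MulChar F ℂ) {c m j : ℕ} (hcm : c < m)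
    (hj : p ^ j * c / m < orderOf χ) :
    V.valuation (gaussSum χ (traceChar p F)) ^ (∑ i ∈ Finset.range j, p * (p ^ i * c % m) / m)
      ≤ V.valuation (gaussSum (χ ^ (p ^ j * c / m)) (traceChar p F)) := by
  have hm : 0 < m := by omega
  induction j with
  | zero => simp [Nat.div_eq_of_lt hcm, gaussSum_one_left (traceChar_ne_one p F)]
  | succ j ih =>
    rw [pow_succ_mul_div p c j hm] at hj ⊢
    refine le_trans ?_ (hV.mul_pow_le_valuation_gaussSum χ hj)
    rw [Finset.sum_range_succ, pow_add, pow_mul χ, gaussSum_pow_traceChar]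
    gcongr
    exact ih ((Nat.le_mul_of_pos_right _ (NeZero.pos p)).trans
      (Nat.le_add_right _ _) |>.trans_lt hj)

/-- One half of Stickelberger's theorem: `c / m` is the exponent of `ψ` with respect to the inverse
of the Teichmüller character. -/
theorem exists_coprime_pow_le_valuation_gaussSum {f : ℕ} (hcard : Fintype.card F = p ^ f)
    {ψ : MulChar F ℂ} (hψ : ψ ≠ 1) :
    ∃ c : ℕ, c.Coprime (orderOf ψ) ∧
      V.valuation (p : ℂ) ^ (∑ i ∈ Finset.range f, p ^ i * c % orderOf ψ)
        ≤ V.valuation (gaussSum ψ (traceChar p F)) ^ orderOf ψ := by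
  obtain ⟨_, _, _, _, ω, hω⟩ := exists_isTeichmuller p F hV
  have hcardChar : Nat.card (MulChar F ℂ) = Fintype.card F - 1 := by
    classical
    rw [MulChar.card_eq_card_units_of_hasEnoughRootsOfUnity, Nat.card_eq_fintype_card,
      Fintype.card_units]
  have hωinv : orderOf ω⁻¹ = Nat.card (MulChar F ℂ) := by
    rw [orderOf_inv, hω.orderOf_eq, hcardChar]
  obtain ⟨s, hs⟩ := orderOf_dvd_natCard ψ
  obtain ⟨c, hc, hcop, hψc⟩ := exists_coprime_and_eq_pow_mul hωinv ψ hs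
  have hω1 : ω ≠ 1 := by
    rintro rfl
    exact hψ (by simpa using hψc)
  have hm : 0 < orderOf ψ := orderOf_pos ψ
  have hs0 : 0 < s := Nat.pos_of_ne_zero (right_ne_zero_of_mul (hs ▸ Nat.card_pos.ne'))
  have hq : p ^ f * c = c + orderOf ψ * (s * c) := by
    have hpf : p ^ f = orderOf ψ * s + 1 := by
      have := Fintype.card_pos (α := F)
      omega
    rw [hpf]
    ring
  have hdiv : p ^ f * c / orderOf ψ = s * c := by
    rw [hq, Nat.add_mul_div_left _ _ hm, Nat.div_eq_of_lt hc, zero_add]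
  refine ⟨c, hcop, ?_⟩
  have hval := hV.pow_sum_le_valuation_gaussSum (ω⁻¹ : MulChar F ℂ) (j := f) hc (by
    rw [hdiv, hωinv, hs, mul_comm]
    exact Nat.mul_lt_mul_of_pos_right hc hs0)
  rw [hdiv, ← hψc, hω.valuation_gaussSum_inv hV hω1] at hval
  calc _ = (V.valuation (zetaP p - 1)
        ^ ∑ i ∈ Finset.range f, p * (p ^ i * c % orderOf ψ) / orderOf ψ) ^ orderOf ψ := by
        rw [hV.valuation_natCast, ← pow_mul, ← pow_mul, mul_comm _ (orderOf ψ),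
          mul_sum_mul_mod_div (by rw [hq, Nat.add_mul_mod_self_left])]
    _ ≤ _ := by gcongr

end IsPlaceOver

end Stickelberger

section IndexTwo

/-- `p` generates the subgroup of `(ℤ/m)ˣ` cut out by `(a / d) = 1`, which has index two because
`(-1 / d) = -1` when `d ≡ 3 (mod 4)`. -/
structure IsIndexTwoGenerator (p m d : ℕ) : Prop where
  dvd : d ∣ m
  mod_four : d % 4 = 3
  coprime : p.Coprime m
  jacobiSym_eq_one : jacobiSym p d = 1
  two_mul_orderOf : 2 * orderOf (p : ZMod m) = m.totient

variable {p m d : ℕ}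

lemma exists_pow_eq_of_orderOf_eq_totient {n : ℕ} [NeZero n] {a b : ZMod n}
    (ha : orderOf a = n.totient) (hb : IsUnit b) : ∃ k : ℕ, a ^ k = b := by
  have hfin : IsOfFinOrder a := by
    rw [← orderOf_pos_iff, ha]
    exact Nat.totient_pos.mpr (NeZero.pos n)
  obtain ⟨u, rfl⟩ := hfin.isUnit
  obtain ⟨v, rfl⟩ := hb
  have htop : Subgroup.zpowers u = ⊤ := by
    apply Subgroup.eq_top_of_card_eq
    rw [Nat.card_zpowers, ← orderOf_units, ha, Nat.card_eq_fintype_card,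
      ZMod.card_units_eq_totient]
  obtain ⟨k, hk⟩ := (mem_powers_iff_mem_zpowers (x := u) (y := v)).mpr (htop ▸ Subgroup.mem_top v)
  exact ⟨k, by exact_mod_cast congrArg Units.val hk⟩

lemma jacobiSym_eq_of_zmod_eq (hd : d ∣ m) {a b : ℤ} (hab : (a : ZMod m) = b) :
    jacobiSym a d = jacobiSym b d :=
  jacobiSym.mod_left'
    (((ZMod.intCast_eq_intCast_iff a b m).mp hab).of_dvd (Int.natCast_dvd_natCast.mpr hd))

lemma isCoprime_of_jacobiSym_ne_zero [NeZero d] {a : ℤ} (ha : jacobiSym a d ≠ 0) :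
    IsCoprime a (d : ℤ) := by
  rw [Int.isCoprime_iff_gcd_eq_one]
  exact not_not.mp (mt jacobiSym.eq_zero_iff_not_coprime.mpr ha)

lemma jacobiSym_eq_neg_one_of_orderOf_eq_totient {l r : ℕ} (hl : l.Prime) (hl2 : l ≠ 2)
    (hr : r ≠ 0) (hord : orderOf (p : ZMod (l ^ r)) = (l ^ r).totient) : jacobiSym p l = -1 := by
  have : NeZero l := ⟨hl.ne_zero⟩
  have : NeZero (l ^ r) := ⟨pow_ne_zero _ hl.ne_zero⟩
  obtain ⟨a, ha, -⟩ := exists_jacobiSym_eq_neg_one_and_modEq_one hl hl2 l.coprime_one_right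
  have hu : IsUnit (a : ZMod (l ^ r)) := by
    rw [ZMod.coe_int_isUnit_iff_isCoprime, Nat.cast_pow]
    exact (isCoprime_of_jacobiSym_ne_zero (by rw [ha]; decide)).symm.pow_left
  obtain ⟨k, hk⟩ := exists_pow_eq_of_orderOf_eq_totient hord hu
  have hpow : jacobiSym p l ^ k = -1 := by
    rw [← ha, ← jacobiSym.pow_left]
    exact jacobiSym_eq_of_zmod_eq (dvd_pow_self l hr) (by exact_mod_cast hk)
  rcases jacobiSym.trichotomy p l with h | h | h
  · rcases k.eq_zero_or_pos with rfl | hk0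
    · norm_num at hpow
    · rw [h, zero_pow hk0.ne'] at hpow
      norm_num at hpow
  · rw [h, one_pow] at hpow
    norm_num at hpow
  · exact h

lemma coprime_sub_one_of_jacobiSym_eq_neg_one {l : ℕ} (hl : l.Prime) (hp : p ≠ 0)
    (hJ : jacobiSym p l = -1) : l.Coprime (p - 1) := by
  rw [hl.coprime_iff_not_dvd]
  intro hdvd
  have hmod : (1 : ℤ) ≡ p [ZMOD l] := by
    exact_mod_cast (Nat.modEq_iff_dvd' (Nat.one_le_iff_ne_zero.mpr hp)).mpr hdvd
  rw [jacobiSym.mod_left' hmod.symm, jacobiSym.one_left] at hJ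
  norm_num at hJ

lemma sum_range_jacobiSym_eq_zero [NeZero d] (hd4 : d % 4 = 3) :
    ∑ k ∈ Finset.range d, jacobiSym k d = 0 := by
  have hne : jacobiChar d ≠ 1 := by
    intro h
    have hodd := jacobiChar_odd hd4
    rw [h, DirichletCharacter.Odd, MulChar.one_apply isUnit_one.neg] at hodd
    norm_num at hodd
  have hsum := MulChar.sum_eq_zero_of_ne_one hne
  simp only [jacobiChar_val] at hsum
  rw [sum_zmod_val_eq_sum_range fun k : ℕ => (jacobiSym k d : ℂ)] at hsum
  exact_mod_cast hsum

lemma sum_range_mul_jacobiSym_mul [NeZero d] (hd4 : d % 4 = 3) (n : ℕ) :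
    ∑ x ∈ Finset.range (d * n), (x : ℤ) * jacobiSym x d =
      n * ∑ k ∈ Finset.range d, (k : ℤ) * jacobiSym k d := by
  induction n with
  | zero => simp
  | succ n ih =>
    have hshift (x : ℕ) : ((d * n + x : ℕ) : ℤ) * jacobiSym ((d * n + x : ℕ) : ℤ) d =
        d * n * jacobiSym x d + x * jacobiSym x d := by
      have hmod : jacobiSym ((d * n + x : ℕ) : ℤ) d = jacobiSym x d :=
        jacobiSym_eq_of_zmod_eq dvd_rfl (by simp)
      rw [hmod]
      push_cast
      ring
    rw [Nat.mul_succ, Finset.sum_range_add, ih]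
    simp only [hshift]
    rw [Finset.sum_add_distrib, ← Finset.mul_sum, sum_range_jacobiSym_eq_zero hd4]
    push_cast
    ring

lemma two_mul_sum_filter_coprime (hm : 1 < m) :
    2 * ∑ x ∈ Finset.range m with x.Coprime m, x = m * m.totient := by
  have hpos (x : ℕ) (hx : x.Coprime m) : 0 < x :=
    Nat.pos_of_ne_zero fun h => hm.ne' (by rwa [h, Nat.coprime_zero_left] at hx)
  have hreflect : ∑ x ∈ Finset.range m with x.Coprime m, x =
      ∑ x ∈ Finset.range m with x.Coprime m, (m - x) := by
    refine Finset.sum_nbij' (m - ·) (m - ·) ?_ ?_ ?_ ?_ ?_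
    iterate 2
      intro x hx
      rw [Finset.mem_filter, Finset.mem_range] at hx ⊢
      have := hpos x hx.2
      exact ⟨by omega, (Nat.coprime_self_sub_left hx.1.le).mpr hx.2⟩
    all_goals
      intro x hx
      rw [Finset.mem_filter, Finset.mem_range] at hx
      omega
  have hpair : ∑ x ∈ Finset.range m with x.Coprime m, (x + (m - x)) = m * m.totient := by
    rw [Finset.sum_congr rfl (g := fun _ => m), Finset.sum_const, smul_eq_mul, mul_comm,
      Nat.totient_eq_card_coprime]
    · simp only [Nat.coprime_comm]
    · intro x hx
      rw [Finset.mem_filter, Finset.mem_range] at hx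
      omega
  rwa [Finset.sum_add_distrib, ← hreflect, ← two_mul] at hpair

namespace IsIndexTwoGenerator

section

variable (h : IsIndexTwoGenerator p m d)
include h

lemma one_lt : 1 < m := by
  have hm : m ≠ 0 := by
    rintro rfl
    have hp : p = 1 := by simpa using h.coprime
    have := h.two_mul_orderOf
    rw [hp, Nat.cast_one, orderOf_one, Nat.totient_zero] at this
    omega
  have := Nat.le_of_dvd (Nat.pos_of_ne_zero hm) h.dvd
  have := h.mod_four
  omega

lemma jacobiSym_neg (a : ℤ) : jacobiSym (-a) d = -jacobiSym a d := by
  rw [jacobiSym.neg _ (Nat.odd_iff.mpr (by have := h.mod_four; omega)),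
    ZMod.χ₄_nat_three_mod_four h.mod_four, neg_one_mul]

lemma exists_pow_eq {a : ℤ} (ha : IsCoprime a (m : ℤ)) (hJ : jacobiSym a d = 1) :
    ∃ i < orderOf (p : ZMod m), (p : ZMod m) ^ i = a := by
  have : NeZero m := ⟨by have := h.one_lt; omega⟩
  obtain ⟨u, hu⟩ := (ZMod.isUnit_iff_coprime p m).mpr h.coprime
  obtain ⟨w, hw⟩ := (ZMod.coe_int_isUnit_iff_isCoprime a m).mpr ha.symm
  have hord : orderOf u = orderOf (p : ZMod m) := by rw [← orderOf_units, hu]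
  have hpos : 0 < orderOf u := orderOf_pos u
  have hindex : (Subgroup.zpowers u).index = 2 := by
    have hcard := Subgroup.card_mul_index (Subgroup.zpowers u)
    rw [Nat.card_zpowers, Nat.card_eq_fintype_card, ZMod.card_units_eq_totient,
      ← h.two_mul_orderOf, ← hord, mul_comm 2] at hcard
    exact Nat.eq_of_mul_eq_mul_left hpos hcard
  have hJH {v : (ZMod m)ˣ} {b : ℤ} (hv : (v : ZMod m) = b) (hmem : v ∈ Subgroup.zpowers u) :
      jacobiSym b d = 1 := by
    obtain ⟨k, rfl⟩ := mem_powers_iff_mem_zpowers.mpr hmem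
    rw [← jacobiSym_eq_of_zmod_eq (a := (p : ℤ) ^ k) h.dvd (by rw [← hv]; simp [hu]),
      jacobiSym.pow_left, h.jacobiSym_eq_one, one_pow]
  have hwH : w ∈ Subgroup.zpowers u := by
    by_contra hnot
    have hneg : (-1 : (ZMod m)ˣ) ∉ Subgroup.zpowers u := by
      intro hmem
      have hJ1 := hJH (b := -1) (by simp) hmem
      rw [h.jacobiSym_neg, jacobiSym.one_left] at hJ1
      norm_num at hJ1
    have hmul := (Subgroup.mul_mem_iff_of_index_two hindex).mpr (iff_of_false hneg hnot)
    have hJa := hJH (b := -a) (by simp [hw]) hmul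
    rw [h.jacobiSym_neg, hJ] at hJa
    norm_num at hJa
  obtain ⟨k, hk⟩ := mem_powers_iff_mem_zpowers.mpr hwH
  refine ⟨k % orderOf u, hord ▸ Nat.mod_lt _ hpos, ?_⟩
  rw [← hu, ← hw, ← hk, ← Units.val_pow_eq_pow_val, pow_mod_orderOf]

lemma sum_pow_mul_mod {c : ℕ} (hc : c.Coprime m) :
    ∑ i ∈ Finset.range (orderOf (p : ZMod m)), p ^ i * c % m =
      ∑ x ∈ Finset.range m with x.Coprime m ∧ jacobiSym (x : ℕ) d = jacobiSym c d, x := by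
  have hm := h.one_lt
  have : NeZero m := ⟨by omega⟩
  have hcu : IsUnit (c : ZMod m) := (ZMod.isUnit_iff_coprime _ _).mpr hc
  refine Finset.sum_bij (fun i _ => p ^ i * c % m) ?_ ?_ ?_ fun _ _ => rfl
  · intro i _
    rw [Finset.mem_filter, Finset.mem_range]
    refine ⟨Nat.mod_lt _ (by omega), ?_, ?_⟩
    · rw [Nat.Coprime, ← Nat.gcd_rec, Nat.gcd_comm]
      exact (h.coprime.pow_left i).mul_left hc
    · rw [jacobiSym_eq_of_zmod_eq (b := (p : ℤ) ^ i * c) h.dvd (by simp), jacobiSym.mul_left,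
        jacobiSym.pow_left, h.jacobiSym_eq_one, one_pow, one_mul]
  · intro i hi j hj hij
    have hcast := (ZMod.natCast_eq_natCast_iff (p ^ i * c) (p ^ j * c) m).mpr hij
    push_cast at hcast
    exact pow_injOn_Iio_orderOf (Finset.mem_range.mp hi) (Finset.mem_range.mp hj)
      (hcu.mul_right_cancel hcast)
  · intro x hx
    simp only [Finset.mem_filter, Finset.mem_range] at hx
    obtain ⟨hxm, hxc, hxJ⟩ := hx
    obtain ⟨b, hb⟩ := hcu.exists_left_inv
    have hbint : ((b.val : ℤ) : ZMod m) = b := by simp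
    have hbJ : jacobiSym b.val d * jacobiSym c d = 1 := by
      rw [← jacobiSym.mul_left, jacobiSym_eq_of_zmod_eq (b := 1) h.dvd
        (by push_cast at hbint ⊢; rw [hbint, hb]), jacobiSym.one_left]
    obtain ⟨i, hi, hpi⟩ := h.exists_pow_eq (a := x * b.val)
      (by
        rw [isCoprime_comm, ← ZMod.coe_int_isUnit_iff_isCoprime, Int.cast_mul, hbint,
          Int.cast_natCast]
        exact ((ZMod.isUnit_iff_coprime x m).mpr hxc).mul (IsUnit.of_mul_eq_one _ hb))
      (by rw [jacobiSym.mul_left, hxJ, mul_comm, hbJ])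
    refine ⟨i, Finset.mem_range.mpr hi, ?_⟩
    rw [← Nat.mod_eq_of_lt hxm]
    refine (ZMod.natCast_eq_natCast_iff _ _ m).mp ?_
    rw [Nat.cast_mul, Nat.cast_pow, hpi, Int.cast_mul, hbint, mul_assoc, hb, mul_one,
      Int.cast_natCast]

end

lemma two_mul_sum_pow_mul_mod (h : IsIndexTwoGenerator p m d)
    (hrad : ∀ x : ℕ, x.Coprime d → x.Coprime m) {c : ℕ} (hc : c.Coprime m) :
    2 * ((∑ i ∈ Finset.range (orderOf (p : ZMod m)), p ^ i * c % m : ℕ) : ℤ) =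
      m * orderOf (p : ZMod m) +
        jacobiSym c d * ∑ x ∈ Finset.range m, (x : ℤ) * jacobiSym x d := by
  have hd0 : NeZero d := ⟨by have := h.mod_four; omega⟩
  have hunit {x : ℕ} (hx : x.Coprime m) : jacobiSym x d = 1 ∨ jacobiSym x d = -1 :=
    jacobiSym.eq_one_or_neg_one (by exact_mod_cast hx.coprime_dvd_right h.dvd)
  have htotal : ((∑ x ∈ Finset.range m with x.Coprime m, x : ℕ) : ℤ) =
      m * orderOf (p : ZMod m) := by
    have htwo := two_mul_sum_filter_coprime h.one_lt
    rw [← h.two_mul_orderOf, mul_left_comm] at htwo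
    exact_mod_cast Nat.eq_of_mul_eq_mul_left two_pos htwo
  rw [h.sum_pow_mul_mod hc, ← htotal, Finset.sum_filter, Finset.sum_filter]
  push_cast
  rw [Finset.mul_sum, Finset.mul_sum, ← Finset.sum_add_distrib]
  refine Finset.sum_congr rfl fun x _ => ?_
  by_cases hx : x.Coprime m
  · simp only [if_pos hx, and_iff_right hx]
    rcases hunit hc with hcJ | hcJ <;> rcases hunit hx with hxJ | hxJ <;>
      rw [hcJ, hxJ] <;> norm_num <;> ring
  · have hzero : jacobiSym x d = 0 := jacobiSym.eq_zero_iff_not_coprime.mpr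
      fun hxd => hx (hrad x (by exact_mod_cast hxd))
    simp [hx, hzero]

lemma two_mul_sum_pow_mul_mod_le (h : IsIndexTwoGenerator p m d)
    (hrad : ∀ x : ℕ, x.Coprime d → x.Coprime m) {H : ℕ}
    (hH : |∑ k ∈ Finset.range d, (k : ℤ) * jacobiSym k d| ≤ d * H) {c : ℕ} (hc : c.Coprime m) :
    2 * ∑ i ∈ Finset.range (orderOf (p : ZMod m)), p ^ i * c % m ≤
      m * (orderOf (p : ZMod m) + H) := by
  have hd0 : NeZero d := ⟨by have := h.mod_four; omega⟩
  have hsum := h.two_mul_sum_pow_mul_mod hrad hc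
  obtain ⟨n, hn⟩ := h.dvd
  have hperiod := sum_range_mul_jacobiSym_mul h.mod_four n
  rw [← hn] at hperiod
  have hJc : |jacobiSym c d| = 1 := by
    rw [abs_eq zero_le_one]
    exact jacobiSym.eq_one_or_neg_one (by exact_mod_cast hc.coprime_dvd_right h.dvd)
  have hbound : jacobiSym c d * ∑ x ∈ Finset.range m, (x : ℤ) * jacobiSym x d ≤ m * H :=
    calc _ ≤ |jacobiSym c d * ∑ x ∈ Finset.range m, (x : ℤ) * jacobiSym x d| := le_abs_self _
      _ = n * |∑ k ∈ Finset.range d, (k : ℤ) * jacobiSym k d| := by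
        rw [abs_mul, hJc, one_mul, hperiod, abs_mul, Nat.abs_cast]
      _ ≤ n * (d * H) := by gcongr
      _ = m * H := by rw [hn]; push_cast; ring
  zify
  push_cast at hsum
  linarith

end IsIndexTwoGenerator

end IndexTwo

section QuadraticCharacter

variable {F : Type*} [Field F] [Fintype F] {R : Type*} [CommRing R] [IsDomain R] {η : MulChar F R}

omit [Fintype F] in
lemma mulChar_generator_eq_neg_one (hη : η ≠ 1) (hη2 : η ^ 2 = 1) {g : Fˣ}
    (hg : ∀ x, x ∈ Subgroup.zpowers g) : η g = -1 := by
  have hsq : η g ^ 2 = 1 := by rw [← MulChar.pow_apply_coe, hη2, MulChar.one_apply_coe]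
  refine (sq_eq_one_iff.mp hsq).resolve_left fun hone => hη ?_
  rw [MulChar.eq_iff hg, hone, MulChar.one_apply_coe]

lemma mulChar_eq_intCast_quadraticChar [DecidableEq F] (hF : ringChar F ≠ 2) (hη : η ≠ 1)
    (hη2 : η ^ 2 = 1) (x : F) : η x = (quadraticChar F x : R) := by
  obtain ⟨g, hg⟩ := IsCyclic.exists_generator (α := Fˣ)
  have hquad : quadraticChar F g = -1 :=
    mulChar_generator_eq_neg_one (quadraticChar_ne_one hF)
      (quadraticChar_isQuadratic F).sq_eq_one hg
  have heq : η = (quadraticChar F).ringHomComp (Int.castRingHom R) := by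
    rw [MulChar.eq_iff hg, mulChar_generator_eq_neg_one hη hη2 hg, MulChar.ringHomComp_apply, hquad]
    simp
  rw [heq, MulChar.ringHomComp_apply, Int.coe_castRingHom]

omit [IsDomain R] in
lemma mul_jacobiSum_self (hF : ringChar F ≠ 2) (ψ : MulChar F R) :
    ψ 4 * jacobiSum ψ ψ = ∑ u : F, ψ (1 - u ^ 2) := by
  have h2 : (2 : F) ≠ 0 := Ring.two_ne_zero hF
  rw [jacobiSum, Finset.mul_sum]
  refine Finset.sum_bijective (fun x => 2 * x - 1) ⟨fun a b hab => ?_, fun b => ?_⟩ (by simp) ?_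
  · exact mul_left_cancel₀ h2 (by linear_combination hab)
  · exact ⟨(b + 1) / 2, by field_simp; ring⟩
  · intro x _
    rw [← map_mul, ← map_mul]
    ring_nf

lemma sum_sq_eq_sum_one_add_mul (hF : ringChar F ≠ 2) (hη : η ≠ 1) (hη2 : η ^ 2 = 1) (w : F → R) :
    ∑ u : F, w (u ^ 2) = ∑ s : F, (1 + η s) * w s := by
  classical
  rw [← Finset.sum_fiberwise_of_maps_to (t := Finset.univ) (g := fun u : F => u ^ 2) (by simp)]
  refine Finset.sum_congr rfl fun s _ => ?_
  have hcard : ((Finset.univ.filter fun u : F => u ^ 2 = s).card : ℤ) = quadraticChar F s + 1 := by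
    rw [← quadraticChar_card_sqrts hF s]
    congr 2
    ext
    simp
  rw [Finset.sum_congr rfl (g := fun _ => w s) fun u hu => by rw [(Finset.mem_filter.mp hu).2],
    Finset.sum_const, nsmul_eq_mul, mulChar_eq_intCast_quadraticChar hF hη hη2 s, add_comm 1]
  congr 1
  exact_mod_cast congrArg (Int.cast : ℤ → R) hcard

lemma mul_jacobiSum_self_eq_jacobiSum (hF : ringChar F ≠ 2) (hη : η ≠ 1) (hη2 : η ^ 2 = 1)
    {ψ : MulChar F R} (hψ : ψ ≠ 1) : ψ 4 * jacobiSum ψ ψ = jacobiSum η ψ := by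
  have hzero : ∑ s : F, ψ (1 - s) = 0 :=
    ((Equiv.subLeft (1 : F)).sum_comp ψ).trans (MulChar.sum_eq_zero_of_ne_one hψ)
  rw [mul_jacobiSum_self hF, sum_sq_eq_sum_one_add_mul hF hη hη2 fun s => ψ (1 - s)]
  simp only [add_mul, one_mul, Finset.sum_add_distrib]
  rw [hzero, zero_add, jacobiSum]

/-- The Davenport–Hasse product formula for characters of order two. -/
lemma gaussSum_mul_gaussSum_mul_quadratic (hF : ringChar F ≠ 2) (hη : η ≠ 1) (hη2 : η ^ 2 = 1)
    {ψ : MulChar F R} (hψ2 : ψ ^ 2 ≠ 1) (hηψ : η * ψ ≠ 1) {e : AddChar F R}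
    (hne : gaussSum ψ e ≠ 0) :
    ψ 4 * gaussSum ψ e * gaussSum (η * ψ) e = gaussSum (ψ ^ 2) e * gaussSum η e := by
  have hψ : ψ ≠ 1 := fun h => hψ2 (by rw [h, one_pow])
  have hself := jacobiSum_mul_nontrivial (χ := ψ) (φ := ψ) (by rwa [← sq]) e
  have hmul := jacobiSum_mul_nontrivial hηψ e
  rw [← sq] at hself
  rw [← mul_jacobiSum_self_eq_jacobiSum hF hη hη2 hψ] at hmul
  apply mul_right_cancel₀ hne
  linear_combination gaussSum (ψ ^ 2) e * hmul - ψ 4 * gaussSum (η * ψ) e * hself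

end QuadraticCharacter

section Semiprimitive

variable {F : Type*} [Field F]

/-- If `F = K ⊕ δK` and the additive character `e` is trivial on `δK`, then `δK` is the orthogonal
complement of `K` with respect to `(x, y) ↦ e (x * y)`. -/
lemma sum_subfield_addChar_mul {R : Type*} [CommRing R] [IsDomain R] {K : Subfield F} [Fintype K]
    {e : AddChar F R} (he : e ≠ 1) {δ : F} (hδe : ∀ y ∈ K, e (δ * y) = 1)
    (hsurj : Function.Surjective fun z : K × K => (z.1 + δ * z.2 : F)) (a b : K)
    [Decidable (a = 0)] :
    ∑ y : K, e ((a + δ * b) * y) = if a = 0 then (Fintype.card K : R) else 0 := by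
  have hterm (y : K) : e ((a + δ * b) * y) = e (a * y) := by
    rw [add_mul, AddChar.map_add_eq_mul, mul_assoc, hδe _ (K.mul_mem b.2 y.2), mul_one]
  simp only [hterm]
  split_ifs with ha0
  · simp [ha0]
  · let ξ : AddChar K R := (e.mulShift a).compAddMonoidHom K.subtype.toAddMonoidHom
    refine AddChar.sum_eq_zero_of_ne_one (ψ := ξ) fun hξ => he ?_
    ext x
    obtain ⟨⟨c, b'⟩, rfl⟩ := hsurj x
    have hc : e c = 1 := by
      have hval := DFunLike.congr_fun hξ (a⁻¹ * c)
      simpa [ξ, AddChar.mulShift_apply, mul_inv_cancel_left₀, ha0] using hval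
    rw [AddChar.map_add_eq_mul, hc, hδe b' b'.2, one_mul, AddChar.one_apply]

variable {R : Type*} [CommRing R] [IsDomain R] [CharZero R] [Fintype F]

/-- Stickelberger's evaluation of semiprimitive Gauss sums: both sides multiplied by `∑ y : K, χ y`
are equal to `∑ x, ∑ y : K, χ x * e (x * y)`. -/
lemma gaussSum_eq_card_mul_of_trivial_on_subfield {K : Subfield F} [Fintype K] {χ : MulChar F R}
    (hχ : χ ≠ 1) (hχK : ∀ y ∈ K, y ≠ 0 → χ y = 1) {e : AddChar F R} (he : e ≠ 1) {δ : F}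
    (hδe : ∀ y ∈ K, e (δ * y) = 1)
    (hbij : Function.Bijective fun z : K × K => (z.1 + δ * z.2 : F)) :
    gaussSum χ e = Fintype.card K * χ δ := by
  classical
  have hsumK : ∑ y : K, χ y ≠ 0 := by
    have hone : ∑ y : K, χ y = ∑ y : K, (1 : MulChar K R) y := by
      refine Finset.sum_congr rfl fun y _ => ?_
      rcases eq_or_ne y 0 with rfl | hy
      · simp [MulChar.map_zero]
      · rw [hχK y y.2 (by simpa using hy), MulChar.one_apply hy.isUnit]
    rw [hone, MulChar.sum_one_eq_card_units]
    exact_mod_cast Fintype.card_ne_zero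
  have hrow (y : K) : ∑ x : F, χ x * e (x * y) = χ y * gaussSum χ e := by
    rcases eq_or_ne y 0 with rfl | hy
    · simp [MulChar.map_zero, MulChar.sum_eq_zero_of_ne_one hχ]
    · have hy0 : (y : F) ≠ 0 := by simpa using hy
      have hshift := gaussSum_mulShift χ e (Units.mk0 (y : F) hy0)
      rw [Units.val_mk0, hχK y y.2 hy0, one_mul, gaussSum] at hshift
      rw [hχK y y.2 hy0, one_mul, ← hshift]
      simp only [AddChar.mulShift_apply, mul_comm]
  refine mul_left_cancel₀ hsumK ?_
  calc (∑ y : K, χ y) * gaussSum χ e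
      = ∑ x : F, χ x * ∑ y : K, e (x * y) := by
        simp only [Finset.sum_mul, Finset.mul_sum, ← hrow]
        exact Finset.sum_comm
    _ = ∑ a : K, ∑ b : K, χ (a + δ * b) * if a = 0 then (Fintype.card K : R) else 0 := by
        rw [← hbij.sum_comp, Fintype.sum_prod_type]
        simp only [sum_subfield_addChar_mul he hδe hbij.surjective]
    _ = (∑ y : K, χ y) * (Fintype.card K * χ δ) := by
        rw [Finset.sum_comm]
        simp only [mul_ite, mul_zero, Finset.sum_ite_eq', Finset.mem_univ, if_true,
          ZeroMemClass.coe_zero, zero_add, map_mul, Finset.sum_mul]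
        exact Finset.sum_congr rfl fun _ _ => by ring

section FrobeniusFixed

variable (F) (p k : ℕ) [Fact p.Prime] [CharP F p]

/-- The subfield of `F` fixed by the `k`-th power of the Frobenius `x ↦ x ^ p`. -/
def frobeniusFixed : Subfield F :=
  (iterateFrobenius F p k).eqLocusField (RingHom.id F)

variable {F p k}

omit [Fintype F] in
lemma mem_frobeniusFixed {x : F} : x ∈ frobeniusFixed F p k ↔ x ^ p ^ k = x := by
  rw [frobeniusFixed, RingHom.mem_eqLocusField, iterateFrobenius_def, RingHom.id_apply]

lemma exists_pow_eq_neg (hk : k ≠ 0) (hcard : Fintype.card F = (p ^ k) ^ 2) :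
    ∃ δ : F, δ ≠ 0 ∧ δ ^ p ^ k = -δ := by
  classical
  have hq : 1 < p ^ k := Nat.one_lt_pow hk (Fact.out : p.Prime).one_lt
  obtain ⟨g, hg⟩ := IsCyclic.exists_ofOrder_eq_natCard (α := Fˣ)
  rw [Nat.card_eq_fintype_card, Fintype.card_units, hcard] at hg
  refine ⟨g ^ p ^ k - g, fun h => ?_, ?_⟩
  · have hpow : g ^ (p ^ k - 1) = 1 := by
      ext
      refine mul_right_cancel₀ g.ne_zero ?_
      rw [Units.val_pow_eq_pow_val, ← pow_succ, Nat.sub_add_cancel hq.le, sub_eq_zero.mp h,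
        Units.val_one, one_mul]
    have hle := orderOf_le_of_pow_eq_one (by omega) hpow
    have hlt : p ^ k < (p ^ k) ^ 2 := lt_self_pow₀ hq one_lt_two
    omega
  · rw [sub_pow_char_pow, ← pow_mul, ← sq, ← hcard, FiniteField.pow_card, neg_sub]

lemma bijective_frobeniusFixed_add_mul (hcard : Fintype.card F = (p ^ k) ^ 2) (h2 : (2 : F) ≠ 0)
    {δ : F} (hδ0 : δ ≠ 0) (hδ : δ ^ p ^ k = -δ) :
    Function.Bijective
      fun z : frobeniusFixed F p k × frobeniusFixed F p k => (z.1 + δ * z.2 : F) := by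
  have hq2 (x : F) : (x ^ p ^ k) ^ p ^ k = x := by
    rw [← pow_mul, ← sq, ← hcard, FiniteField.pow_card]
  have h2q : (2 : F) ^ p ^ k = 2 := by
    rw [← iterateFrobenius_def, map_ofNat]
  constructor
  · rintro ⟨a, b⟩ ⟨a', b'⟩ heq
    have hconj : (a - δ * b : F) = a' - δ * b' := by
      have hpow := congrArg (· ^ p ^ k) heq
      simpa only [add_pow_char_pow, mul_pow, hδ, mem_frobeniusFixed.mp (SetLike.coe_mem _),
        neg_mul, ← sub_eq_add_neg] using hpow
    have ha : (a : F) = a' := mul_left_cancel₀ h2 (by linear_combination heq + hconj)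
    have hb : (b : F) = b' := mul_left_cancel₀ hδ0 (by linear_combination heq - ha)
    rw [Subtype.ext ha, Subtype.ext hb]
  · intro x
    refine ⟨⟨⟨(x + x ^ p ^ k) / 2, mem_frobeniusFixed.mpr ?_⟩,
      ⟨(x - x ^ p ^ k) / (2 * δ), mem_frobeniusFixed.mpr ?_⟩⟩, ?_⟩
    · rw [div_pow, add_pow_char_pow, hq2, h2q, add_comm]
    · rw [div_pow, sub_pow_char_pow, hq2, mul_pow, h2q, hδ, mul_neg, div_neg, ← neg_div, neg_sub]
    · field_simp
      ring

omit [Fact p.Prime] [CharP F p] in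
lemma quadraticChar_eq_pow_half_pred [DecidableEq F] (hF : ringChar F ≠ 2) (h4 : p ^ k % 4 = 1)
    (hcard : Fintype.card F = (p ^ k) ^ 2) {x c : F} (hc : x ^ p ^ k = c * x) (hx : x ≠ 0) :
    (quadraticChar F x : F) = c ^ ((p ^ k + 1) / 2) := by
  have hexp : Fintype.card F / 2 = (p ^ k - 1) * ((p ^ k + 1) / 2) := by
    obtain ⟨t, ht⟩ : ∃ t, p ^ k = 4 * t + 1 := ⟨p ^ k / 4, by omega⟩
    rw [hcard, ht, show (4 * t + 1 + 1) / 2 = 2 * t + 1 by omega, Nat.add_sub_cancel]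
    ring_nf
    omega
  have hpred : x ^ (p ^ k - 1) = c := by
    refine mul_right_cancel₀ hx ?_
    rw [← pow_succ, Nat.sub_add_cancel (by omega), hc]
  rw [quadraticChar_eq_pow_of_char_ne_two' hF, hexp, pow_mul, hpred]

end FrobeniusFixed

end Semiprimitive

section QuadraticGaussSum

variable {p : ℕ} [Fact p.Prime] {F : Type*} [Field F] [Fintype F] [Algebra (ZMod p) F]

omit [Fintype F] in
lemma traceChar_pow_prime_pow [Finite F] (k : ℕ) (x : F) :
    traceChar p F (x ^ p ^ k) = traceChar p F x := by
  induction k with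
  | zero => rw [pow_zero, pow_one]
  | succ k ih => rw [pow_succ, pow_mul, traceChar_pow, ih]

lemma quadratic_gaussSum_traceChar {k : ℕ} (hp2 : p ≠ 2) (hk : k ≠ 0) (h4 : p ^ k % 4 = 1)
    (hcard : Fintype.card F = (p ^ k) ^ 2) {η : MulChar F ℂ} (hη : η ≠ 1) (hη2 : η ^ 2 = 1) :
    gaussSum η (traceChar p F) = -(p : ℂ) ^ k := by
  classical
  have : CharP F p := charP_of_injective_algebraMap (algebraMap (ZMod p) F).injective p
  have hF : ringChar F ≠ 2 := by rwa [ringChar.eq F p]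
  have h2 : (2 : F) ≠ 0 := Ring.two_ne_zero hF
  obtain ⟨δ, hδ0, hδ⟩ := exists_pow_eq_neg (p := p) hk hcard
  have hbij := bijective_frobeniusFixed_add_mul hcard h2 hδ0 hδ
  have hcardK : Fintype.card (frobeniusFixed F p k) = p ^ k := by
    have hprod := Fintype.card_of_bijective hbij
    rw [Fintype.card_prod, hcard, ← sq] at hprod
    exact Nat.pow_left_injective two_ne_zero hprod
  have hηK (y : F) (hy : y ∈ frobeniusFixed F p k) (hy0 : y ≠ 0) : η y = 1 := by
    have hquad := quadraticChar_eq_pow_half_pred hF h4 hcard (c := 1)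
      (by rw [one_mul, mem_frobeniusFixed.mp hy]) hy0
    rw [one_pow] at hquad
    rw [mulChar_eq_intCast_quadraticChar hF hη hη2,
      (quadraticChar_dichotomy hy0).resolve_right fun h => ?_, Int.cast_one]
    rw [h, Int.cast_neg, Int.cast_one] at hquad
    exact Ring.neg_one_ne_one_of_char_ne_two hF hquad
  have hηδ : η δ = -1 := by
    have hquad := quadraticChar_eq_pow_half_pred hF h4 hcard (c := -1)
      (by rw [neg_one_mul, hδ]) hδ0
    rw [Odd.neg_one_pow (Nat.odd_iff.mpr (by omega))] at hquad
    rw [mulChar_eq_intCast_quadraticChar hF hη hη2,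
      (quadraticChar_dichotomy hδ0).resolve_left fun h => ?_, Int.cast_neg, Int.cast_one]
    rw [h, Int.cast_one] at hquad
    exact Ring.neg_one_ne_one_of_char_ne_two hF hquad.symm
  have hδe (y : F) (hy : y ∈ frobeniusFixed F p k) : traceChar p F (δ * y) = 1 := by
    have h2mem : (2 : F) ∈ frobeniusFixed F p k := ofNat_mem _ 2
    have hneg : (δ * (y / 2)) ^ p ^ k = -(δ * (y / 2)) := by
      rw [mul_pow, hδ, mem_frobeniusFixed.mp (div_mem hy h2mem), neg_mul]
    have hinv := traceChar_pow_prime_pow (p := p) k (δ * (y / 2))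
    rw [hneg] at hinv
    rw [show δ * y = δ * (y / 2) + δ * (y / 2) by field_simp; ring, AddChar.map_add_eq_mul]
    nth_rewrite 1 [← hinv]
    rw [← AddChar.map_add_eq_mul, neg_add_cancel, AddChar.map_zero_eq_one]
  rw [gaussSum_eq_card_mul_of_trivial_on_subfield hη hηK (traceChar_ne_one p F) hδe hbij,
    hcardK, hηδ, Nat.cast_pow, mul_neg_one]

end QuadraticGaussSum

section ConjugateFamilies

variable (R : Type*) {K : Type*} [CommRing R] [CommRing K] [Algebra R K]

/-- The `R`-algebra of families `(P(ζ ^ a))`, `a` prime to `n`, with `P ∈ R[X]`. For `R = ℚ` and a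
primitive `n`-th root of unity `ζ` these are the families of conjugates of elements of `ℚ(ζ)`. -/
def conjugateFamilies (n : ℕ) (ζ : K) : Subalgebra R ({a : ℕ // a.Coprime n} → K) :=
  Algebra.adjoin R {fun a => ζ ^ a.val}

variable {R} {n : ℕ} {ζ : K}

lemma exists_aeval_eq_of_mem_conjugateFamilies {X : {a : ℕ // a.Coprime n} → K}
    (hX : X ∈ conjugateFamilies R n ζ) : ∃ P : R[X], ∀ a, aeval (ζ ^ a.val) P = X a := by
  rw [conjugateFamilies, Algebra.adjoin_singleton_eq_range_aeval] at hX
  obtain ⟨P, rfl⟩ := hX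
  exact ⟨P, fun a => aeval_algHom_apply (Pi.evalAlgHom R (fun _ : {a : ℕ // a.Coprime n} => K) a)
    (fun b : {b : ℕ // b.Coprime n} => ζ ^ b.val) P⟩

variable [IsDomain K] (hζ : IsPrimitiveRoot ζ n)
include hζ

lemma pow_mem_conjugateFamilies [NeZero n] {z : K} (hz : z ^ n = 1) :
    (fun a => z ^ a.val) ∈ conjugateFamilies R n ζ := by
  obtain ⟨i, -, rfl⟩ := hζ.eq_pow_of_pow_eq_one hz
  have hpow : (fun a : {a : ℕ // a.Coprime n} => (ζ ^ i) ^ a.val) = (fun a => ζ ^ a.val) ^ i := by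
    ext a
    rw [Pi.pow_apply, pow_right_comm]
  rw [hpow]
  exact pow_mem (Algebra.subset_adjoin (Set.mem_singleton _)) i

/-- The remainder of `P` modulo the cyclotomic polynomial takes the value `x` at all `φ(n)` roots of
the latter, hence is constant. -/
lemma exists_algebraMap_eq_of_const_mem_conjugateFamilies [NeZero n] {x : K}
    (hx : (fun _ => x) ∈ conjugateFamilies R n ζ) : ∃ r : R, algebraMap R K r = x := by
  have : Nontrivial R := (algebraMap R K).domain_nontrivial
  obtain ⟨P, hP⟩ := exists_aeval_eq_of_mem_conjugateFamilies hx
  have hmonic := cyclotomic.monic n R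
  let Q := P %ₘ cyclotomic n R
  have hQ : Q.map (algebraMap R K) - C x = 0 := by
    refine eq_zero_of_degree_lt_of_eval_finset_eq_zero (primitiveRoots n K) ?_ fun ξ hξ => ?_
    · rw [hζ.card_primitiveRoots]
      refine (degree_sub_le _ _).trans_lt (max_lt (degree_map_le.trans_lt ?_) ?_)
      · exact (degree_modByMonic_lt P hmonic).trans_eq (degree_cyclotomic n R)
      · exact degree_C_le.trans_lt (by exact_mod_cast Nat.totient_pos.mpr (NeZero.pos n))
    · have hξ := isPrimitiveRoot_of_mem_primitiveRoots hξ
      have hroot : aeval ξ (cyclotomic n R) = 0 := by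
        rw [aeval_def, eval₂_eq_eval_map, map_cyclotomic]
        exact hξ.isRoot_cyclotomic (NeZero.pos n)
      obtain ⟨a, -, hcop, rfl⟩ := hζ.isPrimitiveRoot_iff.mp hξ
      rw [eval_sub, eval_C, eval_map_algebraMap, aeval_modByMonic_eq_self_of_root hroot,
        hP ⟨a, hcop⟩, sub_self]
  refine ⟨Q.coeff 0, ?_⟩
  rw [← coeff_map, sub_eq_zero.mp hQ, coeff_C_zero]

lemma gaussSum_pow_mem_conjugateFamilies [NeZero n] {A : Type*} [CommRing A] [Fintype A]
    {χ : MulChar A K} (hχ : χ ^ n = 1) {e : AddChar A K} (he : ∀ x, e x ^ n = 1) :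
    (fun a => gaussSum (χ ^ a.val) (e ^ a.val)) ∈ conjugateFamilies R n ζ := by
  have hterm (x : A) :
      (fun a => (χ ^ a.val) x * (e ^ a.val) x) ∈ conjugateFamilies R n ζ := by
    by_cases hx : IsUnit x
    · obtain ⟨u, rfl⟩ := hx
      have hχu : χ u ^ n = 1 := by rw [← MulChar.pow_apply_coe, hχ, MulChar.one_apply_coe]
      simp only [MulChar.pow_apply_coe, AddChar.pow_apply]
      exact mul_mem (pow_mem_conjugateFamilies hζ hχu) (pow_mem_conjugateFamilies hζ (he u))
    · simp only [MulChar.map_nonunit _ hx, zero_mul]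
      exact zero_mem _
  convert sum_mem fun x (_ : x ∈ Finset.univ) => hterm x using 1
  ext a
  rw [Finset.sum_apply, gaussSum]

end ConjugateFamilies

section GaussSumConjugates

lemma gaussSum_pow_pow_of_sq_eq_one {A R : Type*} [CommRing A] [Fintype A] [CommRing R]
    {χ : MulChar A R} (hχ : χ ^ 2 = 1) (e : AddChar A R) {a : ℕ} (hodd : Odd a)
    (ha : IsUnit (a : A)) : gaussSum (χ ^ a) (e ^ a) = χ a * gaussSum χ e := by
  obtain ⟨k, rfl⟩ := hodd
  obtain ⟨u, hu⟩ := ha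
  have hinv : χ⁻¹ = χ := inv_eq_of_mul_eq_one_left (by rw [← sq, hχ])
  rw [pow_succ χ, pow_mul, hχ, one_pow, one_mul, AddChar.pow_mulShift, ← hu, gaussSum_mulShift_eq,
    hinv]

lemma gaussSum_jacobiChar_pow_pow {d : ℕ} [NeZero d] {a : ℕ} (hodd : Odd a) (ha : a.Coprime d) :
    gaussSum (jacobiChar d ^ a) (ZMod.stdAddChar ^ a) =
      jacobiSym a d * gaussSum (jacobiChar d) ZMod.stdAddChar := by
  rw [gaussSum_pow_pow_of_sq_eq_one jacobiChar_sq _ hodd ((ZMod.isUnit_iff_coprime a d).mpr ha),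
    jacobiChar_natCast]

lemma jacobiSym_mul_gaussSum_mem_conjugateFamilies {R : Type*} [CommRing R] [Algebra R ℂ] {n : ℕ}
    [NeZero n] {ζ : ℂ} (hζ : IsPrimitiveRoot ζ n) {d : ℕ} [NeZero d] (hn : 2 * d ∣ n) :
    (fun a => jacobiSym a.val d * gaussSum (jacobiChar d) ZMod.stdAddChar) ∈
      conjugateFamilies R n ζ := by
  have hχ : jacobiChar d ^ n = 1 := orderOf_dvd_iff_pow_eq_one.mp
    ((orderOf_dvd_of_pow_eq_one jacobiChar_sq).trans (dvd_of_mul_right_dvd hn))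
  have he (x : ZMod d) : (ZMod.stdAddChar x : ℂ) ^ n = 1 := by
    obtain ⟨k, rfl⟩ := dvd_of_mul_left_dvd hn
    rw [← AddChar.map_nsmul_eq_pow, mul_comm, mul_nsmul]
    simp
  convert gaussSum_pow_mem_conjugateFamilies (R := R) hζ hχ he using 1
  ext a
  have hodd : Odd a.val := Nat.coprime_two_right.mp
    (a.prop.coprime_dvd_right (dvd_of_mul_right_dvd hn))
  rw [gaussSum_jacobiChar_pow_pow hodd (a.prop.coprime_dvd_right (dvd_of_mul_left_dvd hn))]

variable {p : ℕ} [Fact p.Prime] {F : Type*} [Field F] [Algebra (ZMod p) F]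

section

variable {R : Type*} [CommRing R] {ψ : MulChar F R} {m : ℕ}

/-- The order of `ψ c` divides both `m` and `p - 1`. -/
lemma mulChar_algebraMap_eq_one (hm : m.Coprime (p - 1)) (hψ : ψ ^ m = 1) {c : ZMod p}
    (hc : c ≠ 0) : ψ (algebraMap (ZMod p) F c) = 1 := by
  have hcF : algebraMap (ZMod p) F c ≠ 0 := (_root_.map_ne_zero _).mpr hc
  have hpow : ψ (algebraMap (ZMod p) F c) ^ m = 1 := by
    have h := MulChar.pow_apply_coe ψ m (Units.mk0 _ hcF)
    rwa [hψ, MulChar.one_apply_coe, Units.val_mk0, eq_comm] at h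
  have hfermat : ψ (algebraMap (ZMod p) F c) ^ (p - 1) = 1 := by
    rw [← map_pow, ← map_pow, ZMod.pow_card_sub_one_eq_one hc, map_one, map_one]
  exact (pow_eq_one_iff_of_coprime hm).mp ⟨hpow, hfermat⟩

lemma mulChar_natCast_eq_one (hm : m.Coprime (p - 1)) (hψ : ψ ^ m = 1) {a : ℕ}
    (ha : a.Coprime p) : ψ a = 1 := by
  have hne : (a : ZMod p) ≠ 0 := ((ZMod.isUnit_iff_coprime a p).mpr ha).ne_zero
  simpa only [map_natCast] using mulChar_algebraMap_eq_one hm hψ hne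

lemma mulChar_neg_one_eq_one (hm : m.Coprime (p - 1)) (hψ : ψ ^ m = 1) : ψ (-1) = 1 := by
  simpa only [map_neg, map_one] using
    mulChar_algebraMap_eq_one hm hψ (neg_ne_zero.mpr (one_ne_zero (α := ZMod p)))

end

variable [Fintype F] {ψ : MulChar F ℂ} {m : ℕ}

lemma gaussSum_pow_traceChar_pow (hm : m.Coprime (p - 1)) (hψ : ψ ^ m = 1) {a : ℕ}
    (ha : a.Coprime p) :
    gaussSum (ψ ^ a) (traceChar p F ^ a) = gaussSum (ψ ^ a) (traceChar p F) := by
  have haF : (a : F) ≠ 0 := by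
    simpa only [map_natCast] using (_root_.map_ne_zero (algebraMap (ZMod p) F)).mpr
      ((ZMod.isUnit_iff_coprime a p).mpr ha).ne_zero
  have hψa : (ψ ^ a) ^ m = 1 := by rw [pow_right_comm, hψ, one_pow]
  have hone := mulChar_natCast_eq_one hm hψa ha
  have hshift := gaussSum_mulShift (ψ ^ a) (traceChar p F) (Units.mk0 _ haF)
  rwa [Units.val_mk0, hone, one_mul, ← AddChar.pow_mulShift] at hshift

lemma gaussSum_traceChar_mem_conjugateFamilies {R : Type*} [CommRing R] [Algebra R ℂ] {n : ℕ}
    [NeZero n] {ζ : ℂ} (hζ : IsPrimitiveRoot ζ n) (hn : m * p ∣ n) (hm : m.Coprime (p - 1))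
    (hψ : ψ ^ m = 1) :
    (fun a => gaussSum (ψ ^ a.val) (traceChar p F)) ∈ conjugateFamilies R n ζ := by
  have htrace (x : F) : traceChar p F x ^ n = 1 := orderOf_dvd_iff_pow_eq_one.mp
    ((orderOf_dvd_of_pow_eq_one (traceChar_apply_pow_self p x)).trans (dvd_of_mul_left_dvd hn))
  have hψn : ψ ^ n = 1 := orderOf_dvd_iff_pow_eq_one.mp
    ((orderOf_dvd_of_pow_eq_one hψ).trans (dvd_of_mul_right_dvd hn))
  convert gaussSum_pow_mem_conjugateFamilies (R := R) hζ hψn htrace using 1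
  ext a
  rw [gaussSum_pow_traceChar_pow hm hψ (a.prop.coprime_dvd_right (dvd_of_mul_left_dvd hn))]

lemma gaussSum_mul_gaussSum_inv (hm : m.Coprime (p - 1)) (hψ : ψ ^ m = 1) (hψ1 : ψ ≠ 1) :
    gaussSum ψ (traceChar p F) * gaussSum ψ⁻¹ (traceChar p F) = Fintype.card F := by
  have hinv : ψ⁻¹ ^ m = 1 := by rw [inv_pow, hψ, inv_one]
  rw [← mul_gaussSum_inv_eq_gaussSum ψ⁻¹, mulChar_neg_one_eq_one hm hinv, one_mul]
  exact gaussSum_mul_gaussSum_eq_card hψ1 (traceChar_isPrimitive p F)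

lemma gaussSum_pow_prime_pow_traceChar (i : ℕ) :
    gaussSum (ψ ^ p ^ i) (traceChar p F) = gaussSum ψ (traceChar p F) := by
  induction i with
  | zero => rw [pow_zero, pow_one]
  | succ i ih => rw [pow_succ, pow_mul, gaussSum_pow_traceChar, ih]

namespace IsIndexTwoGenerator

variable {d : ℕ} (h : IsIndexTwoGenerator p m d)
include h

section

variable (hψ : ψ ^ m = 1)
include hψ

lemma gaussSum_zpow_eq {a : ℤ} (ha : IsCoprime a (m : ℤ)) (hJ : jacobiSym a d = 1) :
    gaussSum (ψ ^ a) (traceChar p F) = gaussSum ψ (traceChar p F) := by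
  obtain ⟨i, -, hi⟩ := h.exists_pow_eq ha hJ
  have hmod : a ≡ (p ^ i : ℕ) [ZMOD m] := by
    rw [← ZMod.intCast_eq_intCast_iff]
    exact_mod_cast hi.symm
  have hzpow : ψ ^ a = ψ ^ p ^ i := by
    rw [← zpow_natCast, zpow_eq_zpow_iff_modEq]
    exact hmod.of_dvd (Int.natCast_dvd_natCast.mpr (orderOf_dvd_of_pow_eq_one hψ))
  rw [hzpow, gaussSum_pow_prime_pow_traceChar]

variable {a : ℕ} (ha : a.Coprime m)
include ha

lemma gaussSum_pow_eq (hJ : jacobiSym a d = 1) :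
    gaussSum (ψ ^ a) (traceChar p F) = gaussSum ψ (traceChar p F) := by
  rw [← zpow_natCast, h.gaussSum_zpow_eq hψ (Nat.isCoprime_iff_coprime.mpr ha) hJ]

lemma gaussSum_pow_eq_gaussSum_inv (hJ : jacobiSym a d = -1) :
    gaussSum (ψ ^ a) (traceChar p F) = gaussSum ψ⁻¹ (traceChar p F) := by
  have hinv : ψ⁻¹ ^ m = 1 := by rw [inv_pow, hψ, inv_one]
  have hcop : IsCoprime (-a : ℤ) (m : ℤ) := (Nat.isCoprime_iff_coprime.mpr ha).neg_left
  have hJneg : jacobiSym (-a) d = 1 := by rw [h.jacobiSym_neg, hJ, neg_neg]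
  rw [← h.gaussSum_zpow_eq hinv hcop hJneg, inv_zpow', neg_neg, zpow_natCast]

lemma gaussSum_pow_add_gaussSum_inv_pow :
    gaussSum (ψ ^ a) (traceChar p F) + gaussSum (ψ⁻¹ ^ a) (traceChar p F) =
      gaussSum ψ (traceChar p F) + gaussSum ψ⁻¹ (traceChar p F) := by
  have hinv : ψ⁻¹ ^ m = 1 := by rw [inv_pow, hψ, inv_one]
  rcases jacobiSym.eq_one_or_neg_one (a := a) (ha.coprime_dvd_right h.dvd) with hJ | hJ
  · rw [h.gaussSum_pow_eq hψ ha hJ, h.gaussSum_pow_eq hinv ha hJ]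
  · rw [h.gaussSum_pow_eq_gaussSum_inv hψ ha hJ, h.gaussSum_pow_eq_gaussSum_inv hinv ha hJ, inv_inv,
      add_comm]

lemma gaussSum_inv_pow_sub_gaussSum_pow :
    gaussSum (ψ⁻¹ ^ a) (traceChar p F) - gaussSum (ψ ^ a) (traceChar p F) =
      jacobiSym a d * (gaussSum ψ⁻¹ (traceChar p F) - gaussSum ψ (traceChar p F)) := by
  have hinv : ψ⁻¹ ^ m = 1 := by rw [inv_pow, hψ, inv_one]
  rcases jacobiSym.eq_one_or_neg_one (a := a) (ha.coprime_dvd_right h.dvd) with hJ | hJ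
  · rw [h.gaussSum_pow_eq hψ ha hJ, h.gaussSum_pow_eq hinv ha hJ, hJ, Int.cast_one, one_mul]
  · rw [h.gaussSum_pow_eq_gaussSum_inv hψ ha hJ, h.gaussSum_pow_eq_gaussSum_inv hinv ha hJ, inv_inv,
      hJ, Int.cast_neg, Int.cast_one, neg_one_mul, neg_sub]

end

variable (hm : m.Coprime (p - 1)) (hψ : ψ ^ m = 1)
include hm hψ

lemma exists_ratCast_eq_gaussSum_add_gaussSum_inv :
    ∃ r : ℚ, (r : ℂ) = gaussSum ψ (traceChar p F) + gaussSum ψ⁻¹ (traceChar p F) := by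
  have : NeZero (m * p) := ⟨mul_ne_zero (by have := h.one_lt; omega) (NeZero.ne p)⟩
  have hζ := Complex.isPrimitiveRoot_exp (m * p) (NeZero.ne _)
  have hinv : ψ⁻¹ ^ m = 1 := by rw [inv_pow, hψ, inv_one]
  refine exists_algebraMap_eq_of_const_mem_conjugateFamilies hζ ?_
  convert add_mem (gaussSum_traceChar_mem_conjugateFamilies (R := ℚ) hζ dvd_rfl hm hψ)
    (gaussSum_traceChar_mem_conjugateFamilies hζ dvd_rfl hm hinv) using 1
  ext a
  have ha : a.val.Coprime m := a.prop.coprime_dvd_right (dvd_mul_right m p)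
  rw [Pi.add_apply, h.gaussSum_pow_add_gaussSum_inv_pow hψ ha]

lemma exists_ratCast_eq_gaussSum_inv_sub_gaussSum_mul_gaussSum_jacobiChar [NeZero d] :
    ∃ s : ℚ, (s : ℂ) = (gaussSum ψ⁻¹ (traceChar p F) - gaussSum ψ (traceChar p F)) *
      gaussSum (jacobiChar d) ZMod.stdAddChar := by
  let n := 2 * m * p
  have : NeZero n :=
    ⟨mul_ne_zero (mul_ne_zero two_ne_zero (by have := h.one_lt; omega)) (NeZero.ne p)⟩
  have hmp : m * p ∣ n := ⟨2, by ring⟩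
  have hd : 2 * d ∣ n := (mul_dvd_mul_left 2 h.dvd).mul_right p
  have hζ := Complex.isPrimitiveRoot_exp n (NeZero.ne _)
  have hinv : ψ⁻¹ ^ m = 1 := by rw [inv_pow, hψ, inv_one]
  refine exists_algebraMap_eq_of_const_mem_conjugateFamilies hζ ?_
  convert mul_mem (sub_mem (gaussSum_traceChar_mem_conjugateFamilies (R := ℚ) hζ hmp hm hinv)
    (gaussSum_traceChar_mem_conjugateFamilies hζ hmp hm hψ))
    (jacobiSym_mul_gaussSum_mem_conjugateFamilies hζ hd) using 1
  ext a
  have ha : a.val.Coprime m := a.prop.coprime_dvd_right (dvd_of_mul_right_dvd hmp)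
  have hsq : (jacobiSym a.val d : ℂ) ^ 2 = 1 := by
    exact_mod_cast jacobiSym.sq_one (a := a.val) (ha.coprime_dvd_right h.dvd)
  rw [Pi.mul_apply, Pi.sub_apply, h.gaussSum_inv_pow_sub_gaussSum_pow hψ ha, mul_mul_mul_comm,
    ← sq, hsq, one_mul]

lemma exists_ratCast_eq_gaussSum_inv_sub_gaussSum_mul_sqrtNeg (hsq : Squarefree d) :
    ∃ s : ℚ, (s : ℂ) =
      (gaussSum ψ⁻¹ (traceChar p F) - gaussSum ψ (traceChar p F)) * sqrtNeg d := by
  have hd4 := h.mod_four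
  have : NeZero d := ⟨by omega⟩
  obtain ⟨s, hs⟩ := h.exists_ratCast_eq_gaussSum_inv_sub_gaussSum_mul_gaussSum_jacobiChar hm hψ
  have hgauss := gaussSum_stdAddChar_sq
    (jacobiChar_isPrimitive (Nat.odd_iff.mpr (by omega)) hsq) jacobiChar_sq (jacobiChar_odd hd4)
  rcases sq_eq_sq_iff_eq_or_eq_neg.mp ((sqrtNeg_sq d).trans hgauss.symm) with hroot | hroot
  · exact ⟨s, by rw [hroot, hs]⟩
  · exact ⟨-s, by rw [hroot, mul_neg, ← hs, Rat.cast_neg]⟩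

end IsIndexTwoGenerator

end GaussSumConjugates

section IntegralValuation

variable {p : ℕ}

namespace IsPlaceOver

variable {V : ValuationSubring ℂ} (hV : IsPlaceOver V p)
include hV

lemma valuation_intCast_le_one (r : ℤ) : V.valuation (r : ℂ) ≤ 1 :=
  hV.valuation_le_one (map_isIntegral_int (Int.castRingHom ℂ) (isIntegral_algebraMap (x := r)))

lemma dvd_of_valuation_lt_one (hp : p.Prime) {r : ℤ} (hr : V.valuation (r : ℂ) < 1) :
    (p : ℤ) ∣ r := by
  by_contra hndvd
  obtain ⟨x, y, hxy⟩ :=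
    (Nat.prime_iff_prime_int.mp hp).irreducible.coprime_iff_not_dvd.mpr hndvd
  have hlt (z : ℤ) {u : ℂ} (hu : V.valuation u < 1) : V.valuation (z * u) < 1 := by
    rw [map_mul]
    exact (mul_le_of_le_one_left' (hV.valuation_intCast_le_one z)).trans_lt hu
  have hone : V.valuation (x * p + y * r : ℂ) < 1 :=
    V.valuation.map_add_lt (hlt x hV.valuation_lt_one) (hlt y hr)
  rw [show (x * p + y * r : ℂ) = 1 by exact_mod_cast hxy, map_one] at hone
  exact hone.false

lemma pow_dvd_of_valuation_le (hp : p.Prime) {k : ℕ} {r : ℤ}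
    (hr : V.valuation (r : ℂ) ≤ V.valuation (p : ℂ) ^ k) : (p : ℤ) ^ k ∣ r := by
  induction k generalizing r with
  | zero => rw [pow_zero]; exact one_dvd r
  | succ k ih =>
    have hp0 : 0 < V.valuation (p : ℂ) := by
      rw [zero_lt_iff, Valuation.ne_zero_iff]
      exact_mod_cast hp.ne_zero
    have hlt : V.valuation (r : ℂ) < 1 :=
      hr.trans_lt (pow_lt_one₀ zero_le hV.valuation_lt_one k.succ_ne_zero)
    obtain ⟨t, rfl⟩ := hV.dvd_of_valuation_lt_one hp hlt
    rw [Int.cast_mul, map_mul, Int.cast_natCast, pow_succ', mul_le_mul_iff_right₀ hp0] at hr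
    rw [pow_succ']
    exact mul_dvd_mul_left _ (ih hr)

end IsPlaceOver

end IntegralValuation

section HalfIntegers

lemma exists_eq_add_mul_sqrtNeg_div_two {d : ℕ} (hsq : Squarefree d) {y y' : ℂ} {a M : ℤ} {s : ℚ}
    (hadd : y + y' = a) (hmul : y * y' = M) (hsub : (y - y') * sqrtNeg d = s) :
    ∃ b : ℤ, 4 * M = a ^ 2 + d * b ^ 2 ∧ y = (a + b * sqrtNeg d) / 2 := by
  have hd : (d : ℂ) ≠ 0 := Nat.cast_ne_zero.mpr hsq.ne_zero
  have hroot := sqrtNeg_sq d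
  let w : ℚ := -s / d
  have hdiff : y - y' = w * sqrtNeg d := by
    apply mul_left_cancel₀ hd
    have hw : (d : ℂ) * w = -s := by
      push_cast [w]
      exact mul_div_cancel₀ _ hd
    linear_combination (-sqrtNeg d) * hw + (y - y') * hroot - sqrtNeg d * hsub
  have hw : (d : ℚ) * w ^ 2 = (4 * M - a ^ 2 : ℤ) := by
    have hC : (d : ℂ) * w ^ 2 = 4 * M - a ^ 2 := by
      rw [← hadd, ← hmul]
      linear_combination (w : ℂ) ^ 2 * hroot + (y - y' + w * sqrtNeg d) * hdiff
    exact_mod_cast hC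
  obtain ⟨b, hb⟩ := exists_int_eq_of_squarefree_mul_sq hsq hw
  have hwb : (w : ℂ) = b := by rw [hb, Rat.cast_intCast]
  refine ⟨b, ?_, ?_⟩
  · rw [hb] at hw
    have hint : (d : ℤ) * b ^ 2 = 4 * M - a ^ 2 := by exact_mod_cast hw
    linear_combination -hint
  · rw [← hwb]
    linear_combination (hadd + hdiff) / 2

end HalfIntegers

section IndexTwoGaussSum

namespace IsIndexTwoGenerator

variable {p : ℕ} [Fact p.Prime] {F : Type*} [Field F] [Fintype F] [Algebra (ZMod p) F]
  {m d n k : ℕ} (h : IsIndexTwoGenerator p m d) (hrad : ∀ x : ℕ, x.Coprime d → x.Coprime m)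
  (hord : orderOf (p : ZMod m) = 2 * n)
  (hk : |∑ j ∈ Finset.range d, (j : ℤ) * jacobiSym j d| ≤ d * (2 * k : ℕ))
  (hcard : Fintype.card F = p ^ (2 * n)) {ψ : MulChar F ℂ} (hψ : orderOf ψ = m)
include h hrad hord hk hcard hψ

lemma pow_le_valuation_gaussSum {V : ValuationSubring ℂ} (hV : IsPlaceOver V p) :
    V.valuation (p : ℂ) ^ (n + k) ≤ V.valuation (gaussSum ψ (traceChar p F)) := by
  have hm := h.one_lt
  have hψ1 : ψ ≠ 1 := fun hone => by
    rw [hone, orderOf_one] at hψ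
    omega
  obtain ⟨c, hc, hle⟩ := hV.exists_coprime_pow_le_valuation_gaussSum hcard hψ1
  rw [hψ] at hc hle
  have hS := h.two_mul_sum_pow_mul_mod_le hrad hk hc
  rw [hord] at hS
  refine (pow_le_pow_iff_left₀ zero_le zero_le (by omega : m ≠ 0)).mp (le_trans ?_ hle)
  rw [← pow_mul]
  exact pow_le_pow_of_le_one zero_le hV.valuation_lt_one.le (by linarith)

/-- As `G(ψ) G(ψ⁻¹) = p ^ (2n)`, the lower bound for `G(ψ⁻¹)` is an upper bound for `G(ψ)`. -/
lemma valuation_pow_mul_gaussSum_le (hm : m.Coprime (p - 1)) {V : ValuationSubring ℂ}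
    (hV : IsPlaceOver V p) :
    V.valuation (p ^ k * gaussSum ψ (traceChar p F)) ≤ V.valuation (p : ℂ) ^ n := by
  have hp0 : 0 < V.valuation (p : ℂ) := by
    rw [zero_lt_iff, Valuation.ne_zero_iff]
    exact NeZero.ne (p : ℂ)
  have hψ1 : ψ ≠ 1 := fun hone => by
    have := h.one_lt
    rw [hone, orderOf_one] at hψ
    omega
  have hprod : V.valuation (gaussSum ψ (traceChar p F)) *
      V.valuation (gaussSum ψ⁻¹ (traceChar p F)) = V.valuation (p : ℂ) ^ (2 * n) := by
    rw [← map_mul, gaussSum_mul_gaussSum_inv hm (orderOf_dvd_iff_pow_eq_one.mp hψ.dvd) hψ1, hcard,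
      Nat.cast_pow, map_pow]
  have hinv := h.pow_le_valuation_gaussSum hrad hord hk hcard (ψ := ψ⁻¹) (by rwa [orderOf_inv]) hV
  refine le_of_mul_le_mul_right ?_ (pow_pos hp0 n)
  calc V.valuation (p ^ k * gaussSum ψ (traceChar p F)) * V.valuation (p : ℂ) ^ n
      = V.valuation (gaussSum ψ (traceChar p F)) * V.valuation (p : ℂ) ^ (n + k) := by
        rw [map_mul, map_pow, pow_add]
        ac_rfl
    _ ≤ V.valuation (gaussSum ψ (traceChar p F)) *
          V.valuation (gaussSum ψ⁻¹ (traceChar p F)) := by gcongr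
    _ = V.valuation (p : ℂ) ^ n * V.valuation (p : ℂ) ^ n := by
        rw [hprod, two_mul, pow_add]

lemma exists_pow_mul_gaussSum_add_gaussSum_inv_eq (hm : m.Coprime (p - 1)) :
    ∃ a : ℤ, p ^ k * (gaussSum ψ (traceChar p F) + gaussSum ψ⁻¹ (traceChar p F)) =
      (p : ℂ) ^ n * a := by
  obtain ⟨V, hV⟩ := exists_isPlaceOver p
  obtain ⟨r, hr⟩ := h.exists_ratCast_eq_gaussSum_add_gaussSum_inv (F := F) hm
    (orderOf_dvd_iff_pow_eq_one.mp hψ.dvd)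
  have hint : IsIntegral ℤ (algebraMap ℚ ℂ r) := by
    rw [eq_ratCast, hr]
    exact (isIntegral_gaussSum_traceChar p ψ).add (isIntegral_gaussSum_traceChar p ψ⁻¹)
  obtain ⟨t, rfl⟩ := IsIntegrallyClosed.isIntegral_iff.mp
    ((isIntegral_algebraMap_iff (algebraMap ℚ ℂ).injective).mp hint)
  rw [eq_intCast, Rat.cast_intCast] at hr
  have hval : V.valuation ((p ^ k * t : ℤ) : ℂ) ≤ V.valuation (p : ℂ) ^ n := by
    push_cast
    rw [hr, mul_add]
    exact (V.valuation.map_add _ _).trans (max_le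
      (h.valuation_pow_mul_gaussSum_le hrad hord hk hcard hψ hm hV)
      (h.valuation_pow_mul_gaussSum_le hrad hord hk hcard (by rwa [orderOf_inv]) hm hV))
  obtain ⟨a, ha⟩ := hV.pow_dvd_of_valuation_le Fact.out hval
  exact ⟨a, by rw [← hr]; exact_mod_cast ha⟩

theorem exists_pow_mul_gaussSum_inv_eq (hm : m.Coprime (p - 1)) (hsq : Squarefree d) :
    ∃ a b : ℤ, 4 * (p : ℤ) ^ (2 * k) = a ^ 2 + d * b ^ 2 ∧
      p ^ k * gaussSum ψ⁻¹ (traceChar p F) = (p : ℂ) ^ n * ((a + b * sqrtNeg d) / 2) := by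
  have hp0 : (p : ℂ) ^ n ≠ 0 := pow_ne_zero n (NeZero.ne _)
  have hψm := orderOf_dvd_iff_pow_eq_one.mp hψ.dvd
  have hψ1 : ψ ≠ 1 := fun hone => by
    have := h.one_lt
    rw [hone, orderOf_one] at hψ
    omega
  obtain ⟨a, ha⟩ := h.exists_pow_mul_gaussSum_add_gaussSum_inv_eq hrad hord hk hcard hψ hm
  obtain ⟨s, hs⟩ :=
    h.exists_ratCast_eq_gaussSum_inv_sub_gaussSum_mul_sqrtNeg (F := F) hm hψm hsq
  have hprod := gaussSum_mul_gaussSum_inv hm hψm hψ1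
  rw [hcard] at hprod
  push_cast at hprod
  set g := gaussSum ψ (traceChar p F)
  set g' := gaussSum ψ⁻¹ (traceChar p F)
  obtain ⟨b, hab, hb⟩ := exists_eq_add_mul_sqrtNeg_div_two hsq (y := p ^ k * g' / p ^ n)
    (y' := p ^ k * g / p ^ n) (a := a) (M := p ^ (2 * k)) (s := p ^ k * s / p ^ n)
    (by rw [← add_div, ← mul_add, add_comm g', ha, mul_div_cancel_left₀ _ hp0])
    (by
      rw [div_mul_div_comm, mul_mul_mul_comm, mul_comm g', hprod]
      push_cast
      field_simp
      ring)
    (by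
      push_cast
      rw [hs]
      ring)
  exact ⟨a, b, hab, by rw [← hb, mul_div_cancel₀ _ hp0]⟩

end IsIndexTwoGenerator

end IndexTwoGaussSum

section Arithmetic

lemma exists_sq_eq_one_mul_modEq {l : ℕ} (hl : l.Prime) {a c : ℤ} (h : a ^ 2 ≡ c ^ 2 [ZMOD l]) :
    ∃ ε : ℤ, ε ^ 2 = 1 ∧ ε * a ≡ c [ZMOD l] := by
  have : Fact l.Prime := ⟨hl⟩
  simp only [← ZMod.intCast_eq_intCast_iff] at h ⊢
  push_cast at h ⊢
  rcases sq_eq_sq_iff_eq_or_eq_neg.mp h with hac | hac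
  · exact ⟨1, by norm_num, by simp [hac]⟩
  · exact ⟨-1, by norm_num, by simp [hac]⟩

lemma orderOf_natCast_zmod_two_mul {a m : ℕ} (ha : Odd a) (hm : Odd m) :
    orderOf (a : ZMod (2 * m)) = orderOf (a : ZMod m) := by
  have hpow (K n : ℕ) : (a : ZMod K) ^ n = 1 ↔ a ^ n ≡ 1 [MOD K] := by
    rw [← ZMod.natCast_eq_natCast_iff, Nat.cast_pow, Nat.cast_one]
  refine orderOf_eq_orderOf_iff.mpr fun n => ?_
  rw [hpow, hpow, ← Nat.modEq_and_modEq_iff_modEq_mul (Nat.coprime_two_left.mpr hm)]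
  exact and_iff_right (Nat.odd_iff.mp ha.pow)

lemma odd_of_coprime_sub_one {p m : ℕ} (hp : Odd p) (hm : m.Coprime (p - 1)) : Odd m :=
  Nat.coprime_two_right.mp (hm.coprime_dvd_right (Nat.Odd.sub_odd hp odd_one).two_dvd)

lemma exists_mul_eq_of_orderOf_eq_two_mul {M : Type*} [Monoid M] {x : M} {m : ℕ} (hm : Odd m)
    (hx : orderOf x = 2 * m) : ∃ e y : M, e ≠ 1 ∧ e ^ 2 = 1 ∧ orderOf y = m ∧ e * y = x := by
  have hm0 := hm.pos
  have hpow : x ^ (2 * m) = 1 := hx ▸ pow_orderOf_eq_one x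
  have hgcd : (2 * m).gcd (m + 1) = 2 := by
    obtain ⟨j, rfl⟩ := hm
    rw [show 2 * j + 1 + 1 = 2 * (j + 1) by ring, Nat.gcd_mul_left,
      show 2 * j + 1 = j + (j + 1) by ring, Nat.gcd_add_self_left, Nat.gcd_self_add_right,
      Nat.gcd_one_right, mul_one]
  refine ⟨x ^ m, x ^ (m + 1), ?_, ?_, ?_, ?_⟩
  · refine pow_ne_one_of_lt_orderOf hm0.ne' ?_
    omega
  · rw [← pow_mul, mul_comm, hpow]
  · rw [orderOf_pow' x m.succ_ne_zero, hx, hgcd, Nat.mul_div_cancel_left m two_pos]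
  · rw [← pow_add, show m + (m + 1) = 2 * m + 1 by ring, pow_succ, hpow, one_mul]

end Arithmetic

section QuadraticTwist

variable {p : ℕ} [Fact p.Prime] {F : Type*} [Field F] [Fintype F] [Algebra (ZMod p) F] {m n : ℕ}

lemma gaussSum_mul_gaussSum_quadratic_mul (hp : Odd p) (hn : Even n) (hn0 : n ≠ 0)
    (hcard : Fintype.card F = p ^ (2 * n)) (hm : m.Coprime (p - 1)) {η ψ : MulChar F ℂ}
    (hη : η ≠ 1) (hη2 : η ^ 2 = 1) (hψ : ψ ^ m = 1) (hψ1 : ψ ≠ 1) :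
    gaussSum ψ (traceChar p F) * gaussSum (η * ψ) (traceChar p F) =
      -(p : ℂ) ^ n * gaussSum (ψ ^ 2) (traceChar p F) := by
  have hp2 : p ≠ 2 := by
    rintro rfl
    exact absurd hp (by decide)
  have hchar : CharP F p := charP_of_injective_algebraMap (algebraMap (ZMod p) F).injective p
  have hringChar : ringChar F ≠ 2 := by rwa [ringChar.eq F p]
  have hψ2 : ψ ^ 2 ≠ 1 := fun htwo => hψ1 <| orderOf_eq_one_iff.mp <|
    Nat.eq_one_of_dvd_coprimes (Nat.coprime_two_left.mpr (odd_of_coprime_sub_one hp hm))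
      (orderOf_dvd_of_pow_eq_one htwo) (orderOf_dvd_of_pow_eq_one hψ)
  have hηψ : η * ψ ≠ 1 := fun hone => hψ2 <| by
    calc ψ ^ 2 = (η * ψ) ^ 2 := by rw [mul_pow, hη2, one_mul]
      _ = 1 := by rw [hone, one_pow]
  have hne : gaussSum ψ (traceChar p F) ≠ 0 := by
    refine left_ne_zero_of_mul (b := gaussSum ψ⁻¹ (traceChar p F)) ?_
    rw [gaussSum_mul_gaussSum_inv hm hψ hψ1]
    exact_mod_cast Fintype.card_ne_zero
  have hfour : ψ 4 = 1 := by
    have hcop : (2 ^ 2).Coprime p := (Nat.coprime_two_left.mpr hp).pow_left 2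
    exact_mod_cast mulChar_natCast_eq_one hm hψ hcop
  have hmod : p ^ n % 4 = 1 := by
    obtain ⟨t, rfl⟩ := hn.two_dvd
    rw [pow_mul']
    exact_mod_cast Int.sq_mod_four_eq_one_of_odd (x := (p : ℤ) ^ t) (by exact_mod_cast hp.pow)
  have hprod := gaussSum_mul_gaussSum_mul_quadratic hringChar hη hη2 hψ2 hηψ hne
  rw [hfour, one_mul, quadratic_gaussSum_traceChar hp2 hn0 hmod (by rw [hcard, mul_comm, pow_mul])
    hη hη2] at hprod
  rw [hprod, mul_comm]

namespace IsIndexTwoGenerator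

variable {d k : ℕ} (h : IsIndexTwoGenerator p m d) (hp : Odd p) (hn : Even n)
  (hord : orderOf (p : ZMod m) = 2 * n) (hcard : Fintype.card F = p ^ (2 * n))
  (hm : m.Coprime (p - 1)) {χ : MulChar F ℂ} (hχ : orderOf χ = 2 * m)
include h hp hn hord hcard hm hχ

lemma exists_gaussSum_mul_gaussSum_eq : ∃ ψ : MulChar F ℂ, orderOf ψ = m ∧ ψ ≠ 1 ∧
    gaussSum ψ (traceChar p F) * gaussSum χ (traceChar p F) =
      -(p : ℂ) ^ n * gaussSum (ψ ^ 2) (traceChar p F) := by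
  have hn0 : n ≠ 0 := by
    have htot := Nat.totient_pos.mpr (zero_lt_one.trans h.one_lt)
    rw [← h.two_mul_orderOf, hord] at htot
    omega
  obtain ⟨η, ψ, hη, hη2, hψ, rfl⟩ :=
    exists_mul_eq_of_orderOf_eq_two_mul (odd_of_coprime_sub_one hp hm) hχ
  have hψ1 : ψ ≠ 1 := by
    rintro rfl
    exact h.one_lt.ne (orderOf_one.symm.trans hψ)
  exact ⟨ψ, hψ, hψ1, gaussSum_mul_gaussSum_quadratic_mul hp hn hn0 hcard hm hη hη2
    (orderOf_dvd_iff_pow_eq_one.mp hψ.dvd) hψ1⟩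

theorem gaussSum_eq_neg_pow_of_jacobiSym_two (hJ : jacobiSym 2 d = 1) :
    gaussSum χ (traceChar p F) = -(p : ℂ) ^ n := by
  obtain ⟨ψ, hψ, hψ1, hprod⟩ := h.exists_gaussSum_mul_gaussSum_eq hp hn hord hcard hm hχ
  have hψm := orderOf_dvd_iff_pow_eq_one.mp hψ.dvd
  have hne : gaussSum ψ (traceChar p F) ≠ 0 := by
    refine left_ne_zero_of_mul (b := gaussSum ψ⁻¹ (traceChar p F)) ?_
    rw [gaussSum_mul_gaussSum_inv hm hψm hψ1]
    exact_mod_cast Fintype.card_ne_zero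
  rw [h.gaussSum_pow_eq hψm (Nat.coprime_two_left.mpr (odd_of_coprime_sub_one hp hm)) hJ,
    mul_comm] at hprod
  exact mul_right_cancel₀ hne hprod

theorem exists_pow_mul_gaussSum_eq_of_jacobiSym_two (hJ : jacobiSym 2 d = -1)
    (hsq : Squarefree d) (hrad : ∀ x : ℕ, x.Coprime d → x.Coprime m)
    (hk : |∑ j ∈ Finset.range d, (j : ℤ) * jacobiSym j d| ≤ d * (2 * k : ℕ)) :
    ∃ a b : ℤ, 4 * (p : ℤ) ^ (2 * k) = a ^ 2 + d * b ^ 2 ∧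
      p ^ (2 * k) * gaussSum χ (traceChar p F) =
        -(p : ℂ) ^ n * ((a + b * sqrtNeg d) / 2) ^ 2 := by
  obtain ⟨ψ, hψ, hψ1, hprod⟩ := h.exists_gaussSum_mul_gaussSum_eq hp hn hord hcard hm hχ
  have hψm := orderOf_dvd_iff_pow_eq_one.mp hψ.dvd
  have hinv := gaussSum_mul_gaussSum_inv hm hψm hψ1
  rw [h.gaussSum_pow_eq_gaussSum_inv hψm
    (Nat.coprime_two_left.mpr (odd_of_coprime_sub_one hp hm)) hJ] at hprod
  rw [hcard, Nat.cast_pow] at hinv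
  obtain ⟨a, b, hab, hG⟩ := h.exists_pow_mul_gaussSum_inv_eq hrad hord hk hcard hψ hm hsq
  refine ⟨a, b, hab, mul_left_cancel₀ (pow_ne_zero (2 * n) (NeZero.ne (p : ℂ))) ?_⟩
  set g := gaussSum ψ (traceChar p F)
  set g' := gaussSum ψ⁻¹ (traceChar p F)
  calc (p : ℂ) ^ (2 * n) * (p ^ (2 * k) * gaussSum χ (traceChar p F))
      = p ^ (2 * k) * g' * (g * gaussSum χ (traceChar p F)) := by
        rw [← hinv]
        ring
    _ = -(p : ℂ) ^ n * (p ^ k * g') ^ 2 := by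
        rw [hprod]
        ring
    _ = (p : ℂ) ^ (2 * n) * (-(p : ℂ) ^ n * ((a + b * sqrtNeg d) / 2) ^ 2) := by
        rw [hG]
        ring

theorem exists_gaussSum_eq_zpow_mul_of_jacobiSym_two {l : ℕ} (hl : l.Prime) (hld : l ∣ d)
    (hJ : jacobiSym 2 d = -1) (hsq : Squarefree d) (hrad : ∀ x : ℕ, x.Coprime d → x.Coprime m)
    (hk : |∑ j ∈ Finset.range d, (j : ℤ) * jacobiSym j d| ≤ d * (2 * k : ℕ)) :
    ∃ a b : ℤ, 4 * (p : ℤ) ^ (2 * k) = a ^ 2 + d * b ^ 2 ∧ a ≡ 2 * (p : ℤ) ^ k [ZMOD l] ∧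
      gaussSum χ (traceChar p F) =
        -(p : ℂ) ^ ((n : ℤ) - (2 * k : ℕ)) * ((a + b * sqrtNeg d) / 2) ^ 2 := by
  have hp0 : (p : ℂ) ≠ 0 := NeZero.ne _
  obtain ⟨a, b, hab, hG⟩ :=
    h.exists_pow_mul_gaussSum_eq_of_jacobiSym_two hp hn hord hcard hm hχ hJ hsq hrad hk
  have hmod : a ^ 2 ≡ (2 * (p : ℤ) ^ k) ^ 2 [ZMOD l] := by
    obtain ⟨c, rfl⟩ := hld
    refine Int.modEq_iff_dvd.mpr ⟨c * b ^ 2, ?_⟩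
    push_cast at hab
    linear_combination hab
  obtain ⟨ε, hε, hεa⟩ := exists_sq_eq_one_mul_modEq hl hmod
  have hεC : (ε : ℂ) ^ 2 = 1 := by exact_mod_cast hε
  refine ⟨ε * a, ε * b, ?_, hεa, mul_left_cancel₀ (pow_ne_zero (2 * k) hp0) ?_⟩
  · rw [hab, mul_pow, mul_pow, hε, one_mul, one_mul]
  · rw [hG, zpow_sub₀ hp0, zpow_natCast, zpow_natCast]
    field_simp
    push_cast
    linear_combination (a + b * sqrtNeg d) ^ 2 * hεC

end IsIndexTwoGenerator

end QuadraticTwist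

section TwoPrimePowers

variable {p l₁ l₂ r₁ r₂ : ℕ}

lemma coprime_pow_mul_pow_of_coprime_mul {x : ℕ} (hx : x.Coprime (l₁ * l₂)) :
    x.Coprime (l₁ ^ r₁ * l₂ ^ r₂) :=
  (hx.coprime_mul_right_right.pow_right r₁).mul_right (hx.coprime_mul_left_right.pow_right r₂)

lemma eight_dvd_totient_pow_mul_pow (hl₁ : l₁.Prime) (hl₂ : l₂.Prime) (h₁ : l₁ % 4 = 3)
    (h₂ : l₂ % 4 = 1) (hr₁ : r₁ ≠ 0) (hr₂ : r₂ ≠ 0) : 8 ∣ (l₁ ^ r₁ * l₂ ^ r₂).totient := by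
  have hne : l₁ ≠ l₂ := by
    rintro rfl
    omega
  have htwo : 2 ∣ l₁ - 1 := by omega
  have hfour : 4 ∣ l₂ - 1 := by omega
  rw [Nat.totient_mul (((Nat.coprime_primes hl₁ hl₂).mpr hne).pow _ _),
    Nat.totient_prime_pow hl₁ (Nat.pos_of_ne_zero hr₁),
    Nat.totient_prime_pow hl₂ (Nat.pos_of_ne_zero hr₂)]
  exact mul_dvd_mul (a := 2) (c := 4) (htwo.mul_left _) (hfour.mul_left _)

lemma isIndexTwoGenerator_pow_mul_pow (h₁ : l₁ % 4 = 3) (h₂ : l₂ % 4 = 1) (hr₁ : r₁ ≠ 0)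
    (hr₂ : r₂ ≠ 0) (hp : p.Coprime (l₁ ^ r₁ * l₂ ^ r₂)) (hJ₁ : jacobiSym p l₁ = -1)
    (hJ₂ : jacobiSym p l₂ = -1)
    (hord : 2 * orderOf (p : ZMod (l₁ ^ r₁ * l₂ ^ r₂)) = (l₁ ^ r₁ * l₂ ^ r₂).totient) :
    IsIndexTwoGenerator p (l₁ ^ r₁ * l₂ ^ r₂) (l₁ * l₂) where
  dvd := mul_dvd_mul (dvd_pow_self l₁ hr₁) (dvd_pow_self l₂ hr₂)
  mod_four := by rw [Nat.mul_mod, h₁, h₂]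
  coprime := hp
  jacobiSym_eq_one := by
    have : NeZero l₁ := ⟨by omega⟩
    have : NeZero l₂ := ⟨by omega⟩
    rw [jacobiSym.mul_right, hJ₁, hJ₂]
    norm_num
  two_mul_orderOf := hord

lemma exists_isIndexTwoGenerator_pow_mul_pow (hl₁ : l₁.Prime) (hl₂ : l₂.Prime) (h₁ : l₁ % 4 = 3)
    (h₂ : l₂ % 4 = 1) (hr₁ : r₁ ≠ 0) (hr₂ : r₂ ≠ 0) (hcop : (2 * (l₁ ^ r₁ * l₂ ^ r₂)).Coprime p)
    (hJ₁ : jacobiSym p l₁ = -1) (hJ₂ : jacobiSym p l₂ = -1)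
    (hord : orderOf (p : ZMod (2 * (l₁ ^ r₁ * l₂ ^ r₂))) =
      (2 * (l₁ ^ r₁ * l₂ ^ r₂)).totient / 2) :
    ∃ n, Even n ∧ orderOf (p : ZMod (2 * (l₁ ^ r₁ * l₂ ^ r₂))) = 2 * n ∧
      orderOf (p : ZMod (l₁ ^ r₁ * l₂ ^ r₂)) = 2 * n ∧
      IsIndexTwoGenerator p (l₁ ^ r₁ * l₂ ^ r₂) (l₁ * l₂) := by
  have hodd : Odd (l₁ ^ r₁ * l₂ ^ r₂) :=
    (Nat.odd_iff.mpr (by omega)).pow.mul (Nat.odd_iff.mpr (by omega)).pow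
  have hp : Odd p := Nat.coprime_two_left.mp hcop.coprime_mul_right
  obtain ⟨t, ht⟩ := eight_dvd_totient_pow_mul_pow hl₁ hl₂ h₁ h₂ hr₁ hr₂
  rw [orderOf_natCast_zmod_two_mul hp hodd,
    Nat.totient_two_mul_of_odd hodd] at hord
  rw [orderOf_natCast_zmod_two_mul hp hodd]
  exact ⟨2 * t, even_two_mul t, by omega, by omega, isIndexTwoGenerator_pow_mul_pow h₁ h₂ hr₁ hr₂
    hcop.coprime_mul_left.symm hJ₁ hJ₂ (by omega)⟩

lemma squarefree_mul_primes (hl₁ : l₁.Prime) (hl₂ : l₂.Prime) (hne : l₁ ≠ l₂) :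
    Squarefree (l₁ * l₂) :=
  (Nat.squarefree_mul ((Nat.coprime_primes hl₁ hl₂).mpr hne)).mpr
    ⟨hl₁.prime.squarefree, hl₂.prime.squarefree⟩

end TwoPrimePowers

theorem statement9 (p l1 l2 r1 r2 N f : ℕ) (hp : p.Prime)
    (hl1 : l1.Prime) (hl2 : l2.Prime) (hne : l1 ≠ l2)
    (hl1m : l1 % 4 = 3) (hl2m : l2 % 4 = 1)
    (hr1 : 1 ≤ r1) (hr2 : 1 ≤ r2) (hN : N = 2 * (l1 ^ r1 * l2 ^ r2)) (hNp : Nat.gcd N p = 1)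
    (hord1 : orderOf (p : ZMod (l1 ^ r1)) = Nat.totient (l1 ^ r1))
    (hord2 : orderOf (p : ZMod (l2 ^ r2)) = Nat.totient (l2 ^ r2))
    (hf : orderOf (p : ZMod N) = f) (hind : f = Nat.totient N / 2)
    (F : Type) [Field F] [Fintype F] [Algebra (ZMod p) F]
    (hcard : Fintype.card F = p ^ f)
    (χ : MulChar F ℂ) (hχord : orderOf χ = N) :
    (l1 * l2 % 8 = 7 → gaussSumN p χ 1 = -(p : ℂ) ^ ((f : ℤ) / 2)) ∧
    (l1 * l2 % 8 = 3 →
      ∃ a b : ℤ,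
        4 * (p : ℤ) ^ classNumSqrtNeg (l1 * l2) = a ^ 2 + (l1 : ℤ) * (l2 : ℤ) * b ^ 2 ∧
        a ≡ 2 * (p : ℤ) ^ (classNumSqrtNeg (l1 * l2) / 2) [ZMOD (l1 : ℤ)] ∧
        gaussSumN p χ 1 =
          -(p : ℂ) ^ ((f : ℤ) / 2 - (classNumSqrtNeg (l1 * l2) : ℤ)) *
            (((a : ℂ) + (b : ℂ) * sqrtNeg (l1 * l2)) / 2) ^ 2) := by
  subst hN hf
  have : Fact p.Prime := ⟨hp⟩
  have hJ1 := jacobiSym_eq_neg_one_of_orderOf_eq_totient hl1 (by omega) (by omega) hord1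
  have hJ2 := jacobiSym_eq_neg_one_of_orderOf_eq_totient hl2 (by omega) (by omega) hord2
  have hpodd : Odd p := Nat.coprime_two_left.mp (Nat.Coprime.coprime_mul_right hNp)
  have hm : (l1 ^ r1 * l2 ^ r2).Coprime (p - 1) :=
    ((coprime_sub_one_of_jacobiSym_eq_neg_one hl1 hp.ne_zero hJ1).pow_left r1).mul_left
      ((coprime_sub_one_of_jacobiSym_eq_neg_one hl2 hp.ne_zero hJ2).pow_left r2)
  obtain ⟨n, hn, hf, hord, hgen⟩ := exists_isIndexTwoGenerator_pow_mul_pow hl1 hl2 hl1m hl2m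
    (by omega) (by omega) hNp hJ1 hJ2 hind
  rw [hf] at hcard
  rw [gaussSumN_one_eq_gaussSum, hf, Nat.cast_mul, Nat.cast_ofNat,
    Int.mul_ediv_cancel_left _ two_ne_zero]
  refine ⟨fun h7 => ?_, fun h3 => ?_⟩
  · rw [zpow_natCast]
    exact hgen.gaussSum_eq_neg_pow_of_jacobiSym_two hpodd hn hord hcard hm hχord
      (jacobiSym_two_of_mod_eight_eq_seven h7)
  · have hsq := squarefree_mul_primes hl1 hl2 hne
    have hl1d := dvd_mul_right l1 l2
    have hsum := abs_sum_mul_jacobiSym_le_classNumSqrtNeg hsq h3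
    obtain ⟨k, hk⟩ :=
      (even_classNumSqrtNeg hsq h3 hl1 hl1d hp hgen.jacobiSym_eq_one hJ1).two_dvd
    rw [hk] at hsum ⊢
    rw [Nat.mul_div_cancel_left k two_pos]
    exact_mod_cast hgen.exists_gaussSum_eq_zpow_mul_of_jacobiSym_two hpodd hn hord hcard hm hχord
      hl1 hl1d (jacobiSym_two_of_mod_eight_eq_three h3) hsq
      (fun _ => coprime_pow_mul_pow_of_coprime_mul) hsum
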